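/- Theorem 4 (Inner bound with encoder shared randomness). Let X₀ be a common component of the sources, i.e., X₀ = f₁(X₁) = f₂(X₂) almost surely under q_{X₁X₂} for some deterministic functions f₁, f₂. Suppose there are finite sets 𝒯,𝒰₀,𝒰₁,𝒰₂ and a pmf p(x₁,x₂,z,t,u₀,u₁,u₂,y) = q(x₁,x₂,z) p(t) p(u₀|x₀,t) p(u₁|x₁,u₀,t) p(u₂|x₂,u₀,t) p(y|u₁,u₂,z,t) with ∑_{u₀,u₁,u₂} p(x₁,x₂,u₀,u₁,u₂,y,z|t) = q(x₁,x₂,z,y) for every t, such that R₀₀ ≥ H(U₀|X₀,T), R₁ ≥ I(U₁;X₁,U₀|U₂,Z,T), R₂ ≥ I(U₂;X₂,U₀|U₁,Z,T), R₁+R₂ ≥ I(U₁,U₂;X₁,X₂,U₀|Z,T), R₁+R₀₁ ≥ I(U₁;X₁,X₂,U₀,Y|Z,T) − I(U₁;U₂|Z,T), R₂+R₀₂ ≥ I(U₂;X₁,X₂,U₀,Y|Z,T) − I(U₁;U₂|Z,T), R₁+R₂+R₀₁ ≥ I(U₁;X₁,X₂,U₀,Y|Z,T) + I(U₂;X₂,U₀|U₁,Z,T),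 R₁+R₂+R₀₂ ≥ I(U₂;X₁,X₂,U₀,Y|Z,T) + I(U₁;X₁,U₀|U₂,Z,T), and R₁+R₂+R₀₁+R₀₂ ≥ I(U₁,U₂;X₁,X₂,U₀,Y|Z,T). Then the rate tuple (R₁,R₂,R₀₀,R₀₁,R₀₂) lies in R^enc-SR_MAC-coord. -/

import Mathlib

/-!
The proof is the output-statistics-of-random-binning argument. Let the joint law `p` generate
blocks `X₁ⁿ, X₂ⁿ, Zⁿ, Tⁿ, U₀ⁿ, U₁ⁿ, U₂ⁿ, Yⁿ`, and bin each `Uᵢⁿ` at random by a triple of indices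
`(Fᵢ, Sᵢ, Mᵢ)`: a public index of rate `rᵢ`, the shared randomness, and the message. The code
draws `Uᵢⁿ` from its conditional law given the indices `(Fᵢ, Sᵢ)`, sends `Mᵢ`, decodes
`(U₁ⁿ, U₂ⁿ)` and generates `Yⁿ` from `p(y|u₁,u₂,z,t)`. Three properties make its output law close
to the target:

* `(Fᵢ, Sᵢ)` is nearly uniform and independent of the sources, `U₀ⁿ` and `Tⁿ` (`osrb`, with the
  log-losses `a₁, a₂` of the encoding kernels as limiting rates), so that it may be generated
  first;
* `(U₁ⁿ, U₂ⁿ)` can be recovered from all indices and `(Zⁿ, Tⁿ)` (`slepian_wolf`, with the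
  conditional entropies `c₁, c₂, c₁₂`);
* `(F₁, F₂)` is nearly independent of everything observable, including `Yⁿ` (`osrb`, with the
  conditional entropies `b₁, b₂, b₁₂`), so that it may be fixed to a constant.

`glue` combines the three estimates for fixed binnings and `one_shot` selects good binnings. The
rates `rᵢ` produced by the elimination may be negative; `one_shot_padded` therefore pads `Uᵢⁿ` by
an independent uniform variable, after which only the ratio of the public index set to the padding
matters. Typicality of blocks follows from Chebyshev's inequality (`seq_tail`). The block `Tⁿ` is
fixed to a good value, and `U₀ⁿ` is simulated identically by both encoders from the common
component `X₀ⁿ` and the randomness `S₀` (`exists_resolve`, `derandomize`), which gives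
`FactorsAs.block_code`.

On the single-letter side, `FactorsAs.rates` turns the mutual-information conditions into
inequalities between the `a`, `b` and `c` through Gibbs' inequality, and `exists_rates` is the
Fourier–Motzkin elimination producing `r₁, r₂`. This proves achievability under strict inequalities
(`FactorsAs.achievable`); the boundary is reached because the region is closed and all rates may be
raised by `ε`.
-/

open Finset

/-- A probability mass function on a finite type. -/
def IsPMF {α : Type*} [Fintype α] (p : α → ℝ) : Prop :=
  (∀ a, 0 ≤ p a) ∧ ∑ a, p a = 1

/-- Marginal (pushforward) of a pmf `p` on `Ω` under the map `f`. -/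
noncomputable def marg {Ω β : Type*} [Fintype Ω] [DecidableEq β]
    (p : Ω → ℝ) (f : Ω → β) (b : β) : ℝ :=
  ∑ ω : Ω, if f ω = b then p ω else 0

/-- Shannon entropy (in bits) of a pmf given as a function. -/
noncomputable def entPMF {β : Type*} [Fintype β] (r : β → ℝ) : ℝ :=
  -∑ b : β, r b * Real.logb 2 (r b)

/-- Entropy (in bits) of the random variable `f` under the joint pmf `p`. -/
noncomputable def ent {Ω β : Type*} [Fintype Ω] [Fintype β] [DecidableEq β]
    (p : Ω → ℝ) (f : Ω → β) : ℝ :=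
  entPMF (fun b => marg p f b)

/-- Conditional entropy `H(f | g)`. -/
noncomputable def condEnt {Ω β γ : Type*} [Fintype Ω] [Fintype β] [Fintype γ]
    [DecidableEq β] [DecidableEq γ] (p : Ω → ℝ) (f : Ω → β) (g : Ω → γ) : ℝ :=
  ent p (fun ω => (f ω, g ω)) - ent p g

/-- Mutual information `I(f ; g)`. -/
noncomputable def mi {Ω β γ : Type*} [Fintype Ω] [Fintype β] [Fintype γ]
    [DecidableEq β] [DecidableEq γ] (p : Ω → ℝ) (f : Ω → β) (g : Ω → γ) : ℝ :=
  ent p f + ent p g - ent p (fun ω => (f ω, g ω))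

/-- Conditional mutual information `I(f ; g | h)`. -/
noncomputable def cmi {Ω β γ δ : Type*} [Fintype Ω] [Fintype β] [Fintype γ] [Fintype δ]
    [DecidableEq β] [DecidableEq γ] [DecidableEq δ]
    (p : Ω → ℝ) (f : Ω → β) (g : Ω → γ) (h : Ω → δ) : ℝ :=
  ent p (fun ω => (f ω, h ω)) + ent p (fun ω => (g ω, h ω))
    - ent p (fun ω => (f ω, g ω, h ω)) - ent p h

/-- Number of messages/shared-randomness values at rate `R` and blocklength `n`. -/
noncomputable def cnum (n : ℕ) (R : ℝ) : ℕ := Nat.ceil ((2 : ℝ) ^ ((n : ℝ) * R))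

/-- A `(2^{nR00}, 2^{nR01}, 2^{nR02}, 2^{nR1}, 2^{nR2}, n)` code with shared randomness `S₀`
between the two encoders (not available to the decoder). -/
structure MACCodeSR (X1 X2 Z Y : Type) [Fintype X1] [Fintype X2] [Fintype Z] [Fintype Y]
    (n : ℕ) (R1 R2 R00 R01 R02 : ℝ) where
  enc1 : Fin (cnum n R00) → Fin (cnum n R01) → (Fin n → X1) → Fin (cnum n R1) → ℝ
  enc2 : Fin (cnum n R00) → Fin (cnum n R02) → (Fin n → X2) → Fin (cnum n R2) → ℝ
  dec : Fin (cnum n R01) → Fin (cnum n R02) → Fin (cnum n R1) → Fin (cnum n R2) →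
      (Fin n → Z) → (Fin n → Y) → ℝ
  enc1_pmf : ∀ s0 s1 x, IsPMF (enc1 s0 s1 x)
  enc2_pmf : ∀ s0 s2 x, IsPMF (enc2 s0 s2 x)
  dec_pmf : ∀ s1 s2 m1 m2 z, IsPMF (dec s1 s2 m1 m2 z)

/-- The `(X₁,X₂,Z)`-marginal of `q`. -/
noncomputable def margXXZ {X1 X2 Z Y : Type} [Fintype Y] (q : X1 × X2 × Z × Y → ℝ) :
    X1 × X2 × Z → ℝ :=
  fun a => ∑ y : Y, q (a.1, a.2.1, a.2.2, y)

/-- The joint pmf on `(X₁ⁿ, X₂ⁿ, Zⁿ, Yⁿ)` induced by a code with encoder shared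
randomness, with sources i.i.d. `q3` and `S₀, S₁, S₂` uniform and independent. -/
noncomputable def inducedPMFSR {X1 X2 Z Y : Type}
    [Fintype X1] [Fintype X2] [Fintype Z] [Fintype Y]
    (q3 : X1 × X2 × Z → ℝ) {n : ℕ} {R1 R2 R00 R01 R02 : ℝ}
    (C : MACCodeSR X1 X2 Z Y n R1 R2 R00 R01 R02) :
    ((Fin n → X1) × (Fin n → X2) × (Fin n → Z) × (Fin n → Y)) → ℝ :=
  fun w =>
    ∑ s0 : Fin (cnum n R00), ∑ s1 : Fin (cnum n R01), ∑ s2 : Fin (cnum n R02),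
      ∑ m1 : Fin (cnum n R1), ∑ m2 : Fin (cnum n R2),
        ((cnum n R00 : ℝ) * (cnum n R01 : ℝ) * (cnum n R02 : ℝ))⁻¹ *
          (∏ i : Fin n, q3 (w.1 i, w.2.1 i, w.2.2.1 i)) *
          C.enc1 s0 s1 w.1 m1 * C.enc2 s0 s2 w.2.1 m2 *
          C.dec s1 s2 m1 m2 w.2.2.1 w.2.2.2

/-- The `n`-fold i.i.d. product of `q` on sequences. -/
noncomputable def iidPMF {X1 X2 Z Y : Type} (q : X1 × X2 × Z × Y → ℝ) (n : ℕ) :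
    ((Fin n → X1) × (Fin n → X2) × (Fin n → Z) × (Fin n → Y)) → ℝ :=
  fun w => ∏ i : Fin n, q (w.1 i, w.2.1 i, w.2.2.1 i, w.2.2.2 i)

/-- Total variation distance between two pmfs on a finite type. -/
noncomputable def tvDist {α : Type*} [Fintype α] (p q : α → ℝ) : ℝ :=
  (1 / 2 : ℝ) * ∑ a : α, |p a - q a|

/-- Achievability of a rate tuple `(R₁, R₂, R₀₀, R₀₁, R₀₂)` for `q` in the
encoder-shared-randomness setting. -/
def AchievableSR {X1 X2 Z Y : Type} [Fintype X1] [Fintype X2] [Fintype Z] [Fintype Y]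
    (q : X1 × X2 × Z × Y → ℝ) (R1 R2 R00 R01 R02 : ℝ) : Prop :=
  ∃ C : (n : ℕ) → MACCodeSR X1 X2 Z Y n R1 R2 R00 R01 R02,
    Filter.Tendsto (fun n => tvDist (inducedPMFSR (margXXZ q) (C n)) (iidPMF q n))
      Filter.atTop (nhds 0)

/-- The rate region `R^enc-SR_MAC-coord`: the closure of the set of achievable rate tuples
`(R₁, R₂, R₀₀, R₀₁, R₀₂)`. -/
def RMACcoordSR {X1 X2 Z Y : Type} [Fintype X1] [Fintype X2] [Fintype Z] [Fintype Y]
    (q : X1 × X2 × Z × Y → ℝ) : Set (ℝ × ℝ × ℝ × ℝ × ℝ) :=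
  closure {r : ℝ × ℝ × ℝ × ℝ × ℝ |
    AchievableSR q r.1 r.2.1 r.2.2.1 r.2.2.2.1 r.2.2.2.2}

section Proj

variable {X1 X2 Z T U0 U1 U2 Y : Type*}

/-- Coordinate projections on the single-letter joint alphabet
`X₁ × X₂ × Z × T × U₀ × U₁ × U₂ × Y`. -/
def kX1 : X1 × X2 × Z × T × U0 × U1 × U2 × Y → X1 := fun ω => ω.1
def kX2 : X1 × X2 × Z × T × U0 × U1 × U2 × Y → X2 := fun ω => ω.2.1
def kZ : X1 × X2 × Z × T × U0 × U1 × U2 × Y → Z := fun ω => ω.2.2.1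
def kT : X1 × X2 × Z × T × U0 × U1 × U2 × Y → T := fun ω => ω.2.2.2.1
def kU0 : X1 × X2 × Z × T × U0 × U1 × U2 × Y → U0 := fun ω => ω.2.2.2.2.1
def kU1 : X1 × X2 × Z × T × U0 × U1 × U2 × Y → U1 := fun ω => ω.2.2.2.2.2.1
def kU2 : X1 × X2 × Z × T × U0 × U1 × U2 × Y → U2 := fun ω => ω.2.2.2.2.2.2.1
def kY : X1 × X2 × Z × T × U0 × U1 × U2 × Y → Y := fun ω => ω.2.2.2.2.2.2.2

end Proj

/-! ### Random binning -/

/-- A finite family of hash functions `h θ : V → K`, with `θ` drawn from the pmf `μ`, whose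
values are uniform and pairwise independent. -/
structure IsHash {Θ V K : Type*} [Fintype Θ] [Fintype K] [DecidableEq K]
    (μ : Θ → ℝ) (h : Θ → V → K) : Prop where
  pmf : IsPMF μ
  one : ∀ v k, ∑ θ, μ θ * (if h θ v = k then 1 else 0) = ((Fintype.card K : ℝ))⁻¹
  two : ∀ v v', v ≠ v' → ∀ k k',
    ∑ θ, μ θ * ((if h θ v = k then 1 else 0) * (if h θ v' = k' then 1 else 0))
      = ((Fintype.card K : ℝ))⁻¹ ^ 2

/-- Forgetting the second coordinate of the hash value keeps uniformity and pairwise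
independence. -/
lemma IsHash.fst {Θ V K M : Type*} [Fintype Θ] [Fintype K] [DecidableEq K]
    [Fintype M] [DecidableEq M] [Nonempty M] {μ : Θ → ℝ} {h : Θ → V → K × M}
    (H : IsHash μ h) : IsHash μ (fun θ v => (h θ v).1) := by
  have hM : (Fintype.card M : ℝ) ≠ 0 := by exact_mod_cast Fintype.card_ne_zero
  have key : ∀ (x : K × M) (k : K), (if x.1 = k then (1:ℝ) else 0)
      = ∑ m : M, if x = (k, m) then (1:ℝ) else 0 := by
    rintro ⟨a, b⟩ k
    by_cases hk : a = k <;> simp [hk]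
  refine ⟨H.pmf, fun v k => ?_, fun v v' hv k k' => ?_⟩
  · simp only [key, mul_sum]
    rw [sum_comm]
    simp only [H.one, sum_const, card_univ, Fintype.card_prod, nsmul_eq_mul]
    push_cast
    field_simp
  · have e : ∀ θ, μ θ * ((if (h θ v).1 = k then (1:ℝ) else 0) *
        (if (h θ v').1 = k' then 1 else 0)) = ∑ m, ∑ m', μ θ *
        ((if h θ v = (k, m) then 1 else 0) * (if h θ v' = (k', m') then 1 else 0)) := by
      intro θ
      rw [key, key, sum_mul_sum, mul_sum]
      simp only [mul_sum]
    simp only [e]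
    rw [sum_comm]
    have : ∀ m : M, ∑ x, ∑ m', μ x * ((if h x v = (k, m) then (1:ℝ) else 0)
        * if h x v' = (k', m') then 1 else 0)
        = Fintype.card M * ((Fintype.card (K × M) : ℝ))⁻¹ ^ 2 := by
      intro m
      rw [sum_comm]
      simp only [H.two v v' hv, sum_const, card_univ, nsmul_eq_mul]
    simp only [this, sum_const, card_univ, nsmul_eq_mul, Fintype.card_prod]
    push_cast
    field_simp

/-- Two distinct points collide with probability `1 / |K|`. -/
lemma IsHash.collide {Θ V K : Type*} [Fintype Θ] [Fintype K] [DecidableEq K] [Nonempty K]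
    {μ : Θ → ℝ} {h : Θ → V → K} (H : IsHash μ h) {v v' : V} (hv : v ≠ v') :
    ∑ θ, μ θ * (if h θ v = h θ v' then 1 else 0) = ((Fintype.card K : ℝ))⁻¹ := by
  have hK : (Fintype.card K : ℝ) ≠ 0 := by exact_mod_cast Fintype.card_ne_zero
  have key : ∀ x y : K, (if x = y then (1:ℝ) else 0)
      = ∑ k : K, (if x = k then (1:ℝ) else 0) * (if y = k then 1 else 0) := by
    intro x y
    simp
  have e : ∀ θ, μ θ * (if h θ v = h θ v' then 1 else 0) = ∑ k, μ θ *
      ((if h θ v = k then 1 else 0) * (if h θ v' = k then 1 else 0)) := by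
    intro θ
    rw [key, mul_sum]
  simp only [e]
  rw [sum_comm]
  simp only [H.two v v' hv, sum_const, card_univ, nsmul_eq_mul]
  field_simp

/-- Uniformly random functions form a hash family. -/
lemma exists_isHash (V K : Type) [Fintype V] [DecidableEq V] [Fintype K] [DecidableEq K]
    [Nonempty K] :
    IsHash (fun _ : V → K => ((Fintype.card (V → K) : ℝ))⁻¹) (fun θ => θ) := by
  have hK : (Fintype.card K : ℝ) ≠ 0 := by exact_mod_cast Fintype.card_ne_zero
  have hF : (Fintype.card (V → K) : ℝ) ≠ 0 := by exact_mod_cast Fintype.card_ne_zero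
  -- product functions on the space of all functions average coordinatewise
  have prod_avg : ∀ g : V → K → ℝ,
      ∑ θ : V → K, ((Fintype.card (V → K) : ℝ))⁻¹ * ∏ v, g v (θ v)
        = ∏ v, (((Fintype.card K : ℝ))⁻¹ * ∑ k, g v k) := by
    intro g
    rw [← mul_sum, prod_mul_distrib, Finset.prod_univ_sum]
    simp [Fintype.piFinset_univ]
  refine ⟨⟨fun _ => by positivity, by simp⟩, fun v k => ?_, fun v v' hv k k' => ?_⟩
  · have := prod_avg (fun w x => if w = v then (if x = k then 1 else 0) else 1)
    have e : ∀ θ : V → K, (∏ w, if w = v then (if θ w = k then (1:ℝ) else 0) else 1)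
        = if θ v = k then 1 else 0 := by
      intro θ
      rw [Finset.prod_ite_eq' univ v (fun w => if θ w = k then (1:ℝ) else 0)]
      simp
    simp only [e] at this
    rw [this]
    have e2 : ∀ w, (((Fintype.card K : ℝ))⁻¹ *
        ∑ x : K, if w = v then (if x = k then (1:ℝ) else 0) else 1)
        = if w = v then ((Fintype.card K : ℝ))⁻¹ else 1 := by
      intro w
      by_cases hw : w = v <;> simp [hw, hK]
    simp
  · have := prod_avg (fun w x => (if w = v then (if x = k then 1 else 0) else 1)
      * (if w = v' then (if x = k' then 1 else 0) else 1))
    have e : ∀ θ : V → K, (∏ w, (if w = v then (if θ w = k then (1:ℝ) else 0) else 1)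
        * (if w = v' then (if θ w = k' then (1:ℝ) else 0) else 1))
        = (if θ v = k then 1 else 0) * (if θ v' = k' then 1 else 0) := by
      intro θ
      rw [prod_mul_distrib,
        Finset.prod_ite_eq' univ v (fun w => if θ w = k then (1:ℝ) else 0),
        Finset.prod_ite_eq' univ v' (fun w => if θ w = k' then (1:ℝ) else 0)]
      simp
    simp only [e] at this
    rw [this]
    have e2 : ∀ w, (((Fintype.card K : ℝ))⁻¹ *
        ∑ x : K, (if w = v then (if x = k then (1:ℝ) else 0) else 1)
          * (if w = v' then (if x = k' then (1:ℝ) else 0) else 1))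
        = (if w = v then ((Fintype.card K : ℝ))⁻¹ else 1)
          * (if w = v' then ((Fintype.card K : ℝ))⁻¹ else 1) := by
      intro w
      by_cases hw : w = v
      · have : w ≠ v' := hw ▸ hv
        simp [hw, hv]
      · by_cases hw' : w = v' <;> simp [hw, hw', hK, Ne.symm hv]
    simp only [e2]
    rw [prod_mul_distrib]
    simp [sq]

/-- Cauchy–Schwarz bound for the mean absolute deviation of the `f`-weighted sum of the random
variables `I · a`, which all have mean `κ` and whose covariances are at most `B a a'`. -/
lemma dev_le_sqrt {Θ A : Type*} [Fintype Θ] [Fintype A] {μ : Θ → ℝ} (hμ : IsPMF μ)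
    (I : Θ → A → ℝ) (f : A → ℝ) (hf : ∀ a, 0 ≤ f a) (κ : ℝ) (B : A → A → ℝ)
    (hE : ∀ a, ∑ θ, μ θ * I θ a = κ)
    (hEE : ∀ a a', ∑ θ, μ θ * (I θ a * I θ a') ≤ κ ^ 2 + B a a') :
    ∑ θ, μ θ * |∑ a, f a * I θ a - κ * ∑ a, f a|
      ≤ Real.sqrt (∑ a, ∑ a', f a * f a' * B a a') := by
  apply Real.le_sqrt_of_sq_le
  have h1 := Real.pow_arith_mean_le_arith_mean_pow univ μ
    (fun θ => |∑ a, f a * I θ a - κ * ∑ a, f a|) (fun θ _ => hμ.1 θ) hμ.2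
    (fun θ _ => abs_nonneg _) 2
  refine h1.trans ?_
  simp only [sq_abs]
  set m := κ * ∑ a, f a with hm
  have e1 : ∑ θ, μ θ * (∑ a, f a * I θ a) = m := by
    simp only [mul_sum]
    rw [sum_comm, hm, mul_sum]
    refine sum_congr rfl fun a _ => ?_
    rw [← hE a, sum_mul]
    exact sum_congr rfl fun θ _ => by ring
  have e2 : ∑ θ, μ θ * (∑ a, f a * I θ a) ^ 2
      = ∑ a, ∑ a', f a * f a' * ∑ θ, μ θ * (I θ a * I θ a') := by
    have : ∀ θ, μ θ * (∑ a, f a * I θ a) ^ 2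
        = ∑ a, ∑ a', f a * f a' * (μ θ * (I θ a * I θ a')) := by
      intro θ
      rw [sq, sum_mul_sum, mul_sum]
      refine sum_congr rfl fun a _ => ?_
      rw [mul_sum]
      exact sum_congr rfl fun a' _ => by ring
    simp only [this]
    rw [sum_comm]
    refine sum_congr rfl fun a _ => ?_
    rw [sum_comm]
    exact sum_congr rfl fun a' _ => by rw [mul_sum]
  have e3 : ∑ θ, μ θ * (∑ a, f a * I θ a - m) ^ 2
      = ∑ θ, μ θ * (∑ a, f a * I θ a) ^ 2 - m ^ 2 := by
    have : ∀ θ, μ θ * (∑ a, f a * I θ a - m) ^ 2 = μ θ * (∑ a, f a * I θ a) ^ 2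
        - 2 * m * (μ θ * (∑ a, f a * I θ a)) + m ^ 2 * μ θ := fun θ => by ring
    simp only [this, sum_add_distrib, sum_sub_distrib, ← mul_sum]
    rw [e1, hμ.2]; ring
  rw [e3, e2]
  have e4 : ∑ a, ∑ a', f a * f a' * ∑ θ, μ θ * (I θ a * I θ a')
      ≤ ∑ a, ∑ a', (f a * f a' * κ ^ 2 + f a * f a' * B a a') := by
    refine sum_le_sum fun a _ => sum_le_sum fun a' _ => ?_
    rw [← mul_add]
    exact mul_le_mul_of_nonneg_left (hEE a a') (mul_nonneg (hf a) (hf a'))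
  have e5 : ∑ a, ∑ a', f a * f a' * κ ^ 2 = m ^ 2 := by
    rw [hm, mul_pow, sq (∑ a, f a), sum_mul_sum, mul_sum]
    refine sum_congr rfl fun a _ => ?_
    rw [mul_sum]
    exact sum_congr rfl fun a' _ => by ring
  simp only [sum_add_distrib] at e4
  rw [e5] at e4
  linarith

lemma IsPMF.prod {A B : Type*} [Fintype A] [Fintype B] {p : A → ℝ} {q : B → ℝ}
    (hp : IsPMF p) (hq : IsPMF q) : IsPMF (fun x : A × B => p x.1 * q x.2) := by
  refine ⟨fun x => mul_nonneg (hp.1 _) (hq.1 _), ?_⟩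
  rw [Fintype.sum_prod_type]
  simp only [← mul_sum, hq.2, mul_one, hp.2]

/-- Two-source hashing for a fixed value of the side information, whose probability is
`c`: the mass that the (unnormalised) law `f` gives to each pair of bins is, in
total and on average over the hash functions, close to uniform, provided that the rows, columns
and entries of `f` are light compared with `c`. -/
lemma hash_dev {Θ1 Θ2 V1 V2 K1 K2 : Type*} [Fintype Θ1] [Fintype Θ2] [Fintype V1]
    [Fintype V2] [Fintype K1] [DecidableEq K1] [Nonempty K1] [Fintype K2] [DecidableEq K2]
    [Nonempty K2] {μ1 : Θ1 → ℝ} {μ2 : Θ2 → ℝ} {h1 : Θ1 → V1 → K1} {h2 : Θ2 → V2 → K2}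
    (H1 : IsHash μ1 h1) (H2 : IsHash μ2 h2) (f : V1 → V2 → ℝ) (hf : ∀ v1 v2, 0 ≤ f v1 v2)
    {c α1 α2 α12 : ℝ} (hc : 0 ≤ c) (ha1 : 0 ≤ α1) (ha2 : 0 ≤ α2) (ha12 : 0 ≤ α12)
    (hrow : ∀ v1, ∑ v2, f v1 v2 ≤ α1 * c) (hcol : ∀ v2, ∑ v1, f v1 v2 ≤ α2 * c)
    (hmax : ∀ v1 v2, f v1 v2 ≤ α12 * c) (hsum : ∑ v1, ∑ v2, f v1 v2 ≤ c) :
    ∑ θ : Θ1 × Θ2, μ1 θ.1 * μ2 θ.2 * ∑ k1, ∑ k2,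
      |∑ v1, ∑ v2, f v1 v2 * ((if h1 θ.1 v1 = k1 then 1 else 0)
          * (if h2 θ.2 v2 = k2 then 1 else 0))
        - (Fintype.card K1 : ℝ)⁻¹ * (Fintype.card K2 : ℝ)⁻¹ * ∑ v1, ∑ v2, f v1 v2|
    ≤ c * Real.sqrt (Fintype.card K1 * α1 + Fintype.card K2 * α2
        + Fintype.card K1 * Fintype.card K2 * α12) := by
  classical
  set N1 : ℝ := (Fintype.card K1 : ℝ) with hN1
  set N2 : ℝ := (Fintype.card K2 : ℝ) with hN2
  have p1 : 0 < N1 := by rw [hN1]; exact_mod_cast Fintype.card_pos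
  have p2 : 0 < N2 := by rw [hN2]; exact_mod_cast Fintype.card_pos
  have bound : ∀ k1 k2, ∑ θ : Θ1 × Θ2, μ1 θ.1 * μ2 θ.2 *
      |∑ v1, ∑ v2, f v1 v2 * ((if h1 θ.1 v1 = k1 then 1 else 0)
          * (if h2 θ.2 v2 = k2 then 1 else 0)) - N1⁻¹ * N2⁻¹ * ∑ v1, ∑ v2, f v1 v2|
      ≤ c * Real.sqrt (N1 * α1 + N2 * α2 + N1 * N2 * α12) * (N1⁻¹ * N2⁻¹) := by
    intro k1 k2
    have D := dev_le_sqrt (H1.pmf.prod H2.pmf)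
      (fun θ (a : V1 × V2) => (if h1 θ.1 a.1 = k1 then (1:ℝ) else 0)
        * (if h2 θ.2 a.2 = k2 then 1 else 0)) (fun a => f a.1 a.2) (fun a => hf _ _)
      (N1⁻¹ * N2⁻¹)
      (fun a a' => (if a.1 = a'.1 then N1⁻¹ * N2⁻¹ ^ 2 else 0)
        + (if a.2 = a'.2 then N1⁻¹ ^ 2 * N2⁻¹ else 0)
        + (if a = a' then N1⁻¹ * N2⁻¹ else 0)) ?_ ?_
    · simp only [Fintype.sum_prod_type] at D ⊢
      refine D.trans ?_
      rw [mul_right_comm, ← Real.sqrt_sq (x := c * (N1⁻¹ * N2⁻¹)) (by positivity),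
        ← Real.sqrt_mul (by positivity)]
      apply Real.sqrt_le_sqrt
      simp only [mul_add, sum_add_distrib]
      have t1 : ∑ x, ∑ x_1, ∑ x_2, ∑ x_3, f x x_1 * f x_2 x_3 *
          (if x = x_2 then N1⁻¹ * N2⁻¹ ^ 2 else 0) ≤ α1 * c * c * (N1⁻¹ * N2⁻¹ ^ 2) := by
        have : ∀ x, ∑ x_1, ∑ x_2, ∑ x_3, f x x_1 * f x_2 x_3 *
          (if x = x_2 then N1⁻¹ * N2⁻¹ ^ 2 else 0)
            ≤ (∑ y, f x y) * (α1 * c) * (N1⁻¹ * N2⁻¹ ^ 2) := by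
          intro x
          have : ∀ x_1, ∑ x_2, ∑ x_3, f x x_1 * f x_2 x_3 *
              (if x = x_2 then N1⁻¹ * N2⁻¹ ^ 2 else 0)
              = f x x_1 * (∑ y, f x y) * (N1⁻¹ * N2⁻¹ ^ 2) := by
            intro x1
            simp only [mul_ite, mul_zero, Finset.sum_ite_irrel, sum_const_zero, sum_ite_eq,
              mem_univ, if_true]
            rw [← sum_mul, ← mul_sum]
          rw [sum_congr rfl fun x1 _ => this x1, ← sum_mul, ← sum_mul]
          have s0 : 0 ≤ ∑ y, f x y := sum_nonneg fun _ _ => hf _ _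
          have r0 : 0 ≤ N1⁻¹ * N2⁻¹ ^ 2 := by positivity
          exact mul_le_mul_of_nonneg_right (mul_le_mul_of_nonneg_left (hrow x) s0) r0
        refine (sum_le_sum fun x _ => this x).trans ?_
        rw [← sum_mul, ← sum_mul]
        have := mul_le_mul_of_nonneg_right hsum (by positivity : 0 ≤ (α1 * c) * (N1⁻¹ * N2⁻¹ ^ 2))
        linarith
      have t2 : ∑ x, ∑ x_1, ∑ x_2, ∑ x_3, f x x_1 * f x_2 x_3 *
          (if x_1 = x_3 then N1⁻¹ ^ 2 * N2⁻¹ else 0) ≤ α2 * c * c * (N1⁻¹ ^ 2 * N2⁻¹) := by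
        have : ∀ x x_1, ∑ x_2, ∑ x_3, f x x_1 * f x_2 x_3 *
          (if x_1 = x_3 then N1⁻¹ ^ 2 * N2⁻¹ else 0)
            ≤ f x x_1 * ((α2 * c) * (N1⁻¹ ^ 2 * N2⁻¹)) := by
          intro x x1
          simp only [mul_ite, mul_zero, sum_ite_eq, mem_univ, if_true]
          rw [← sum_mul, ← mul_sum, mul_assoc]
          gcongr
          · exact hf _ _
          · exact hcol x1
        refine (sum_le_sum fun x _ => sum_le_sum fun x1 _ => this x x1).trans ?_
        simp only [← sum_mul]
        have := mul_le_mul_of_nonneg_right hsum (by positivity : 0 ≤ (α2 * c) * (N1⁻¹ ^ 2 * N2⁻¹))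
        linarith
      have t3 : ∑ x, ∑ x_1, ∑ x_2, ∑ x_3, f x x_1 * f x_2 x_3 *
          (if (x, x_1) = (x_2, x_3) then N1⁻¹ * N2⁻¹ else 0) ≤ α12 * c * c * (N1⁻¹ * N2⁻¹) := by
        have : ∀ x x_1, ∑ x_2, ∑ x_3, f x x_1 * f x_2 x_3 *
          (if (x, x_1) = (x_2, x_3) then N1⁻¹ * N2⁻¹ else 0)
            ≤ f x x_1 * ((α12 * c) * (N1⁻¹ * N2⁻¹)) := by
          intro x x1
          simp only [Prod.mk.injEq, ite_and, mul_ite, mul_zero, sum_ite_eq, mem_univ, if_true,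
            Finset.sum_ite_irrel, sum_const_zero]
          rw [mul_assoc]
          gcongr
          · exact hf _ _
          · exact hmax _ _
        refine (sum_le_sum fun x _ => sum_le_sum fun x1 _ => this x x1).trans ?_
        simp only [← sum_mul]
        have := mul_le_mul_of_nonneg_right hsum (by positivity : 0 ≤ (α12 * c) * (N1⁻¹ * N2⁻¹))
        linarith
      refine (add_le_add (add_le_add t1 t2) t3).trans (le_of_eq ?_)
      field_simp
    · intro a
      rw [Fintype.sum_prod_type, ← H1.one a.1 k1, ← H2.one a.2 k2, sum_mul_sum]
      exact sum_congr rfl fun _ _ => sum_congr rfl fun _ _ => by ring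
    · intro a a'
      have fac : ∑ θ : Θ1 × Θ2, μ1 θ.1 * μ2 θ.2 *
          ((if h1 θ.1 a.1 = k1 then (1:ℝ) else 0) * (if h2 θ.2 a.2 = k2 then 1 else 0)
          * ((if h1 θ.1 a'.1 = k1 then 1 else 0) * (if h2 θ.2 a'.2 = k2 then 1 else 0)))
          = (∑ θ, μ1 θ * ((if h1 θ a.1 = k1 then 1 else 0) * (if h1 θ a'.1 = k1 then 1 else 0)))
          * (∑ θ, μ2 θ * ((if h2 θ a.2 = k2 then 1 else 0) *
            (if h2 θ a'.2 = k2 then 1 else 0))) := by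
        rw [Fintype.sum_prod_type, sum_mul_sum]
        exact sum_congr rfl fun _ _ => sum_congr rfl fun _ _ => by ring
      rw [fac]
      have m1 : ∑ θ, μ1 θ * ((if h1 θ a.1 = k1 then 1 else 0) *
          (if h1 θ a'.1 = k1 then 1 else 0)) = if a.1 = a'.1 then N1⁻¹ else N1⁻¹ ^ 2 := by
        by_cases h : a.1 = a'.1
        · rw [if_pos h, ← H1.one a.1 k1, h]
          exact sum_congr rfl fun θ _ => by split_ifs <;> simp
        · rw [if_neg h, H1.two _ _ h]
      have m2 : ∑ θ, μ2 θ * ((if h2 θ a.2 = k2 then 1 else 0) *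
          (if h2 θ a'.2 = k2 then 1 else 0)) = if a.2 = a'.2 then N2⁻¹ else N2⁻¹ ^ 2 := by
        by_cases h : a.2 = a'.2
        · rw [if_pos h, ← H2.one a.2 k2, h]
          exact sum_congr rfl fun θ _ => by split_ifs <;> simp
        · rw [if_neg h, H2.two _ _ h]
      rw [m1, m2]
      have q1 : 0 < N1⁻¹ := by positivity
      have q2 : 0 < N2⁻¹ := by positivity
      by_cases g1 : a.1 = a'.1 <;> by_cases g2 : a.2 = a'.2
      · have : a = a' := Prod.ext g1 g2
        simp only [this, if_true]
        have := mul_pos q1 q2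
        nlinarith [mul_pos q1 (mul_pos q2 q2), mul_pos (mul_pos q1 q1) q2]
      · have : a ≠ a' := fun e => g2 (by rw [e])
        simp only [g1, g2, this, if_true, if_false]
        nlinarith [mul_pos q1 q2]
      · have : a ≠ a' := fun e => g1 (by rw [e])
        simp only [g1, g2, this, if_true, if_false]
        nlinarith [mul_pos q1 q2]
      · have : a ≠ a' := fun e => g1 (by rw [e])
        simp only [g1, g2, this, if_false]
        nlinarith [mul_pos q1 q2]
  have swap : ∑ θ : Θ1 × Θ2, μ1 θ.1 * μ2 θ.2 * ∑ k1, ∑ k2,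
      |∑ v1, ∑ v2, f v1 v2 * ((if h1 θ.1 v1 = k1 then 1 else 0)
          * (if h2 θ.2 v2 = k2 then 1 else 0)) - N1⁻¹ * N2⁻¹ * ∑ v1, ∑ v2, f v1 v2|
      = ∑ k1, ∑ k2, ∑ θ : Θ1 × Θ2, μ1 θ.1 * μ2 θ.2 *
      |∑ v1, ∑ v2, f v1 v2 * ((if h1 θ.1 v1 = k1 then 1 else 0)
          * (if h2 θ.2 v2 = k2 then 1 else 0)) - N1⁻¹ * N2⁻¹ * ∑ v1, ∑ v2, f v1 v2| := by
    simp only [mul_sum]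
    rw [sum_comm]
    exact sum_congr rfl fun k1 _ => sum_comm
  rw [swap]
  refine (sum_le_sum fun k1 _ => sum_le_sum fun k2 _ => bound k1 k2).trans (le_of_eq ?_)
  simp only [sum_const, card_univ, nsmul_eq_mul, ← hN1, ← hN2]
  field_simp

open Classical in
/-- Two-source random binning with side information: if the conditional probabilities of a
good point given the side information `w` are small, the pair of bin indices is on average
close to uniform and independent of `w`. -/
lemma osrb {Θ1 Θ2 V1 V2 K1 K2 W : Type*} [Fintype Θ1] [Fintype Θ2] [Fintype V1]
    [Fintype V2] [Fintype W] [Fintype K1] [DecidableEq K1] [Nonempty K1]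
    [Fintype K2] [DecidableEq K2] [Nonempty K2] {μ1 : Θ1 → ℝ} {μ2 : Θ2 → ℝ}
    {h1 : Θ1 → V1 → K1} {h2 : Θ2 → V2 → K2}
    (H1 : IsHash μ1 h1) (H2 : IsHash μ2 h2) (P : V1 → V2 → W → ℝ)
    (hP : ∀ v1 v2 w, 0 ≤ P v1 v2 w) (hP1 : ∑ w, ∑ v1, ∑ v2, P v1 v2 w = 1)
    (good : V1 → V2 → W → Prop) {η α1 α2 α12 : ℝ}
    (ha1 : 0 ≤ α1) (ha2 : 0 ≤ α2) (ha12 : 0 ≤ α12)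
    (g1 : ∀ v1 v2 w, good v1 v2 w → ∑ v2', P v1 v2' w ≤ α1 * ∑ v1', ∑ v2', P v1' v2' w)
    (g2 : ∀ v1 v2 w, good v1 v2 w → ∑ v1', P v1' v2 w ≤ α2 * ∑ v1', ∑ v2', P v1' v2' w)
    (g12 : ∀ v1 v2 w, good v1 v2 w → P v1 v2 w ≤ α12 * ∑ v1', ∑ v2', P v1' v2' w)
    (hη : ∑ w, ∑ v1, ∑ v2, (if good v1 v2 w then 0 else P v1 v2 w) ≤ η) :
    ∑ θ : Θ1 × Θ2, μ1 θ.1 * μ2 θ.2 * ∑ w, ∑ k1, ∑ k2,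
      |∑ v1, ∑ v2, P v1 v2 w * ((if h1 θ.1 v1 = k1 then 1 else 0)
          * (if h2 θ.2 v2 = k2 then 1 else 0))
        - (Fintype.card K1 : ℝ)⁻¹ * (Fintype.card K2 : ℝ)⁻¹ * ∑ v1, ∑ v2, P v1 v2 w|
    ≤ 2 * η + Real.sqrt (Fintype.card K1 * α1 + Fintype.card K2 * α2
        + Fintype.card K1 * Fintype.card K2 * α12) := by
  set N1 : ℝ := (Fintype.card K1 : ℝ) with hN1
  set N2 : ℝ := (Fintype.card K2 : ℝ) with hN2
  have p1 : 0 < N1 := by rw [hN1]; exact_mod_cast Fintype.card_pos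
  have p2 : 0 < N2 := by rw [hN2]; exact_mod_cast Fintype.card_pos
  -- split the mass into its good and bad parts
  set A : V1 → V2 → W → ℝ := fun v1 v2 w => if good v1 v2 w then P v1 v2 w else 0 with hA
  set B : V1 → V2 → W → ℝ := fun v1 v2 w => if good v1 v2 w then 0 else P v1 v2 w with hB
  have hAB : ∀ v1 v2 w, P v1 v2 w = A v1 v2 w + B v1 v2 w := by
    intro v1 v2 w; simp only [hA, hB]; split_ifs <;> simp
  have A0 : ∀ v1 v2 w, 0 ≤ A v1 v2 w := by
    intro v1 v2 w; simp only [hA]; split_ifs; exacts [hP _ _ _, le_rfl]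
  have B0 : ∀ v1 v2 w, 0 ≤ B v1 v2 w := by
    intro v1 v2 w; simp only [hB]; split_ifs; exacts [le_rfl, hP _ _ _]
  have AP : ∀ v1 v2 w, A v1 v2 w ≤ P v1 v2 w := fun v1 v2 w => by
    rw [hAB]; linarith [B0 v1 v2 w]
  have S0 : ∀ w, 0 ≤ ∑ v1', ∑ v2', P v1' v2' w := fun w =>
    sum_nonneg fun _ _ => sum_nonneg fun _ _ => hP _ _ _
  have main : ∀ w, ∑ θ : Θ1 × Θ2, μ1 θ.1 * μ2 θ.2 * ∑ k1, ∑ k2,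
      |∑ v1, ∑ v2, A v1 v2 w * ((if h1 θ.1 v1 = k1 then 1 else 0)
          * (if h2 θ.2 v2 = k2 then 1 else 0)) - N1⁻¹ * N2⁻¹ * ∑ v1, ∑ v2, A v1 v2 w|
      ≤ (∑ v1, ∑ v2, P v1 v2 w) * Real.sqrt (N1 * α1 + N2 * α2 + N1 * N2 * α12) := by
    intro w
    refine hash_dev H1 H2 (fun v1 v2 => A v1 v2 w) (fun _ _ => A0 _ _ _) (S0 w) ha1 ha2 ha12
      ?_ ?_ ?_ ?_
    · intro v1
      by_cases h : ∃ v2, good v1 v2 w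
      · obtain ⟨v2, h⟩ := h
        exact (sum_le_sum fun _ _ => AP _ _ _).trans (g1 v1 v2 w h)
      · push Not at h
        simp only [hA, h, if_false, sum_const_zero]
        exact mul_nonneg ha1 (S0 w)
    · intro v2
      by_cases h : ∃ v1, good v1 v2 w
      · obtain ⟨v1, h⟩ := h
        exact (sum_le_sum fun _ _ => AP _ _ _).trans (g2 v1 v2 w h)
      · push Not at h
        simp only [hA, h, if_false, sum_const_zero]
        exact mul_nonneg ha2 (S0 w)
    · intro v1 v2
      by_cases h : good v1 v2 w
      · exact (AP _ _ _).trans (g12 v1 v2 w h)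
      · simp only [hA, h, if_false]
        exact mul_nonneg ha12 (S0 w)
    · exact sum_le_sum fun _ _ => sum_le_sum fun _ _ => AP _ _ _
  have point : ∀ (θ : Θ1 × Θ2) w, ∑ k1, ∑ k2,
      |∑ v1, ∑ v2, P v1 v2 w * ((if h1 θ.1 v1 = k1 then 1 else 0)
          * (if h2 θ.2 v2 = k2 then 1 else 0)) - N1⁻¹ * N2⁻¹ * ∑ v1, ∑ v2, P v1 v2 w|
      ≤ ∑ k1, ∑ k2, |∑ v1, ∑ v2, A v1 v2 w * ((if h1 θ.1 v1 = k1 then 1 else 0)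
          * (if h2 θ.2 v2 = k2 then 1 else 0)) - N1⁻¹ * N2⁻¹ * ∑ v1, ∑ v2, A v1 v2 w|
        + 2 * ∑ v1, ∑ v2, B v1 v2 w := by
    intro θ w
    have e1 : ∑ k1, ∑ k2, ∑ v1, ∑ v2, B v1 v2 w * ((if h1 θ.1 v1 = k1 then (1:ℝ) else 0)
          * (if h2 θ.2 v2 = k2 then 1 else 0)) = ∑ v1, ∑ v2, B v1 v2 w := by
      simp only [mul_ite, mul_one, mul_zero]
      have : ∀ k1, ∑ k2, ∑ v1, ∑ v2, (if h2 θ.2 v2 = k2 then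
          if h1 θ.1 v1 = k1 then B v1 v2 w else 0 else 0)
          = ∑ v1, ∑ v2, if h1 θ.1 v1 = k1 then B v1 v2 w else 0 := by
        intro k1
        rw [sum_comm]
        refine sum_congr rfl fun v1 _ => ?_
        rw [sum_comm]
        simp
      simp only [this]
      rw [sum_comm]
      refine sum_congr rfl fun v1 _ => ?_
      rw [sum_comm]
      simp
    have e2 : ∑ _k1 : K1, ∑ _k2 : K2, N1⁻¹ * N2⁻¹ * ∑ v1, ∑ v2, B v1 v2 w
        = ∑ v1, ∑ v2, B v1 v2 w := by
      simp only [sum_const, card_univ, nsmul_eq_mul, ← hN1, ← hN2]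
      field_simp
    have : 2 * ∑ v1, ∑ v2, B v1 v2 w
        = ∑ k1, ∑ k2, (∑ v1, ∑ v2, B v1 v2 w * ((if h1 θ.1 v1 = k1 then (1:ℝ) else 0)
          * (if h2 θ.2 v2 = k2 then 1 else 0)) + N1⁻¹ * N2⁻¹ * ∑ v1, ∑ v2, B v1 v2 w) := by
      simp only [sum_add_distrib]
      rw [e1, e2]; ring
    rw [this]
    simp only [← sum_add_distrib]
    refine sum_le_sum fun k1 _ => sum_le_sum fun k2 _ => ?_
    simp only [hAB, add_mul, sum_add_distrib, mul_add]
    have b0 : 0 ≤ ∑ v1, ∑ v2, B v1 v2 w * ((if h1 θ.1 v1 = k1 then (1:ℝ) else 0)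
          * (if h2 θ.2 v2 = k2 then 1 else 0)) :=
      sum_nonneg fun _ _ => sum_nonneg fun _ _ => mul_nonneg (B0 _ _ _) (by positivity)
    have b1 : 0 ≤ N1⁻¹ * N2⁻¹ * ∑ v1, ∑ v2, B v1 v2 w :=
      mul_nonneg (by positivity) (sum_nonneg fun _ _ => sum_nonneg fun _ _ => B0 _ _ _)
    generalize (∑ v1, ∑ v2, B v1 v2 w * ((if h1 θ.1 v1 = k1 then (1:ℝ) else 0)
          * (if h2 θ.2 v2 = k2 then 1 else 0))) = b at *
    generalize N1⁻¹ * N2⁻¹ * ∑ v1, ∑ v2, B v1 v2 w = b' at *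
    generalize (∑ v1, ∑ v2, A v1 v2 w * ((if h1 θ.1 v1 = k1 then (1:ℝ) else 0)
          * (if h2 θ.2 v2 = k2 then 1 else 0))) = a
    generalize N1⁻¹ * N2⁻¹ * ∑ v1, ∑ v2, A v1 v2 w = a'
    rw [abs_le]
    constructor <;> linarith [neg_abs_le (a - a'), le_abs_self (a - a')]
  have pm := H1.pmf.prod H2.pmf
  calc _ ≤ ∑ θ : Θ1 × Θ2, μ1 θ.1 * μ2 θ.2 * ∑ w, (∑ k1, ∑ k2,
        |∑ v1, ∑ v2, A v1 v2 w * ((if h1 θ.1 v1 = k1 then 1 else 0)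
          * (if h2 θ.2 v2 = k2 then 1 else 0)) - N1⁻¹ * N2⁻¹ * ∑ v1, ∑ v2, A v1 v2 w|
        + 2 * ∑ v1, ∑ v2, B v1 v2 w) :=
        sum_le_sum fun θ _ => mul_le_mul_of_nonneg_left
          (sum_le_sum fun w _ => point θ w) (pm.1 θ)
    _ = (∑ w, ∑ θ : Θ1 × Θ2, μ1 θ.1 * μ2 θ.2 * ∑ k1, ∑ k2,
        |∑ v1, ∑ v2, A v1 v2 w * ((if h1 θ.1 v1 = k1 then 1 else 0)
          * (if h2 θ.2 v2 = k2 then 1 else 0)) - N1⁻¹ * N2⁻¹ * ∑ v1, ∑ v2, A v1 v2 w|)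
        + 2 * ∑ w, ∑ v1, ∑ v2, B v1 v2 w := by
        rw [sum_comm]
        simp only [sum_add_distrib, mul_add, ← mul_sum, ← sum_mul]
        rw [pm.2, one_mul]
    _ ≤ ∑ w, (∑ v1, ∑ v2, P v1 v2 w) * Real.sqrt (N1 * α1 + N2 * α2 + N1 * N2 * α12)
        + 2 * η := by
        gcongr with w
        exact main w
    _ = _ := by rw [← sum_mul, hP1]; ring

open Classical in
/-- Slepian–Wolf decoding: from the two bin indices and the side information `w`, the unique
good pair in the bins is the true one with high probability. -/
lemma slepian_wolf {Θ1 Θ2 V1 V2 K1 K2 W : Type*} [Fintype Θ1] [Fintype Θ2] [Fintype V1]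
    [Fintype V2] [Fintype W] [Fintype K1] [DecidableEq K1] [Nonempty K1]
    [Fintype K2] [DecidableEq K2] [Nonempty K2] [Nonempty V1] [Nonempty V2]
    {μ1 : Θ1 → ℝ} {μ2 : Θ2 → ℝ}
    {h1 : Θ1 → V1 → K1} {h2 : Θ2 → V2 → K2}
    (H1 : IsHash μ1 h1) (H2 : IsHash μ2 h2) (P : V1 → V2 → W → ℝ)
    (hP : ∀ v1 v2 w, 0 ≤ P v1 v2 w) (hP1 : ∑ w, ∑ v1, ∑ v2, P v1 v2 w = 1)
    (good : V1 → V2 → W → Prop) {η ψ1 ψ2 ψ12 : ℝ}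
    (hp1 : 0 < ψ1) (hp2 : 0 < ψ2) (hp12 : 0 < ψ12)
    (g1 : ∀ v1 v2 w, good v1 v2 w → ψ1 * ∑ v1', P v1' v2 w ≤ P v1 v2 w)
    (g2 : ∀ v1 v2 w, good v1 v2 w → ψ2 * ∑ v2', P v1 v2' w ≤ P v1 v2 w)
    (g12 : ∀ v1 v2 w, good v1 v2 w → ψ12 * ∑ v1', ∑ v2', P v1' v2' w ≤ P v1 v2 w)
    (hη : ∑ w, ∑ v1, ∑ v2, (if good v1 v2 w then 0 else P v1 v2 w) ≤ η) :
    ∃ D : Θ1 → Θ2 → K1 → K2 → W → V1 × V2,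
    ∑ θ : Θ1 × Θ2, μ1 θ.1 * μ2 θ.2 * ∑ w, ∑ v1, ∑ v2, P v1 v2 w *
      (if D θ.1 θ.2 (h1 θ.1 v1) (h2 θ.2 v2) w = (v1, v2) then 0 else 1)
    ≤ η + ((Fintype.card K1 * ψ1)⁻¹ + (Fintype.card K2 * ψ2)⁻¹
        + (Fintype.card K1 * Fintype.card K2 * ψ12)⁻¹) := by
  set N1 : ℝ := (Fintype.card K1 : ℝ) with hN1
  set N2 : ℝ := (Fintype.card K2 : ℝ) with hN2
  have p1 : 0 < N1 := by rw [hN1]; exact_mod_cast Fintype.card_pos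
  have p2 : 0 < N2 := by rw [hN2]; exact_mod_cast Fintype.card_pos
  let D : Θ1 → Θ2 → K1 → K2 → W → V1 × V2 := fun θ1 θ2 k1 k2 w =>
    if h : ∃ v : V1 × V2, good v.1 v.2 w ∧ h1 θ1 v.1 = k1 ∧ h2 θ2 v.2 = k2 then h.choose
    else Classical.arbitrary _
  refine ⟨D, ?_⟩
  have pm := H1.pmf.prod H2.pmf
  have point : ∀ (θ : Θ1 × Θ2) w v1 v2,
      (if D θ.1 θ.2 (h1 θ.1 v1) (h2 θ.2 v2) w = (v1, v2) then (0:ℝ) else 1)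
      ≤ (if good v1 v2 w then 0 else 1) + ∑ v : V1 × V2,
        if good v.1 v.2 w ∧ v ≠ (v1, v2) then (if h1 θ.1 v.1 = h1 θ.1 v1 then 1 else 0)
          * (if h2 θ.2 v.2 = h2 θ.2 v2 then 1 else 0) else 0 := by
    intro θ w v1 v2
    have nn : ∀ v : V1 × V2, (0:ℝ) ≤ if good v.1 v.2 w ∧ v ≠ (v1, v2) then
        (if h1 θ.1 v.1 = h1 θ.1 v1 then 1 else 0)
          * (if h2 θ.2 v.2 = h2 θ.2 v2 then 1 else 0) else 0 := by
      intro v; positivity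
    have sn := sum_nonneg fun v (_ : v ∈ univ) => nn v
    by_cases hg : good v1 v2 w
    · by_cases hd : D θ.1 θ.2 (h1 θ.1 v1) (h2 θ.2 v2) w = (v1, v2)
      · rw [if_pos hd, if_pos hg, zero_add]; exact sn
      · rw [if_neg hd, if_pos hg, zero_add]
        have ex : ∃ v : V1 × V2, good v.1 v.2 w ∧ h1 θ.1 v.1 = h1 θ.1 v1 ∧
          h2 θ.2 v.2 = h2 θ.2 v2 := ⟨(v1, v2), hg, rfl, rfl⟩
        have hD : D θ.1 θ.2 (h1 θ.1 v1) (h2 θ.2 v2) w = ex.choose := dif_pos ex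
        obtain ⟨c1, c2, c3⟩ := ex.choose_spec
        rw [hD] at hd
        refine le_trans ?_ (single_le_sum (fun v _ => nn v) (mem_univ ex.choose))
        rw [if_pos ⟨c1, hd⟩, if_pos c2, if_pos c3, one_mul]
    · rw [if_neg hg]
      split_ifs <;> linarith
  have coll : ∀ v1 v2 (v : V1 × V2), v ≠ (v1, v2) →
      ∑ θ : Θ1 × Θ2, μ1 θ.1 * μ2 θ.2 * ((if h1 θ.1 v.1 = h1 θ.1 v1 then 1 else 0)
          * (if h2 θ.2 v.2 = h2 θ.2 v2 then 1 else 0))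
      ≤ (if v.2 = v2 then N1⁻¹ else 0) + (if v.1 = v1 then N2⁻¹ else 0) + N1⁻¹ * N2⁻¹ := by
    intro v1 v2 v hv
    have fac : ∑ θ : Θ1 × Θ2, μ1 θ.1 * μ2 θ.2 * ((if h1 θ.1 v.1 = h1 θ.1 v1 then 1 else 0)
          * (if h2 θ.2 v.2 = h2 θ.2 v2 then 1 else 0))
        = (∑ θ, μ1 θ * (if h1 θ v.1 = h1 θ v1 then 1 else 0))
          * (∑ θ, μ2 θ * (if h2 θ v.2 = h2 θ v2 then 1 else 0)) := by
      rw [Fintype.sum_prod_type, sum_mul_sum]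
      exact sum_congr rfl fun _ _ => sum_congr rfl fun _ _ => by ring
    rw [fac]
    have q1 : 0 < N1⁻¹ := by positivity
    have q2 : 0 < N2⁻¹ := by positivity
    have q := mul_pos q1 q2
    by_cases e1 : v.1 = v1
    · have e2 : v.2 ≠ v2 := fun e2 => hv (Prod.ext e1 e2)
      rw [H2.collide e2, e1]
      simp only [if_true, mul_one, H1.pmf.2, e2, if_false]
      linarith
    · rw [H1.collide e1]
      by_cases e2 : v.2 = v2
      · rw [e2]
        simp only [if_true, mul_one, H2.pmf.2, e1, if_false]
        linarith
      · rw [H2.collide e2]; simp [e1, e2, hN1, hN2]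
  -- number of good pairs that share no / one coordinate with the true pair
  have count : ∀ w v1 v2, P v1 v2 w * ∑ v : V1 × V2, (if good v.1 v.2 w then
      ((if v.2 = v2 then N1⁻¹ else 0) + (if v.1 = v1 then N2⁻¹ else 0) + N1⁻¹ * N2⁻¹) else 0)
      ≤ P v1 v2 w * ((N1 * ψ1)⁻¹ + (N2 * ψ2)⁻¹ + (N1 * N2 * ψ12)⁻¹) := by
    intro w v1 v2
    rcases (hP v1 v2 w).eq_or_lt with h0 | hpos
    · rw [← h0]; simp
    refine mul_le_mul_of_nonneg_left ?_ hpos.le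
    have s2 : 0 < ∑ v2', P v1 v2' w :=
      lt_of_lt_of_le hpos (single_le_sum (f := fun v2' => P v1 v2' w)
        (fun _ _ => hP _ _ _) (mem_univ v2))
    have s1 : 0 < ∑ v1', P v1' v2 w :=
      lt_of_lt_of_le hpos (single_le_sum (f := fun v1' => P v1' v2 w)
        (fun _ _ => hP _ _ _) (mem_univ v1))
    have s12 : 0 < ∑ v1', ∑ v2', P v1' v2' w :=
      lt_of_lt_of_le s2 (single_le_sum (f := fun v1' => ∑ v2', P v1' v2' w)
        (fun _ _ => sum_nonneg fun _ _ => hP _ _ _) (mem_univ v1))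
    have c1 : ∑ a, (if good a v2 w then (1:ℝ) else 0) ≤ ψ1⁻¹ := by
      rw [← mul_le_mul_iff_left₀ (mul_pos hp1 s1)]
      rw [sum_mul, inv_mul_cancel_left₀ hp1.ne']
      refine sum_le_sum fun a _ => ?_
      split_ifs with h
      · rw [one_mul]; exact g1 _ _ _ h
      · rw [zero_mul]; exact hP _ _ _
    have c2 : ∑ b, (if good v1 b w then (1:ℝ) else 0) ≤ ψ2⁻¹ := by
      rw [← mul_le_mul_iff_left₀ (mul_pos hp2 s2)]
      rw [sum_mul, inv_mul_cancel_left₀ hp2.ne']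
      refine sum_le_sum fun a _ => ?_
      split_ifs with h
      · rw [one_mul]; exact g2 _ _ _ h
      · rw [zero_mul]; exact hP _ _ _
    have c12 : ∑ a, ∑ b, (if good a b w then (1:ℝ) else 0) ≤ ψ12⁻¹ := by
      rw [← mul_le_mul_iff_left₀ (mul_pos hp12 s12)]
      rw [sum_mul, inv_mul_cancel_left₀ hp12.ne']
      refine sum_le_sum fun a _ => ?_
      rw [sum_mul]
      refine sum_le_sum fun b _ => ?_
      split_ifs with h
      · rw [one_mul]; exact g12 _ _ _ h
      · rw [zero_mul]; exact hP _ _ _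
    have split : ∀ v : V1 × V2, (if good v.1 v.2 w then
      ((if v.2 = v2 then N1⁻¹ else 0) + (if v.1 = v1 then N2⁻¹ else 0) + N1⁻¹ * N2⁻¹) else 0)
      = (if v.2 = v2 then (if good v.1 v.2 w then (1:ℝ) else 0) * N1⁻¹ else 0)
        + (if v.1 = v1 then (if good v.1 v.2 w then (1:ℝ) else 0) * N2⁻¹ else 0)
        + (if good v.1 v.2 w then (1:ℝ) else 0) * (N1⁻¹ * N2⁻¹) := by
      intro v; split_ifs <;> ring
    simp only [split, sum_add_distrib]
    have t1 : ∑ v : V1 × V2, (if v.2 = v2 then (if good v.1 v.2 w then (1:ℝ) else 0) * N1⁻¹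
        else 0) ≤ (N1 * ψ1)⁻¹ := by
      rw [Fintype.sum_prod_type]
      simp only [sum_ite_eq', mem_univ, if_true]
      rw [← sum_mul, mul_inv, mul_comm]
      gcongr
    have t2 : ∑ v : V1 × V2, (if v.1 = v1 then (if good v.1 v.2 w then (1:ℝ) else 0) * N2⁻¹
        else 0) ≤ (N2 * ψ2)⁻¹ := by
      rw [Fintype.sum_prod_type_right]
      simp only [sum_ite_eq', mem_univ, if_true]
      rw [← sum_mul, mul_inv, mul_comm]
      gcongr
    have t3 : ∑ v : V1 × V2, (if good v.1 v.2 w then (1:ℝ) else 0) * (N1⁻¹ * N2⁻¹)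
        ≤ (N1 * N2 * ψ12)⁻¹ := by
      rw [← sum_mul, Fintype.sum_prod_type, mul_inv, mul_inv, mul_comm]
      gcongr
    linarith
  set R := (N1 * ψ1)⁻¹ + (N2 * ψ2)⁻¹ + (N1 * N2 * ψ12)⁻¹ with hR
  -- average over the hash functions for a fixed source realisation
  have avg : ∀ w v1 v2, ∑ θ : Θ1 × Θ2, μ1 θ.1 * μ2 θ.2 * (P v1 v2 w *
      (if D θ.1 θ.2 (h1 θ.1 v1) (h2 θ.2 v2) w = (v1, v2) then 0 else 1))
      ≤ (if good v1 v2 w then 0 else P v1 v2 w) + P v1 v2 w * R := by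
    intro w v1 v2
    calc _ ≤ ∑ θ : Θ1 × Θ2, μ1 θ.1 * μ2 θ.2 * (P v1 v2 w *
          ((if good v1 v2 w then 0 else 1) + ∑ v : V1 × V2,
        if good v.1 v.2 w ∧ v ≠ (v1, v2) then (if h1 θ.1 v.1 = h1 θ.1 v1 then 1 else 0)
          * (if h2 θ.2 v.2 = h2 θ.2 v2 then 1 else 0) else 0)) :=
          sum_le_sum fun θ _ => mul_le_mul_of_nonneg_left
            (mul_le_mul_of_nonneg_left (point θ w v1 v2) (hP _ _ _)) (pm.1 θ)
      _ = (if good v1 v2 w then 0 else P v1 v2 w) + P v1 v2 w * ∑ v : V1 × V2,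
          (if good v.1 v.2 w ∧ v ≠ (v1, v2) then ∑ θ : Θ1 × Θ2, μ1 θ.1 * μ2 θ.2 *
            ((if h1 θ.1 v.1 = h1 θ.1 v1 then 1 else 0)
          * (if h2 θ.2 v.2 = h2 θ.2 v2 then 1 else 0)) else 0) := by
          simp only [mul_add, sum_add_distrib]
          congr 1
          · rw [← sum_mul, pm.2]; split_ifs <;> simp
          · simp only [mul_sum]
            rw [sum_comm]
            refine sum_congr rfl fun v _ => ?_
            split_ifs
            · rw [mul_sum]
              exact sum_congr rfl fun θ _ => by ring
            · simp
      _ ≤ _ := by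
          refine add_le_add le_rfl ?_
          refine le_trans (mul_le_mul_of_nonneg_left (sum_le_sum fun v _ => ?_) (hP _ _ _))
            (count w v1 v2)
          by_cases hg : good v.1 v.2 w
          · by_cases hv : v = (v1, v2)
            · rw [if_neg (fun h => h.2 hv), if_pos hg]; positivity
            · rw [if_pos ⟨hg, hv⟩, if_pos hg]; exact coll v1 v2 v hv
          · rw [if_neg (fun h => hg h.1), if_neg hg]
  calc _ = ∑ w, ∑ v1, ∑ v2, ∑ θ : Θ1 × Θ2, μ1 θ.1 * μ2 θ.2 * (P v1 v2 w *
      (if D θ.1 θ.2 (h1 θ.1 v1) (h2 θ.2 v2) w = (v1, v2) then 0 else 1)) := by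
        simp only [mul_sum]
        rw [sum_comm]
        refine sum_congr rfl fun w _ => ?_
        rw [sum_comm]
        refine sum_congr rfl fun v1 _ => ?_
        rw [sum_comm]
    _ ≤ ∑ w, ∑ v1, ∑ v2, ((if good v1 v2 w then 0 else P v1 v2 w) + P v1 v2 w * R) :=
        sum_le_sum fun w _ => sum_le_sum fun v1 _ => sum_le_sum fun v2 _ => avg w v1 v2
    _ ≤ η + R := by
        simp only [sum_add_distrib, ← sum_mul]
        rw [hP1, one_mul]
        gcongr

/-! ### One-shot coding theorem -/

/-- The conditional law of `V ~ κ` given its bin index, completed to a pmf on empty bins. -/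
lemma exists_cond {V K : Type*} [Fintype V] [Nonempty V] [DecidableEq K]
    (κ : V → ℝ) (hκ : IsPMF κ) (b : V → K) :
    ∃ r : K → V → ℝ, (∀ k, IsPMF (r k)) ∧ ∀ k v,
      (∑ v', κ v' * (if b v' = k then 1 else 0)) * r k v
        = κ v * (if b v = k then 1 else 0) := by
  classical
  let N : K → ℝ := fun k => ∑ v', κ v' * (if b v' = k then 1 else 0)
  have nn : ∀ k v, 0 ≤ κ v * (if b v = k then (1:ℝ) else 0) := fun k v =>
    mul_nonneg (hκ.1 v) (by positivity)
  refine ⟨fun k v => if N k = 0 then (if v = Classical.arbitrary V then 1 else 0)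
    else κ v * (if b v = k then 1 else 0) / N k, fun k => ⟨fun v => ?_, ?_⟩, fun k v => ?_⟩
  · dsimp only
    by_cases h : N k = 0
    · rw [if_pos h]; positivity
    · rw [if_neg h]; exact div_nonneg (nn k v) (sum_nonneg fun v _ => nn k v)
  · by_cases h : N k = 0
    · simp [h]
    · simp only [h, if_false]
      rw [← sum_div]
      exact div_self h
  · change N k * _ = _
    by_cases h : N k = 0
    · simp only [h, zero_mul]
      exact ((sum_eq_zero_iff_of_nonneg fun v _ => nn k v).1 h v (mem_univ v)).symm
    · simp only [h, if_false]
      field_simp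

/-- Performance of the code obtained from fixed binning functions `b1`, `b2` and a fixed
decoder `d` of the binned sequences, averaged over the bin indices `f1`, `f2` that are
revealed to everybody. -/
lemma glue {Ω A1 A2 C V1 V2 Y S1 S2 M1 M2 F1 F2 : Type*}
    [Fintype Ω] [Fintype V1] [Fintype V2] [Fintype Y]
    [Fintype S1] [Fintype S2] [Fintype M1] [Fintype M2] [Fintype F1] [Fintype F2]
    [DecidableEq S1] [DecidableEq S2] [DecidableEq M1] [DecidableEq M2]
    [DecidableEq F1] [DecidableEq F2] [DecidableEq V1] [DecidableEq V2]
    [Nonempty V1] [Nonempty V2]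
    (Q : Ω → ℝ) (hQ : IsPMF Q) (a1 : Ω → A1) (a2 : Ω → A2) (c : Ω → C)
    (κ1 : A1 → V1 → ℝ) (κ2 : A2 → V2 → ℝ) (κY : C → V1 → V2 → Y → ℝ)
    (h1 : ∀ a, IsPMF (κ1 a)) (h2 : ∀ a, IsPMF (κ2 a)) (hY : ∀ c v1 v2, IsPMF (κY c v1 v2))
    (b1 : V1 → (F1 × S1) × M1) (b2 : V2 → (F2 × S2) × M2)
    (d : (F1 × S1) × M1 → (F2 × S2) × M2 → C → V1 × V2) :
    ∃ (e1 : F1 → S1 → A1 → M1 → ℝ) (e2 : F2 → S2 → A2 → M2 → ℝ)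
      (D : F1 → F2 → S1 → S2 → M1 → M2 → C → Y → ℝ),
      (∀ f s a, IsPMF (e1 f s a)) ∧ (∀ f s a, IsPMF (e2 f s a)) ∧
      (∀ f1 f2 s1 s2 m1 m2 c, IsPMF (D f1 f2 s1 s2 m1 m2 c)) ∧
      ∑ f1, ∑ f2, (Fintype.card F1 : ℝ)⁻¹ * (Fintype.card F2 : ℝ)⁻¹ * ∑ ω, ∑ y,
        |∑ s1, ∑ s2, ∑ m1, ∑ m2, (Fintype.card S1 : ℝ)⁻¹ * (Fintype.card S2 : ℝ)⁻¹ * Q ω *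
            e1 f1 s1 (a1 ω) m1 * e2 f2 s2 (a2 ω) m2 * D f1 f2 s1 s2 m1 m2 (c ω) y
          - ∑ v1, ∑ v2, Q ω * κ1 (a1 ω) v1 * κ2 (a2 ω) v2 * κY (c ω) v1 v2 y|
      ≤ (∑ ω, ∑ k1, ∑ k2, |∑ v1, ∑ v2, Q ω * κ1 (a1 ω) v1 * κ2 (a2 ω) v2 *
            ((if (b1 v1).1 = k1 then 1 else 0) * (if (b2 v2).1 = k2 then 1 else 0))
          - (Fintype.card (F1 × S1) : ℝ)⁻¹ * (Fintype.card (F2 × S2) : ℝ)⁻¹ *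
            ∑ v1, ∑ v2, Q ω * κ1 (a1 ω) v1 * κ2 (a2 ω) v2|)
        + 2 * (∑ ω, ∑ v1, ∑ v2, Q ω * κ1 (a1 ω) v1 * κ2 (a2 ω) v2 *
            (if d (b1 v1) (b2 v2) (c ω) = (v1, v2) then 0 else 1))
        + (∑ w : Ω × Y, ∑ f1, ∑ f2, |∑ v1, ∑ v2,
              Q w.1 * κ1 (a1 w.1) v1 * κ2 (a2 w.1) v2 * κY (c w.1) v1 v2 w.2 *
            ((if (b1 v1).1.1 = f1 then 1 else 0) * (if (b2 v2).1.1 = f2 then 1 else 0))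
          - (Fintype.card F1 : ℝ)⁻¹ * (Fintype.card F2 : ℝ)⁻¹ *
            ∑ v1, ∑ v2, Q w.1 * κ1 (a1 w.1) v1 * κ2 (a2 w.1) v2 * κY (c w.1) v1 v2 w.2|) := by
  choose r1 hr1 hr1' using fun a => exists_cond (κ1 a) (h1 a) (fun v => (b1 v).1)
  choose r2 hr2 hr2' using fun a => exists_cond (κ2 a) (h2 a) (fun v => (b2 v).1)
  let G : F1 → F2 → S1 → S2 → M1 → M2 → C → Y → ℝ := fun f1 f2 s1 s2 m1 m2 c =>
    κY c (d ((f1, s1), m1) ((f2, s2), m2) c).1 (d ((f1, s1), m1) ((f2, s2), m2) c).2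
  have hG : ∀ f1 f2 s1 s2 m1 m2 c, IsPMF (G f1 f2 s1 s2 m1 m2 c) := by
    intro f1 f2 s1 s2 m1 m2 c
    exact hY _ _ _
  refine ⟨fun f s a m => ∑ v, r1 a (f, s) v * if (b1 v).2 = m then 1 else 0,
    fun f s a m => ∑ v, r2 a (f, s) v * if (b2 v).2 = m then 1 else 0, G, ?_, ?_, hG, ?_⟩
  · intro f s a
    refine ⟨fun m => sum_nonneg fun v _ => mul_nonneg ((hr1 _ _).1 v) (by positivity), ?_⟩
    rw [sum_comm]
    simp [(hr1 _ _).2]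
  · intro f s a
    refine ⟨fun m => sum_nonneg fun v _ => mul_nonneg ((hr2 _ _).1 v) (by positivity), ?_⟩
    rw [sum_comm]
    simp [(hr2 _ _).2]
  set n1 : A1 → F1 × S1 → ℝ := fun a k => ∑ v, κ1 a v * (if (b1 v).1 = k then 1 else 0)
    with hn1
  set n2 : A2 → F2 × S2 → ℝ := fun a k => ∑ v, κ2 a v * (if (b2 v).1 = k then 1 else 0)
    with hn2
  -- the pmf induced by the code, with the messages summed out
  have eI : ∀ f1 f2 ω y, (∑ s1, ∑ s2, ∑ m1, ∑ m2,
      (Fintype.card S1 : ℝ)⁻¹ * (Fintype.card S2 : ℝ)⁻¹ * Q ω *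
        (∑ v, r1 (a1 ω) (f1, s1) v * if (b1 v).2 = m1 then 1 else 0) *
        (∑ v, r2 (a2 ω) (f2, s2) v * if (b2 v).2 = m2 then 1 else 0) *
        G f1 f2 s1 s2 m1 m2 (c ω) y)
      = ∑ s1, ∑ s2, ∑ v1, ∑ v2, (Fintype.card S1 : ℝ)⁻¹ * (Fintype.card S2 : ℝ)⁻¹ * Q ω *
        r1 (a1 ω) (f1, s1) v1 * r2 (a2 ω) (f2, s2) v2 *
        G f1 f2 s1 s2 (b1 v1).2 (b2 v2).2 (c ω) y := by
    intro f1 f2 ω y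
    refine sum_congr rfl fun s1 _ => sum_congr rfl fun s2 _ => ?_
    have e : ∀ m1 m2, (Fintype.card S1 : ℝ)⁻¹ * (Fintype.card S2 : ℝ)⁻¹ * Q ω *
        (∑ v, r1 (a1 ω) (f1, s1) v * if (b1 v).2 = m1 then 1 else 0) *
        (∑ v, r2 (a2 ω) (f2, s2) v * if (b2 v).2 = m2 then 1 else 0) *
        G f1 f2 s1 s2 m1 m2 (c ω) y
        = ∑ v1, ∑ v2, if (b2 v2).2 = m2 then (if (b1 v1).2 = m1 then
          (Fintype.card S1 : ℝ)⁻¹ * (Fintype.card S2 : ℝ)⁻¹ * Q ω *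
        r1 (a1 ω) (f1, s1) v1 * r2 (a2 ω) (f2, s2) v2 *
        G f1 f2 s1 s2 m1 m2 (c ω) y else 0) else 0 := by
      intro m1 m2
      rw [mul_assoc _ (∑ v, _) (∑ v, _), sum_mul_sum, mul_sum, sum_mul]
      refine sum_congr rfl fun v1 _ => ?_
      rw [mul_sum, sum_mul]
      refine sum_congr rfl fun v2 _ => ?_
      split_ifs <;> ring
    simp only [e]
    have e' : ∀ m1, (∑ m2, ∑ v1, ∑ v2, if (b2 v2).2 = m2 then (if (b1 v1).2 = m1 then
          (Fintype.card S1 : ℝ)⁻¹ * (Fintype.card S2 : ℝ)⁻¹ * Q ω *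
        r1 (a1 ω) (f1, s1) v1 * r2 (a2 ω) (f2, s2) v2 *
        G f1 f2 s1 s2 m1 m2 (c ω) y else 0) else 0)
        = ∑ v1, ∑ v2, (if (b1 v1).2 = m1 then
          (Fintype.card S1 : ℝ)⁻¹ * (Fintype.card S2 : ℝ)⁻¹ * Q ω *
        r1 (a1 ω) (f1, s1) v1 * r2 (a2 ω) (f2, s2) v2 *
        G f1 f2 s1 s2 m1 (b2 v2).2 (c ω) y else 0) := by
      intro m1
      rw [sum_comm]
      refine sum_congr rfl fun v1 _ => ?_
      rw [sum_comm]
      simp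
    simp only [e']
    rw [sum_comm]
    refine sum_congr rfl fun v1 _ => ?_
    rw [sum_comm]
    simp
  simp only [eI]
  set J : F1 → F2 → Ω → Y → ℝ := fun f1 f2 ω y => ∑ s1, ∑ s2, ∑ v1, ∑ v2,
    Q ω * n1 (a1 ω) (f1, s1) * n2 (a2 ω) (f2, s2) *
        r1 (a1 ω) (f1, s1) v1 * r2 (a2 ω) (f2, s2) v2 *
        G f1 f2 s1 s2 (b1 v1).2 (b2 v2).2 (c ω) y with hJ
  set E1 := (∑ ω, ∑ k1, ∑ k2, |∑ v1, ∑ v2, Q ω * κ1 (a1 ω) v1 * κ2 (a2 ω) v2 *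
            ((if (b1 v1).1 = k1 then 1 else 0) * (if (b2 v2).1 = k2 then 1 else 0))
          - (Fintype.card (F1 × S1) : ℝ)⁻¹ * (Fintype.card (F2 × S2) : ℝ)⁻¹ *
            ∑ v1, ∑ v2, Q ω * κ1 (a1 ω) v1 * κ2 (a2 ω) v2|) with hE1
  set Pe := (∑ ω, ∑ v1, ∑ v2, Q ω * κ1 (a1 ω) v1 * κ2 (a2 ω) v2 *
            (if d (b1 v1) (b2 v2) (c ω) = (v1, v2) then (0:ℝ) else 1)) with hPe
  set KK : F1 → F2 → Ω → Y → ℝ := fun f1 f2 ω y => ∑ v1, ∑ v2,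
      Q ω * κ1 (a1 ω) v1 * κ2 (a2 ω) v2 * κY (c ω) v1 v2 y *
        ((if (b1 v1).1.1 = f1 then 1 else 0) * (if (b2 v2).1.1 = f2 then 1 else 0)) with hKK
  have st1 : ∑ f1, ∑ f2, ∑ ω, ∑ y, |(Fintype.card F1 : ℝ)⁻¹ * (Fintype.card F2 : ℝ)⁻¹ *
      (∑ s1, ∑ s2, ∑ v1, ∑ v2, (Fintype.card S1 : ℝ)⁻¹ * (Fintype.card S2 : ℝ)⁻¹ * Q ω *
        r1 (a1 ω) (f1, s1) v1 * r2 (a2 ω) (f2, s2) v2 *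
        G f1 f2 s1 s2 (b1 v1).2 (b2 v2).2 (c ω) y) - J f1 f2 ω y| ≤ E1 := by
    have eE1 : E1 = ∑ f1, ∑ f2, ∑ ω, ∑ s1, ∑ s2, |Q ω * n1 (a1 ω) (f1, s1) * n2 (a2 ω) (f2, s2)
        - (Fintype.card F1 : ℝ)⁻¹ * (Fintype.card F2 : ℝ)⁻¹ *
          ((Fintype.card S1 : ℝ)⁻¹ * (Fintype.card S2 : ℝ)⁻¹) * Q ω| := by
      rw [hE1]
      have t : ∀ ω k1 k2, |∑ v1, ∑ v2, Q ω * κ1 (a1 ω) v1 * κ2 (a2 ω) v2 *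
            ((if (b1 v1).1 = k1 then 1 else 0) * (if (b2 v2).1 = k2 then 1 else 0))
          - (Fintype.card (F1 × S1) : ℝ)⁻¹ * (Fintype.card (F2 × S2) : ℝ)⁻¹ *
            ∑ v1, ∑ v2, Q ω * κ1 (a1 ω) v1 * κ2 (a2 ω) v2|
          = |Q ω * n1 (a1 ω) k1 * n2 (a2 ω) k2
        - (Fintype.card F1 : ℝ)⁻¹ * (Fintype.card F2 : ℝ)⁻¹ *
          ((Fintype.card S1 : ℝ)⁻¹ * (Fintype.card S2 : ℝ)⁻¹) * Q ω| := by
        intro ω k1 k2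
        congr 1
        congr 1
        · simp only [hn1, hn2]
          rw [mul_assoc, sum_mul_sum, mul_sum]
          refine sum_congr rfl fun v1 _ => ?_
          rw [mul_sum]
          exact sum_congr rfl fun v2 _ => by ring
        · simp only [← mul_sum, (h2 _).2, mul_one, (h1 _).2, Fintype.card_prod]
          push_cast
          rw [mul_inv, mul_inv]
          ring
      simp only [t, Fintype.sum_prod_type]
      rw [sum_comm]
      refine sum_congr rfl fun f1 _ => ?_
      rw [sum_congr rfl fun ω _ => sum_comm]
      rw [sum_comm]
    rw [eE1]
    refine sum_le_sum fun f1 _ => sum_le_sum fun f2 _ => sum_le_sum fun ω _ => ?_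
    have b : ∀ y, |(Fintype.card F1 : ℝ)⁻¹ * (Fintype.card F2 : ℝ)⁻¹ *
      (∑ s1, ∑ s2, ∑ v1, ∑ v2, (Fintype.card S1 : ℝ)⁻¹ * (Fintype.card S2 : ℝ)⁻¹ * Q ω *
        r1 (a1 ω) (f1, s1) v1 * r2 (a2 ω) (f2, s2) v2 *
        G f1 f2 s1 s2 (b1 v1).2 (b2 v2).2 (c ω) y) - J f1 f2 ω y|
      ≤ ∑ s1, ∑ s2, ∑ v1, ∑ v2, |Q ω * n1 (a1 ω) (f1, s1) * n2 (a2 ω) (f2, s2)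
        - (Fintype.card F1 : ℝ)⁻¹ * (Fintype.card F2 : ℝ)⁻¹ *
          ((Fintype.card S1 : ℝ)⁻¹ * (Fintype.card S2 : ℝ)⁻¹) * Q ω| *
        (r1 (a1 ω) (f1, s1) v1 * r2 (a2 ω) (f2, s2) v2 *
        G f1 f2 s1 s2 (b1 v1).2 (b2 v2).2 (c ω) y) := by
      intro y
      simp only [hJ, mul_sum, ← sum_sub_distrib]
      refine (abs_sum_le_sum_abs _ _).trans (sum_le_sum fun s1 _ => ?_)
      refine (abs_sum_le_sum_abs _ _).trans (sum_le_sum fun s2 _ => ?_)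
      refine (abs_sum_le_sum_abs _ _).trans (sum_le_sum fun v1 _ => ?_)
      refine (abs_sum_le_sum_abs _ _).trans (sum_le_sum fun v2 _ => ?_)
      have p : 0 ≤ r1 (a1 ω) (f1, s1) v1 * r2 (a2 ω) (f2, s2) v2 *
        G f1 f2 s1 s2 (b1 v1).2 (b2 v2).2 (c ω) y :=
        mul_nonneg (mul_nonneg ((hr1 _ _).1 _) ((hr2 _ _).1 _)) ((hG _ _ _ _ _ _ _).1 _)
      rw [← abs_of_nonneg p, ← abs_mul, abs_sub_comm]
      apply le_of_eq
      congr 1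
      ring
    refine (sum_le_sum fun y _ => b y).trans (le_of_eq ?_)
    rw [sum_comm]
    refine sum_congr rfl fun s1 _ => ?_
    rw [sum_comm]
    refine sum_congr rfl fun s2 _ => ?_
    rw [sum_comm]
    have : ∀ v1, (∑ y, ∑ v2, |Q ω * n1 (a1 ω) (f1, s1) * n2 (a2 ω) (f2, s2)
        - (Fintype.card F1 : ℝ)⁻¹ * (Fintype.card F2 : ℝ)⁻¹ *
          ((Fintype.card S1 : ℝ)⁻¹ * (Fintype.card S2 : ℝ)⁻¹) * Q ω| *
        (r1 (a1 ω) (f1, s1) v1 * r2 (a2 ω) (f2, s2) v2 *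
        G f1 f2 s1 s2 (b1 v1).2 (b2 v2).2 (c ω) y))
        = |Q ω * n1 (a1 ω) (f1, s1) * n2 (a2 ω) (f2, s2)
        - (Fintype.card F1 : ℝ)⁻¹ * (Fintype.card F2 : ℝ)⁻¹ *
          ((Fintype.card S1 : ℝ)⁻¹ * (Fintype.card S2 : ℝ)⁻¹) * Q ω| *
          r1 (a1 ω) (f1, s1) v1 := by
      intro v1
      rw [sum_comm]
      simp only [← mul_sum, (hG _ _ _ _ _ _ _).2, mul_one, (hr2 _ _).2]
    rw [sum_congr rfl fun v1 _ => this v1, ← mul_sum, (hr1 _ _).2, mul_one]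
  have st2 : ∑ f1, ∑ f2, ∑ ω, ∑ y, |J f1 f2 ω y - KK f1 f2 ω y| ≤ 2 * Pe := by
    have eJ : ∀ f1 f2 ω y, J f1 f2 ω y = ∑ v1, ∑ v2, Q ω * κ1 (a1 ω) v1 * κ2 (a2 ω) v2 *
        κY (c ω) (d (b1 v1) (b2 v2) (c ω)).1 (d (b1 v1) (b2 v2) (c ω)).2 y *
        ((if (b1 v1).1.1 = f1 then 1 else 0) * (if (b2 v2).1.1 = f2 then 1 else 0)) := by
      intro f1 f2 ω y
      have t : ∀ s1 s2 v1 v2, Q ω * n1 (a1 ω) (f1, s1) * n2 (a2 ω) (f2, s2) *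
          r1 (a1 ω) (f1, s1) v1 * r2 (a2 ω) (f2, s2) v2 *
          G f1 f2 s1 s2 (b1 v1).2 (b2 v2).2 (c ω) y
          = if (b2 v2).1.2 = s2 then (if (b1 v1).1.2 = s1 then
          (Q ω * κ1 (a1 ω) v1 * κ2 (a2 ω) v2 *
        κY (c ω) (d (b1 v1) (b2 v2) (c ω)).1 (d (b1 v1) (b2 v2) (c ω)).2 y *
        ((if (b1 v1).1.1 = f1 then 1 else 0) * (if (b2 v2).1.1 = f2 then 1 else 0)))
          else 0) else 0 := by
        intro s1 s2 v1 v2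
        have q1 := hr1' (a1 ω) (f1, s1) v1
        have q2 := hr2' (a2 ω) (f2, s2) v2
        rw [show Q ω * n1 (a1 ω) (f1, s1) * n2 (a2 ω) (f2, s2) *
          r1 (a1 ω) (f1, s1) v1 * r2 (a2 ω) (f2, s2) v2 *
          G f1 f2 s1 s2 (b1 v1).2 (b2 v2).2 (c ω) y
          = Q ω * (n1 (a1 ω) (f1, s1) * r1 (a1 ω) (f1, s1) v1) *
            (n2 (a2 ω) (f2, s2) * r2 (a2 ω) (f2, s2) v2) *
          G f1 f2 s1 s2 (b1 v1).2 (b2 v2).2 (c ω) y by ring]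
        simp only [hn1, hn2]
        rw [q1, q2]
        simp only [G]
        obtain ⟨⟨x1, x2⟩, x3⟩ := b1 v1
        obtain ⟨⟨z1, z2⟩, z3⟩ := b2 v2
        simp only [Prod.mk.injEq]
        by_cases i1 : x1 = f1 <;> by_cases i2 : x2 = s1 <;> by_cases i3 : z1 = f2 <;>
          by_cases i4 : z2 = s2 <;> simp [i1, i2, i3, i4]
      simp only [hJ, t]
      rw [sum_congr rfl fun s1 _ => sum_comm]
      rw [sum_comm]
      refine sum_congr rfl fun v1 _ => ?_
      rw [sum_congr rfl fun s1 _ => sum_comm]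
      rw [sum_comm]
      refine sum_congr rfl fun v2 _ => ?_
      simp
    have bd : ∀ f1 f2 ω, ∑ y, |J f1 f2 ω y - KK f1 f2 ω y| ≤ ∑ v1, ∑ v2,
        (Q ω * κ1 (a1 ω) v1 * κ2 (a2 ω) v2 * 2 *
            (if d (b1 v1) (b2 v2) (c ω) = (v1, v2) then 0 else 1)) *
          ((if (b1 v1).1.1 = f1 then 1 else 0) * (if (b2 v2).1.1 = f2 then 1 else 0)) := by
      intro f1 f2 ω
      have b : ∀ y, |J f1 f2 ω y - KK f1 f2 ω y| ≤ ∑ v1, ∑ v2,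
          Q ω * κ1 (a1 ω) v1 * κ2 (a2 ω) v2 *
          ((if (b1 v1).1.1 = f1 then 1 else 0) * (if (b2 v2).1.1 = f2 then 1 else 0)) *
          |κY (c ω) (d (b1 v1) (b2 v2) (c ω)).1 (d (b1 v1) (b2 v2) (c ω)).2 y
            - κY (c ω) v1 v2 y| := by
        intro y
        rw [eJ]
        simp only [hKK, ← sum_sub_distrib]
        refine (abs_sum_le_sum_abs _ _).trans (sum_le_sum fun v1 _ => ?_)
        refine (abs_sum_le_sum_abs _ _).trans (sum_le_sum fun v2 _ => ?_)
        have p : 0 ≤ Q ω * κ1 (a1 ω) v1 * κ2 (a2 ω) v2 *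
          ((if (b1 v1).1.1 = f1 then (1:ℝ) else 0) * (if (b2 v2).1.1 = f2 then 1 else 0)) :=
          mul_nonneg (mul_nonneg (mul_nonneg (hQ.1 _) ((h1 _).1 _)) ((h2 _).1 _))
            (by positivity)
        rw [← abs_of_nonneg p, ← abs_mul]
        apply le_of_eq
        congr 1
        ring
      refine (sum_le_sum fun y _ => b y).trans ?_
      rw [sum_comm]
      refine sum_le_sum fun v1 _ => ?_
      rw [sum_comm]
      refine sum_le_sum fun v2 _ => ?_
      rw [← mul_sum]
      have p : 0 ≤ Q ω * κ1 (a1 ω) v1 * κ2 (a2 ω) v2 *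
          ((if (b1 v1).1.1 = f1 then (1:ℝ) else 0) * (if (b2 v2).1.1 = f2 then 1 else 0)) :=
          mul_nonneg (mul_nonneg (mul_nonneg (hQ.1 _) ((h1 _).1 _)) ((h2 _).1 _))
            (by positivity)
      have tv : ∑ y, |κY (c ω) (d (b1 v1) (b2 v2) (c ω)).1 (d (b1 v1) (b2 v2) (c ω)).2 y
            - κY (c ω) v1 v2 y|
          ≤ 2 * (if d (b1 v1) (b2 v2) (c ω) = (v1, v2) then 0 else 1) := by
        split_ifs with h
        · rw [h]; simp
        · calc _ ≤ ∑ y, (κY (c ω) (d (b1 v1) (b2 v2) (c ω)).1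
                (d (b1 v1) (b2 v2) (c ω)).2 y + κY (c ω) v1 v2 y) := by
                refine sum_le_sum fun y _ => ?_
                have u1 := (hY (c ω) (d (b1 v1) (b2 v2) (c ω)).1
                  (d (b1 v1) (b2 v2) (c ω)).2).1 y
                have u2 := (hY (c ω) v1 v2).1 y
                rw [abs_le]; constructor <;> linarith
            _ = _ := by rw [sum_add_distrib, (hY _ _ _).2, (hY _ _ _).2]; norm_num
      refine (mul_le_mul_of_nonneg_left tv p).trans (le_of_eq ?_)
      ring
    refine (sum_le_sum fun f1 _ => sum_le_sum fun f2 _ => sum_le_sum fun ω _ =>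
      bd f1 f2 ω).trans (le_of_eq ?_)
    rw [sum_congr rfl fun f1 _ => sum_comm]
    rw [sum_comm, hPe, mul_sum]
    refine sum_congr rfl fun ω _ => ?_
    rw [sum_congr rfl fun f1 _ => sum_comm]
    rw [sum_comm, mul_sum]
    refine sum_congr rfl fun v1 _ => ?_
    rw [sum_congr rfl fun f1 _ => sum_comm]
    rw [sum_comm, mul_sum]
    refine sum_congr rfl fun v2 _ => ?_
    simp only [← mul_sum]
    simp
    split_ifs <;> ring
  set T : Ω → Y → ℝ := fun ω y => ∑ v1, ∑ v2, Q ω * κ1 (a1 ω) v1 * κ2 (a2 ω) v2 *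
    κY (c ω) v1 v2 y with hT
  have st3 : (∑ w : Ω × Y, ∑ f1, ∑ f2, |∑ v1, ∑ v2,
              Q w.1 * κ1 (a1 w.1) v1 * κ2 (a2 w.1) v2 * κY (c w.1) v1 v2 w.2 *
            ((if (b1 v1).1.1 = f1 then 1 else 0) * (if (b2 v2).1.1 = f2 then 1 else 0))
          - (Fintype.card F1 : ℝ)⁻¹ * (Fintype.card F2 : ℝ)⁻¹ *
            ∑ v1, ∑ v2, Q w.1 * κ1 (a1 w.1) v1 * κ2 (a2 w.1) v2 * κY (c w.1) v1 v2 w.2|)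
      = ∑ f1, ∑ f2, ∑ ω, ∑ y, |KK f1 f2 ω y
          - (Fintype.card F1 : ℝ)⁻¹ * (Fintype.card F2 : ℝ)⁻¹ * T ω y| := by
    rw [sum_comm]
    refine sum_congr rfl fun f1 _ => ?_
    rw [sum_comm]
    refine sum_congr rfl fun f2 _ => ?_
    rw [Fintype.sum_prod_type]
  rw [st3]
  refine le_trans ?_ (add_le_add (add_le_add st1 st2) le_rfl)
  simp only [← sum_add_distrib]
  refine sum_le_sum fun f1 _ => sum_le_sum fun f2 _ => ?_
  rw [mul_sum]
  refine sum_le_sum fun ω _ => ?_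
  rw [mul_sum]
  refine sum_le_sum fun y _ => ?_
  have cf : 0 ≤ (Fintype.card F1 : ℝ)⁻¹ * (Fintype.card F2 : ℝ)⁻¹ := by positivity
  rw [← abs_of_nonneg cf, ← abs_mul, abs_of_nonneg cf, mul_sub]
  refine (abs_sub_le _ (J f1 f2 ω y) _).trans ?_
  rw [add_assoc]
  refine add_le_add le_rfl ?_
  exact abs_sub_le _ (KK f1 f2 ω y) _

/-- A quantity whose average under a pmf is at most `B` is at most `B` somewhere. -/
lemma IsPMF.exists_le {A : Type*} [Fintype A] {μ : A → ℝ} (hμ : IsPMF μ) (f : A → ℝ) {B : ℝ}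
    (h : ∑ a, μ a * f a ≤ B) : ∃ a, f a ≤ B := by
  by_contra hc
  push Not at hc
  have : B < ∑ a, μ a * f a := by
    calc B = ∑ a, μ a * B := by rw [← sum_mul, hμ.2, one_mul]
      _ < ∑ a, μ a * f a := by
        have ⟨a, ha⟩ : ∃ a, 0 < μ a := by
          by_contra h0
          push Not at h0
          have := hμ.2
          rw [sum_eq_zero fun a _ => le_antisymm (h0 a) (hμ.1 a)] at this
          exact zero_ne_one this
        exact sum_lt_sum (fun a _ => mul_le_mul_of_nonneg_left (hc a).le (hμ.1 a))
          ⟨a, mem_univ a, mul_lt_mul_of_pos_left (hc a) ha⟩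
  linarith

lemma IsPMF.exists_le3 {A : Type*} [Fintype A] {μ : A → ℝ} (hμ : IsPMF μ) (f g h : A → ℝ)
    {B1 B2 B3 : ℝ} (hf : ∑ a, μ a * f a ≤ B1) (hg : ∑ a, μ a * g a ≤ B2)
    (hh : ∑ a, μ a * h a ≤ B3) : ∃ a, f a + 2 * g a + h a ≤ B1 + 2 * B2 + B3 := by
  apply hμ.exists_le
  simp only [mul_add, sum_add_distrib, mul_left_comm _ (2:ℝ), ← mul_sum]
  linarith

lemma IsPMF.uniform (A : Type*) [Fintype A] [Nonempty A] :
    IsPMF (fun _ : A => (Fintype.card A : ℝ)⁻¹) :=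
  ⟨fun _ => by positivity, by simp⟩

lemma exists_le_pair {A B : Type*} [Fintype A] [Fintype B] [Nonempty A] [Nonempty B]
    (f : A → B → ℝ) {c : ℝ}
    (h : ∑ a, ∑ b, (Fintype.card A : ℝ)⁻¹ * (Fintype.card B : ℝ)⁻¹ * f a b ≤ c) :
    ∃ a b, f a b ≤ c := by
  obtain ⟨⟨a, b⟩, hab⟩ := ((IsPMF.uniform A).prod (IsPMF.uniform B)).exists_le
    (fun x => f x.1 x.2) (B := c) (by rw [Fintype.sum_prod_type]; exact h)
  exact ⟨a, b, hab⟩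

set_option maxHeartbeats 1000000 in
open Classical in
/-- One-shot coding theorem: random binning of `V1` and `V2` by `F_i × S_i × M_i`. -/
lemma one_shot {Ω A1 A2 C V1 V2 Y S1 S2 M1 M2 F1 F2 : Type}
    [Fintype Ω] [Fintype C] [Fintype V1] [Fintype V2] [Fintype Y]
    [Fintype S1] [Fintype S2] [Fintype M1] [Fintype M2] [Fintype F1] [Fintype F2]
    [Nonempty V1] [Nonempty V2] [Nonempty S1] [Nonempty S2] [Nonempty M1] [Nonempty M2]
    [Nonempty F1] [Nonempty F2]
    (Q : Ω → ℝ) (hQ : IsPMF Q) (a1 : Ω → A1) (a2 : Ω → A2) (c : Ω → C)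
    (κ1 : A1 → V1 → ℝ) (κ2 : A2 → V2 → ℝ) (κY : C → V1 → V2 → Y → ℝ)
    (h1 : ∀ a, IsPMF (κ1 a)) (h2 : ∀ a, IsPMF (κ2 a)) (hY : ∀ c v1 v2, IsPMF (κY c v1 v2))
    (P : Ω → V1 → V2 → ℝ) (hP : ∀ ω v1 v2, P ω v1 v2 = Q ω * κ1 (a1 ω) v1 * κ2 (a2 ω) v2)
    (P2 : Ω → Y → V1 → V2 → ℝ) (hP2 : ∀ ω y v1 v2, P2 ω y v1 v2 = P ω v1 v2 * κY (c ω) v1 v2 y)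
    (P3 : C → V1 → V2 → ℝ)
    (hP3 : ∀ x v1 v2, P3 x v1 v2 = ∑ ω, if c ω = x then P ω v1 v2 else 0)
    {φ1 φ2 θ1 θ2 θ12 ψ1 ψ2 ψ12 η1 η2 η3 : ℝ}
    (pφ1 : 0 ≤ φ1) (pφ2 : 0 ≤ φ2) (pθ1 : 0 ≤ θ1) (pθ2 : 0 ≤ θ2) (pθ12 : 0 ≤ θ12)
    (pψ1 : 0 < ψ1) (pψ2 : 0 < ψ2) (pψ12 : 0 < ψ12)
    (good1 : Ω → V1 → V2 → Prop) (good2 : Ω → Y → V1 → V2 → Prop) (good3 : C → V1 → V2 → Prop)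
    (g11 : ∀ ω v1 v2, good1 ω v1 v2 → κ1 (a1 ω) v1 ≤ φ1)
    (g12 : ∀ ω v1 v2, good1 ω v1 v2 → κ2 (a2 ω) v2 ≤ φ2)
    (g21 : ∀ ω y v1 v2, good2 ω y v1 v2 →
      ∑ v2', P2 ω y v1 v2' ≤ θ1 * ∑ v1', ∑ v2', P2 ω y v1' v2')
    (g22 : ∀ ω y v1 v2, good2 ω y v1 v2 →
      ∑ v1', P2 ω y v1' v2 ≤ θ2 * ∑ v1', ∑ v2', P2 ω y v1' v2')
    (g23 : ∀ ω y v1 v2, good2 ω y v1 v2 → P2 ω y v1 v2 ≤ θ12 * ∑ v1', ∑ v2', P2 ω y v1' v2')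
    (g31 : ∀ x v1 v2, good3 x v1 v2 → ψ1 * ∑ v1', P3 x v1' v2 ≤ P3 x v1 v2)
    (g32 : ∀ x v1 v2, good3 x v1 v2 → ψ2 * ∑ v2', P3 x v1 v2' ≤ P3 x v1 v2)
    (g33 : ∀ x v1 v2, good3 x v1 v2 → ψ12 * ∑ v1', ∑ v2', P3 x v1' v2' ≤ P3 x v1 v2)
    (hη1 : ∑ ω, ∑ v1, ∑ v2, (if good1 ω v1 v2 then 0 else P ω v1 v2) ≤ η1)
    (hη2 : ∑ ω, ∑ y, ∑ v1, ∑ v2, (if good2 ω y v1 v2 then 0 else P2 ω y v1 v2) ≤ η2)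
    (hη3 : ∑ x, ∑ v1, ∑ v2, (if good3 x v1 v2 then 0 else P3 x v1 v2) ≤ η3) :
    ∃ (e1 : S1 → A1 → M1 → ℝ) (e2 : S2 → A2 → M2 → ℝ) (D : S1 → S2 → M1 → M2 → C → Y → ℝ),
      (∀ s a, IsPMF (e1 s a)) ∧ (∀ s a, IsPMF (e2 s a)) ∧
      (∀ s1 s2 m1 m2 c, IsPMF (D s1 s2 m1 m2 c)) ∧
      ∑ ω, ∑ y,
        |∑ s1, ∑ s2, ∑ m1, ∑ m2, (Fintype.card S1 : ℝ)⁻¹ * (Fintype.card S2 : ℝ)⁻¹ * Q ω *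
            e1 s1 (a1 ω) m1 * e2 s2 (a2 ω) m2 * D s1 s2 m1 m2 (c ω) y
          - ∑ v1, ∑ v2, P2 ω y v1 v2|
      ≤ (2 * η1 + √(((Fintype.card F1 * Fintype.card S1 : ℕ) : ℝ) * φ1 +
              ((Fintype.card F2 * Fintype.card S2 : ℕ) : ℝ) * φ2 +
              ((Fintype.card F1 * Fintype.card S1 : ℕ) : ℝ) *
              ((Fintype.card F2 * Fintype.card S2 : ℕ) : ℝ) * (φ1 * φ2)))
        + 2 * (η3 + ((((Fintype.card F1 * Fintype.card S1 * Fintype.card M1 : ℕ) : ℝ) * ψ1)⁻¹ +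
            (((Fintype.card F2 * Fintype.card S2 * Fintype.card M2 : ℕ) : ℝ) * ψ2)⁻¹ +
            (((Fintype.card F1 * Fintype.card S1 * Fintype.card M1 : ℕ) : ℝ) *
              ((Fintype.card F2 * Fintype.card S2 * Fintype.card M2 : ℕ) : ℝ) * ψ12)⁻¹))
        + (2 * η2 + √((Fintype.card F1 : ℝ) * θ1 + (Fintype.card F2 : ℝ) * θ2 +
              (Fintype.card F1 : ℝ) * (Fintype.card F2 : ℝ) * θ12)) := by
  have P0 : ∀ ω v1 v2, 0 ≤ P ω v1 v2 := fun ω v1 v2 => by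
    rw [hP]; exact mul_nonneg (mul_nonneg (hQ.1 _) ((h1 _).1 _)) ((h2 _).1 _)
  have s2 : ∀ ω v1, ∑ v2, P ω v1 v2 = Q ω * κ1 (a1 ω) v1 := fun ω v1 => by
    simp only [hP, ← mul_sum, (h2 _).2, mul_one]
  have s1 : ∀ ω v2, ∑ v1, P ω v1 v2 = Q ω * κ2 (a2 ω) v2 := fun ω v2 => by
    simp only [hP, ← mul_sum, ← sum_mul, (h1 _).2, mul_one]
  have s12 : ∀ ω, ∑ v1, ∑ v2, P ω v1 v2 = Q ω := fun ω => by
    simp only [s2, ← mul_sum, (h1 _).2, mul_one]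
  have H1 := exists_isHash V1 ((F1 × S1) × M1)
  have H2 := exists_isHash V2 ((F2 × S2) × M2)
  have o1 := osrb H1.fst H2.fst (fun v1 v2 ω => P ω v1 v2) (fun v1 v2 ω => P0 ω v1 v2)
    (by simp only [s12]; exact hQ.2)
    (fun v1 v2 ω => good1 ω v1 v2) pφ1 pφ2 (mul_nonneg pφ1 pφ2)
    (fun v1 v2 ω g => by
      simp only [s2, ← mul_sum, (h1 _).2, mul_one]
      rw [mul_comm]; exact mul_le_mul_of_nonneg_right (g11 _ _ _ g) (hQ.1 _))
    (fun v1 v2 ω g => by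
      rw [s12, s1, mul_comm]; exact mul_le_mul_of_nonneg_right (g12 _ _ _ g) (hQ.1 _))
    (fun v1 v2 ω g => by
      simp only [s12]
      rw [hP, mul_assoc, mul_comm]
      exact mul_le_mul_of_nonneg_right (mul_le_mul (g11 _ _ _ g) (g12 _ _ _ g) ((h2 _).1 _) pφ1) (hQ.1 _))
    (η := η1) hη1
  have o2 := osrb H1.fst.fst H2.fst.fst (fun v1 v2 (w : Ω × Y) => P2 w.1 w.2 v1 v2)
    (fun v1 v2 w => by rw [hP2]; exact mul_nonneg (P0 _ _ _) ((hY _ _ _).1 _))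
    (by
      rw [Fintype.sum_prod_type]
      dsimp only
      simp only [hP2]
      have : ∀ ω, ∑ y, ∑ v1, ∑ v2, P ω v1 v2 * κY (c ω) v1 v2 y = Q ω := by
        intro ω
        rw [← s12, sum_comm]
        refine sum_congr rfl fun v1 _ => ?_
        rw [sum_comm]
        simp only [← mul_sum, (hY _ _ _).2, mul_one]
      simp only [this, hQ.2])
    (fun v1 v2 w => good2 w.1 w.2 v1 v2) pθ1 pθ2 pθ12
    (fun v1 v2 w g => g21 _ _ _ _ g) (fun v1 v2 w g => g22 _ _ _ _ g)
    (fun v1 v2 w g => g23 _ _ _ _ g)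
    (η := η2) (by rw [Fintype.sum_prod_type]; exact hη2)
  obtain ⟨D, o3⟩ := slepian_wolf H1 H2 (fun v1 v2 x => P3 x v1 v2)
    (fun v1 v2 x => by
      rw [hP3]; exact sum_nonneg fun ω _ => by split_ifs; exacts [P0 _ _ _, le_rfl])
    (by
      have : ∑ x, ∑ v1, ∑ v2, P3 x v1 v2 = ∑ ω, Q ω := by
        simp only [hP3]
        rw [sum_congr rfl fun x _ => sum_congr rfl fun v1 _ => sum_comm]
        rw [sum_congr rfl fun x _ => sum_comm]
        rw [sum_comm]
        refine sum_congr rfl fun ω _ => ?_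
        rw [← s12, sum_comm]
        refine sum_congr rfl fun v1 _ => ?_
        rw [sum_comm]
        simp
      rw [this, hQ.2])
    (fun v1 v2 x => good3 x v1 v2) pψ1 pψ2 pψ12
    (fun v1 v2 w g => g31 _ _ _ g) (fun v1 v2 w g => g32 _ _ _ g)
    (fun v1 v2 w g => g33 _ _ _ g)
    (η := η3) hη3
  -- fix the binning functions
  obtain ⟨⟨b1, b2⟩, hb⟩ := (H1.pmf.prod H2.pmf).exists_le3 _ _ _ o1 o3 o2
  dsimp only at hb
  obtain ⟨e1, e2, G, he1, he2, hG, hb'⟩ := glue Q hQ a1 a2 c κ1 κ2 κY h1 h2 hY b1 b2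
    (D b1 b2)
  have ePe : ∑ x, ∑ v1, ∑ v2, P3 x v1 v2 *
      (if D b1 b2 (b1 v1) (b2 v2) x = (v1, v2) then 0 else 1)
      = ∑ ω, ∑ v1, ∑ v2, P ω v1 v2 *
      (if D b1 b2 (b1 v1) (b2 v2) (c ω) = (v1, v2) then 0 else 1) := by
    simp only [hP3, sum_mul]
    rw [sum_congr rfl fun x _ => sum_congr rfl fun v1 _ => sum_comm]
    rw [sum_congr rfl fun x _ => sum_comm]
    rw [sum_comm]
    refine sum_congr rfl fun ω _ => ?_
    rw [sum_comm]
    refine sum_congr rfl fun v1 _ => ?_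
    rw [sum_comm]
    refine sum_congr rfl fun v2 _ => ?_
    rw [Fintype.sum_eq_single (c ω)]
    · simp
    · intro x hx
      rw [if_neg (Ne.symm hx), zero_mul]
  rw [ePe] at hb
  simp only [hP2, hP] at hb
  have hb2 := hb'.trans hb
  obtain ⟨f1, f2, hf⟩ := exists_le_pair _ hb2
  refine ⟨e1 f1, e2 f2, G f1 f2, he1 f1, he2 f2, hG f1 f2, ?_⟩
  simp only [Fintype.card_prod] at hf
  simp only [hP2, hP]
  exact hf

lemma sum_prod_fin_const {V : Type*} [Fintype V] (L : ℕ) (f : V → ℝ) :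
    ∑ v : V × Fin L, f v.1 = (L : ℝ) * ∑ v, f v := by
  rw [Fintype.sum_prod_type]
  simp [mul_sum]

open Classical in
/-- The one-shot theorem with each `V_i` padded by an independent uniform variable on
`Fin L_i`.  Only the ratios `x_i = F_i / L_i` matter, so that the amount of randomness revealed
by the bin index may exceed the amount available in `V_i`. -/
lemma one_shot_padded {Ω A1 A2 C V1 V2 Y S1 S2 M1 M2 : Type}
    [Fintype Ω] [Fintype C] [Fintype V1] [Fintype V2] [Fintype Y]
    [Fintype S1] [Fintype S2] [Fintype M1] [Fintype M2]
    [Nonempty V1] [Nonempty V2] [Nonempty S1] [Nonempty S2] [Nonempty M1] [Nonempty M2]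
    (F1 F2 L1 L2 : ℕ) (hF1 : 0 < F1) (hF2 : 0 < F2) (hL1 : 0 < L1) (hL2 : 0 < L2)
    (Q : Ω → ℝ) (hQ : IsPMF Q) (a1 : Ω → A1) (a2 : Ω → A2) (c : Ω → C)
    (κ1 : A1 → V1 → ℝ) (κ2 : A2 → V2 → ℝ) (κY : C → V1 → V2 → Y → ℝ)
    (h1 : ∀ a, IsPMF (κ1 a)) (h2 : ∀ a, IsPMF (κ2 a)) (hY : ∀ c v1 v2, IsPMF (κY c v1 v2))
    (P : Ω → V1 → V2 → ℝ) (hP : ∀ ω v1 v2, P ω v1 v2 = Q ω * κ1 (a1 ω) v1 * κ2 (a2 ω) v2)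
    (P2 : Ω → Y → V1 → V2 → ℝ) (hP2 : ∀ ω y v1 v2, P2 ω y v1 v2 = P ω v1 v2 * κY (c ω) v1 v2 y)
    (P3 : C → V1 → V2 → ℝ)
    (hP3 : ∀ x v1 v2, P3 x v1 v2 = ∑ ω, if c ω = x then P ω v1 v2 else 0)
    {φ1 φ2 θ1 θ2 θ12 ψ1 ψ2 ψ12 η1 η2 η3 : ℝ}
    (pφ1 : 0 ≤ φ1) (pφ2 : 0 ≤ φ2) (pθ1 : 0 ≤ θ1) (pθ2 : 0 ≤ θ2) (pθ12 : 0 ≤ θ12)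
    (pψ1 : 0 < ψ1) (pψ2 : 0 < ψ2) (pψ12 : 0 < ψ12)
    (good1 : Ω → V1 → V2 → Prop) (good2 : Ω → Y → V1 → V2 → Prop) (good3 : C → V1 → V2 → Prop)
    (g11 : ∀ ω v1 v2, good1 ω v1 v2 → κ1 (a1 ω) v1 ≤ φ1)
    (g12 : ∀ ω v1 v2, good1 ω v1 v2 → κ2 (a2 ω) v2 ≤ φ2)
    (g21 : ∀ ω y v1 v2, good2 ω y v1 v2 →
      ∑ v2', P2 ω y v1 v2' ≤ θ1 * ∑ v1', ∑ v2', P2 ω y v1' v2')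
    (g22 : ∀ ω y v1 v2, good2 ω y v1 v2 →
      ∑ v1', P2 ω y v1' v2 ≤ θ2 * ∑ v1', ∑ v2', P2 ω y v1' v2')
    (g23 : ∀ ω y v1 v2, good2 ω y v1 v2 → P2 ω y v1 v2 ≤ θ12 * ∑ v1', ∑ v2', P2 ω y v1' v2')
    (g31 : ∀ x v1 v2, good3 x v1 v2 → ψ1 * ∑ v1', P3 x v1' v2 ≤ P3 x v1 v2)
    (g32 : ∀ x v1 v2, good3 x v1 v2 → ψ2 * ∑ v2', P3 x v1 v2' ≤ P3 x v1 v2)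
    (g33 : ∀ x v1 v2, good3 x v1 v2 → ψ12 * ∑ v1', ∑ v2', P3 x v1' v2' ≤ P3 x v1 v2)
    (hη1 : ∑ ω, ∑ v1, ∑ v2, (if good1 ω v1 v2 then 0 else P ω v1 v2) ≤ η1)
    (hη2 : ∑ ω, ∑ y, ∑ v1, ∑ v2, (if good2 ω y v1 v2 then 0 else P2 ω y v1 v2) ≤ η2)
    (hη3 : ∑ x, ∑ v1, ∑ v2, (if good3 x v1 v2 then 0 else P3 x v1 v2) ≤ η3)
    {x1 x2 s1 s2 m1 m2 : ℝ} (hx1 : x1 = F1 / L1) (hx2 : x2 = F2 / L2)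
    (hs1 : s1 = Fintype.card S1) (hs2 : s2 = Fintype.card S2)
    (hm1 : m1 = Fintype.card M1) (hm2 : m2 = Fintype.card M2) :
    ∃ (e1 : S1 → A1 → M1 → ℝ) (e2 : S2 → A2 → M2 → ℝ) (D : S1 → S2 → M1 → M2 → C → Y → ℝ),
      (∀ s a, IsPMF (e1 s a)) ∧ (∀ s a, IsPMF (e2 s a)) ∧
      (∀ s1 s2 m1 m2 c, IsPMF (D s1 s2 m1 m2 c)) ∧
      ∑ ω, ∑ y,
        |∑ s1, ∑ s2, ∑ m1, ∑ m2, (Fintype.card S1 : ℝ)⁻¹ * (Fintype.card S2 : ℝ)⁻¹ * Q ω *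
            e1 s1 (a1 ω) m1 * e2 s2 (a2 ω) m2 * D s1 s2 m1 m2 (c ω) y
          - ∑ v1, ∑ v2, P2 ω y v1 v2|
      ≤ (2 * η1 + √(x1 * s1 * φ1 + x2 * s2 * φ2 + (x1 * s1 * φ1) * (x2 * s2 * φ2)))
        + 2 * (η3 + ((x1 * s1 * m1 * ψ1)⁻¹ + (x2 * s2 * m2 * ψ2)⁻¹ +
            (x1 * s1 * m1 * (x2 * s2 * m2) * ψ12)⁻¹))
        + (2 * η2 + √(x1 * θ1 + x2 * θ2 + x1 * x2 * θ12)) := by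
  have l1 : (0:ℝ) < L1 := by exact_mod_cast hL1
  have l2 : (0:ℝ) < L2 := by exact_mod_cast hL2
  have : NeZero F1 := ⟨hF1.ne'⟩
  have : NeZero F2 := ⟨hF2.ne'⟩
  have : NeZero L1 := ⟨hL1.ne'⟩
  have : NeZero L2 := ⟨hL2.ne'⟩
  have c1 : ∀ f : V1 → ℝ, ∑ v : V1 × Fin L1, f v.1 / L1 = ∑ v, f v := by
    intro f
    rw [sum_prod_fin_const L1 (fun v => f v / L1), ← sum_div]
    field_simp
  have c2 : ∀ f : V2 → ℝ, ∑ v : V2 × Fin L2, f v.1 / L2 = ∑ v, f v := by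
    intro f
    rw [sum_prod_fin_const L2 (fun v => f v / L2), ← sum_div]
    field_simp
  have d1 : ∀ f : V1 → ℝ, ∑ v : V1 × Fin L1, f v.1 / (L1 * L2) = (∑ v, f v) / L2 := by
    intro f
    rw [← c1, sum_div]
    exact sum_congr rfl fun v _ => by rw [div_div]
  have d2 : ∀ f : V2 → ℝ, ∑ v : V2 × Fin L2, f v.1 / (L1 * L2) = (∑ v, f v) / L1 := by
    intro f
    rw [← c2, sum_div]
    exact sum_congr rfl fun v _ => by rw [div_div, mul_comm]
  have c12 : ∀ f : V1 → V2 → ℝ, ∑ v1 : V1 × Fin L1, ∑ v2 : V2 × Fin L2,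
      f v1.1 v2.1 / (L1 * L2) = ∑ v1, ∑ v2, f v1 v2 := by
    intro f
    simp only [d2]
    exact c1 (fun v => ∑ v2, f v v2)
  have div_if : ∀ (p : Prop) [Decidable p] (a b : ℝ),
      (if p then 0 else a / b) = (if p then 0 else a) / b := by
    intro p _ a b; split_ifs <;> simp
  obtain ⟨e1, e2, D, he1, he2, hD, hb⟩ := one_shot (F1 := Fin F1) (F2 := Fin F2)
    (V1 := V1 × Fin L1) (V2 := V2 × Fin L2) (S1 := S1) (S2 := S2) (M1 := M1) (M2 := M2)
    Q hQ a1 a2 c (fun a v => κ1 a v.1 / L1) (fun a v => κ2 a v.1 / L2)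
    (fun c v1 v2 => κY c v1.1 v2.1)
    (fun a => ⟨fun v => div_nonneg ((h1 a).1 _) l1.le, by rw [c1]; exact (h1 a).2⟩)
    (fun a => ⟨fun v => div_nonneg ((h2 a).1 _) l2.le, by rw [c2]; exact (h2 a).2⟩)
    (fun c v1 v2 => hY c v1.1 v2.1)
    (fun ω v1 v2 => P ω v1.1 v2.1 / (L1 * L2)) (fun ω v1 v2 => by rw [hP]; field_simp)
    (fun ω y v1 v2 => P2 ω y v1.1 v2.1 / (L1 * L2)) (fun ω y v1 v2 => by rw [hP2]; field_simp)
    (fun x v1 v2 => P3 x v1.1 v2.1 / (L1 * L2))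
    (fun x v1 v2 => by
      rw [hP3, sum_div]
      exact sum_congr rfl fun ω _ => by split_ifs <;> simp)
    (φ1 := φ1 / L1) (φ2 := φ2 / L2) (θ1 := θ1 / L1) (θ2 := θ2 / L2) (θ12 := θ12 / (L1 * L2))
    (ψ1 := ψ1 / L1) (ψ2 := ψ2 / L2) (ψ12 := ψ12 / (L1 * L2)) (η1 := η1) (η2 := η2) (η3 := η3)
    (by positivity) (by positivity) (by positivity) (by positivity) (by positivity)
    (by positivity) (by positivity) (by positivity)
    (fun ω v1 v2 => good1 ω v1.1 v2.1) (fun ω y v1 v2 => good2 ω y v1.1 v2.1)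
    (fun x v1 v2 => good3 x v1.1 v2.1)
    (fun ω v1 v2 g => div_le_div_of_nonneg_right (g11 _ _ _ g) l1.le)
    (fun ω v1 v2 g => div_le_div_of_nonneg_right (g12 _ _ _ g) l2.le)
    (fun ω y v1 v2 g => by
      rw [c12, d2, div_mul_eq_mul_div]
      exact div_le_div_of_nonneg_right (g21 _ _ _ _ g) l1.le)
    (fun ω y v1 v2 g => by
      rw [c12, d1 (fun v => P2 ω y v v2.1), div_mul_eq_mul_div]
      exact div_le_div_of_nonneg_right (g22 _ _ _ _ g) l2.le)
    (fun ω y v1 v2 g => by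
      rw [c12, div_mul_eq_mul_div]
      exact div_le_div_of_nonneg_right (g23 _ _ _ _ g) (by positivity))
    (fun x v1 v2 g => by
      rw [d1 (fun v => P3 x v v2.1), div_mul_div_comm]
      exact div_le_div_of_nonneg_right (g31 _ _ _ g) (by positivity))
    (fun x v1 v2 g => by
      rw [d2, div_mul_div_comm, mul_comm (L2:ℝ)]
      exact div_le_div_of_nonneg_right (g32 _ _ _ g) (by positivity))
    (fun x v1 v2 g => by
      rw [c12, div_mul_eq_mul_div]
      exact div_le_div_of_nonneg_right (g33 _ _ _ g) (by positivity))
    (by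
      refine le_trans (le_of_eq (sum_congr rfl fun ω _ => ?_)) hη1
      rw [← c12]
      exact sum_congr rfl fun _ _ => sum_congr rfl fun _ _ => by rw [div_if])
    (by
      refine le_trans (le_of_eq (sum_congr rfl fun ω _ => sum_congr rfl fun y _ => ?_)) hη2
      rw [← c12]
      exact sum_congr rfl fun _ _ => sum_congr rfl fun _ _ => by rw [div_if])
    (by
      refine le_trans (le_of_eq (sum_congr rfl fun ω _ => ?_)) hη3
      rw [← c12]
      exact sum_congr rfl fun _ _ => sum_congr rfl fun _ _ => by rw [div_if])
  refine ⟨e1, e2, D, he1, he2, hD, ?_⟩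
  simp only [c12] at hb
  refine hb.trans (le_of_eq ?_)
  simp only [Fintype.card_fin, hx1, hx2, hs1, hs2, hm1, hm2]
  push_cast
  congr 1
  · congr 1
    · congr 2
      field_simp
    · congr 2
      congr 1
      · congr 1
        · congr 1
          field_simp
        · congr 1
          field_simp
      · congr 1
        field_simp
  · congr 2
    field_simp

/-! ### Simulating a pmf from a uniform variable -/

/-- A uniform variable on `Fin N` can be mapped to a variable whose law is close to a given pmf,
up to the mass of the atoms that are much lighter than `1 / N`. -/
lemma exists_resolve {A : Type*} [Fintype A] [DecidableEq A] (P : A → ℝ) (hP : IsPMF P)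
    (N : ℕ) (hN : 0 < N) (τ : ℝ) (hτ : 0 < τ) :
    ∃ g : Fin N → A, ∑ a, |∑ s, (N : ℝ)⁻¹ * (if g s = a then 1 else 0) - P a|
      ≤ 2 * ((∑ a, if P a < τ then P a else 0) + (N * τ)⁻¹) := by
  have hN' : (0:ℝ) < N := by exact_mod_cast hN
  have : Nonempty A := by
    by_contra h
    rw [not_nonempty_iff] at h
    have := hP.2
    simp at this
  let k : A → ℕ := fun a => ⌊N * P a⌋₊
  have hk : ∀ a, (k a : ℝ) ≤ N * P a := fun a => Nat.floor_le (mul_nonneg hN'.le (hP.1 a))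
  have hk' : ∀ a, N * P a < k a + 1 := fun a => Nat.lt_floor_add_one _
  have hcard : Fintype.card (Σ a, Fin (k a)) ≤ Fintype.card (Fin N) := by
    simp only [Fintype.card_sigma, Fintype.card_fin]
    have : ((∑ a, k a : ℕ) : ℝ) ≤ N := by
      push_cast
      calc ∑ a, (k a : ℝ) ≤ ∑ a, N * P a := sum_le_sum fun a _ => hk a
        _ = N := by rw [← mul_sum, hP.2, mul_one]
    exact_mod_cast this
  obtain ⟨ι⟩ := Function.Embedding.nonempty_of_card_le hcard
  let g : Fin N → A := Function.extend ι Sigma.fst (fun _ => Classical.arbitrary A)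
  refine ⟨g, ?_⟩
  set r : A → ℝ := fun a => ∑ s, (N : ℝ)⁻¹ * (if g s = a then 1 else 0) with hr
  have hcnt : ∀ a, (k a : ℝ) / N ≤ r a := by
    intro a
    have : k a ≤ (univ.filter fun s => g s = a).card := by
      have := Finset.card_le_card_of_injOn (s := (univ : Finset (Fin (k a))))
        (t := univ.filter fun s => g s = a) (fun j => ι ⟨a, j⟩)
        (fun j _ => by
          simp only [coe_filter, mem_univ, true_and, Set.mem_setOf_eq]
          exact ι.injective.extend_apply _ _ _)
        (fun j _ j' _ h => by
          have := ι.injective h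
          simpa using this)
      simpa using this
    simp only [hr, ← mul_sum, sum_boole]
    rw [div_eq_inv_mul]
    exact mul_le_mul_of_nonneg_left (by exact_mod_cast this) (by positivity)
  have hr1 : ∑ a, r a = 1 := by
    simp only [hr]
    rw [sum_comm]
    simp [hN'.ne']
  have habs : ∀ a, |r a - P a| = (r a - P a) + 2 * max (P a - r a) 0 := by
    intro a
    rcases le_total (P a) (r a) with h | h
    · rw [abs_of_nonneg (by linarith), max_eq_right (by linarith)]; ring
    · rw [abs_of_nonpos (by linarith), max_eq_left (by linarith)]; ring
  have hmax : ∀ a, max (P a - r a) 0 ≤ (if P a < τ then P a else 0) + P a * (N * τ)⁻¹ := by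
    intro a
    have p0 := hP.1 a
    have hra : 0 ≤ r a := le_trans (by positivity) (hcnt a)
    have q : 0 ≤ P a * (N * τ)⁻¹ := by positivity
    split_ifs with h
    · exact max_le (by linarith) (by linarith)
    · push Not at h
      refine max_le ?_ (by linarith)
      have h1 : P a - r a ≤ (N : ℝ)⁻¹ := by
        have := hcnt a
        have h2 := hk' a
        have : P a ≤ (k a + 1) / N := by rw [le_div_iff₀ hN']; linarith
        rw [add_div, one_div] at this
        linarith
      have h2 : (N : ℝ)⁻¹ ≤ P a * (N * τ)⁻¹ := by
        rw [mul_inv, mul_left_comm]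
        refine le_mul_of_one_le_right (by positivity) ?_
        rw [← div_eq_mul_inv, le_div_iff₀ hτ]; linarith
      linarith
  calc ∑ a, |r a - P a| = 2 * ∑ a, max (P a - r a) 0 := by
        simp only [habs, sum_add_distrib, sum_sub_distrib, hr1, hP.2, ← mul_sum]; ring
    _ ≤ 2 * ∑ a, ((if P a < τ then P a else 0) + P a * (N * τ)⁻¹) :=
        mul_le_mul_of_nonneg_left (sum_le_sum fun a _ => hmax a) zero_le_two
    _ = _ := by rw [sum_add_distrib, ← sum_mul, hP.2, one_mul]

/-! ### Concentration for i.i.d. sequences -/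

lemma sum_pi_prod {A : Type*} [Fintype A] [DecidableEq A] {n : ℕ} (h : Fin n → A → ℝ) :
    ∑ v : Fin n → A, ∏ i, h i (v i) = ∏ i, ∑ a, h i a := by
  rw [Finset.prod_univ_sum]
  simp [Fintype.piFinset_univ]

/-- First and second moments of a sum of i.i.d. centred variables. -/
lemma iid_moments {A : Type*} [Fintype A] (p g : A → ℝ) (hp : ∑ a, p a = 1)
    (hg : ∑ a, p a * g a = 0) (n : ℕ) :
    (∑ v : Fin n → A, ∏ i, p (v i) = 1) ∧
    (∑ v : Fin n → A, (∏ i, p (v i)) * ∑ i, g (v i) = 0) ∧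
    (∑ v : Fin n → A, (∏ i, p (v i)) * (∑ i, g (v i)) ^ 2 = n * ∑ a, p a * g a ^ 2) := by
  classical
  induction n with
  | zero => simp
  | succ n ih =>
    obtain ⟨i0, i1, i2⟩ := ih
    have e : ∀ f : (Fin (n + 1) → A) → ℝ, ∑ v, f v = ∑ a, ∑ v : Fin n → A, f (Fin.cons a v) := by
      intro f
      rw [← (Fin.consEquiv (fun _ => A)).sum_comp, Fintype.sum_prod_type]
      rfl
    simp only [e, Fin.prod_univ_succ, Fin.sum_univ_succ, Fin.cons_zero, Fin.cons_succ]
    refine ⟨?_, ?_, ?_⟩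
    · simp only [← mul_sum, i0, mul_one, hp]
    · have : ∀ a, ∑ v : Fin n → A, (p a * ∏ i, p (v i)) * (g a + ∑ i, g (v i)) = p a * g a := by
        intro a
        calc _ = p a * g a * ∑ v : Fin n → A, ∏ i, p (v i)
              + p a * ∑ v : Fin n → A, (∏ i, p (v i)) * ∑ i, g (v i) := by
              rw [mul_sum, mul_sum, ← sum_add_distrib]
              exact sum_congr rfl fun v _ => by ring
          _ = _ := by rw [i0, i1]; ring
      simp only [this, hg]
    · have : ∀ a, ∑ v : Fin n → A, (p a * ∏ i, p (v i)) * (g a + ∑ i, g (v i)) ^ 2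
          = p a * g a ^ 2 + p a * (n * ∑ a, p a * g a ^ 2) := by
        intro a
        calc _ = p a * g a ^ 2 * ∑ v : Fin n → A, ∏ i, p (v i)
              + 2 * (p a * g a) * ∑ v : Fin n → A, (∏ i, p (v i)) * ∑ i, g (v i)
              + p a * ∑ v : Fin n → A, (∏ i, p (v i)) * (∑ i, g (v i)) ^ 2 := by
              rw [mul_sum, mul_sum, mul_sum, ← sum_add_distrib, ← sum_add_distrib]
              exact sum_congr rfl fun v _ => by ring
          _ = _ := by rw [i0, i1, i2]; ring
      simp only [this, sum_add_distrib, ← sum_mul, hp]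
      push_cast
      ring

open Classical in
/-- Chebyshev inequality for finitely many empirical averages simultaneously. -/
lemma iid_tail {A ι : Type*} [Fintype A] [Fintype ι] (p : A → ℝ) (hp : IsPMF p)
    (g : ι → A → ℝ) (m : ι → ℝ) (hm : ∀ j, m j = ∑ a, p a * g j a) :
    ∃ K : ℝ, 0 ≤ K ∧ ∀ (n : ℕ) (δ : ℝ), 0 < δ →
      ∑ v : Fin n → A, (if ∀ j, |∑ i, g j (v i) - n * m j| ≤ n * δ then 0 else ∏ i, p (v i))
        ≤ K / (n * δ ^ 2) := by
  refine ⟨∑ j, ∑ a, p a * (g j a - m j) ^ 2,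
    sum_nonneg fun j _ => sum_nonneg fun a _ => mul_nonneg (hp.1 a) (sq_nonneg _), ?_⟩
  intro n δ hδ
  rcases Nat.eq_zero_or_pos n with h0 | h0
  · subst h0
    simp
  have hn : (0:ℝ) < n := by exact_mod_cast h0
  have pp : ∀ v : Fin n → A, 0 ≤ ∏ i, p (v i) := fun v => prod_nonneg fun i _ => hp.1 _
  have pt : ∀ v : Fin n → A,
      (if ∀ j, |∑ i, g j (v i) - n * m j| ≤ n * δ then 0 else ∏ i, p (v i))
      ≤ ∑ j, (∏ i, p (v i)) * (∑ i, (g j (v i) - m j)) ^ 2 / (n * δ) ^ 2 := by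
    intro v
    have nn : ∀ j, 0 ≤ (∏ i, p (v i)) * (∑ i, (g j (v i) - m j)) ^ 2 / (n * δ) ^ 2 :=
      fun j => div_nonneg (mul_nonneg (pp v) (sq_nonneg _)) (sq_nonneg _)
    split_ifs with h
    · exact sum_nonneg fun j _ => nn j
    · push Not at h
      obtain ⟨j, hj⟩ := h
      refine le_trans ?_ (single_le_sum (fun j _ => nn j) (mem_univ j))
      rw [mul_div_assoc]
      refine le_mul_of_one_le_right (pp v) ?_
      rw [one_le_div (by positivity)]
      have : ∑ i, (g j (v i) - m j) = ∑ i, g j (v i) - n * m j := by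
        simp [sum_sub_distrib]
      rw [this, ← sq_abs (∑ i, g j (v i) - n * m j)]
      exact pow_le_pow_left₀ (by positivity) hj.le 2
  refine (sum_le_sum fun v _ => pt v).trans (le_of_eq ?_)
  rw [sum_comm, sum_div]
  refine sum_congr rfl fun j _ => ?_
  have := (iid_moments p (fun a => g j a - m j) hp.2 (by
    simp only [mul_sub, sum_sub_distrib, ← sum_mul, hp.2, ← hm]; ring) n).2.2
  rw [← sum_div, this]
  field_simp

/-- A sequence whose empirical log-loss is close to `H` has product close to `2 ^ (-n H)`. -/
lemma prod_bounds {n : ℕ} (a : Fin n → ℝ) (ha : ∀ i, 0 < a i) {H δ : ℝ}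
    (h : |∑ i, -Real.logb 2 (a i) - n * H| ≤ n * δ) :
    (2:ℝ) ^ (-(n * (H + δ))) ≤ ∏ i, a i ∧ ∏ i, a i ≤ (2:ℝ) ^ (-(n * (H - δ))) := by
  have e : ∏ i, a i = (2:ℝ) ^ (-∑ i, -Real.logb 2 (a i)) := by
    rw [sum_neg_distrib, neg_neg, Real.rpow_sum_of_pos two_pos]
    exact prod_congr rfl fun i _ => (Real.rpow_logb two_pos (by norm_num) (ha i)).symm
  rw [abs_le] at h
  rw [e]
  constructor
  · exact Real.rpow_le_rpow_of_exponent_le one_le_two (by linarith [h.2])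
  · exact Real.rpow_le_rpow_of_exponent_le one_le_two (by linarith [h.1])

/-! ### Marginals -/

lemma marg_nonneg {Ω β : Type*} [Fintype Ω] [DecidableEq β] {p : Ω → ℝ} (hp : ∀ ω, 0 ≤ p ω)
    (f : Ω → β) (b : β) : 0 ≤ marg p f b :=
  sum_nonneg fun ω _ => by split_ifs; exacts [hp ω, le_rfl]

lemma le_marg {Ω β : Type*} [Fintype Ω] [DecidableEq β] {p : Ω → ℝ} (hp : ∀ ω, 0 ≤ p ω)
    (f : Ω → β) (ω : Ω) : p ω ≤ marg p f (f ω) := by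
  have := single_le_sum (f := fun ω' => if f ω' = f ω then p ω' else 0) (s := univ)
    (fun ω' _ => by split_ifs; exacts [hp ω', le_rfl]) (mem_univ ω)
  simpa [marg] using this

/-- The marginal probability at a sample point depends only on the partition generated by the
random variable. -/
lemma marg_congr {Ω β γ : Type*} [Fintype Ω] [DecidableEq β] [DecidableEq γ] (p : Ω → ℝ)
    (f : Ω → β) (g : Ω → γ) (ω : Ω) (h : ∀ ω', f ω' = f ω ↔ g ω' = g ω) :
    marg p f (f ω) = marg p g (g ω) := by
  unfold marg
  exact sum_congr rfl fun ω' _ => by simp only [h]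

/-- A marginal as a sum over a parametrisation of a superset of the fibre. -/
lemma marg_param {Ω β B : Type*} [Fintype Ω] [Fintype B] [DecidableEq β] (p : Ω → ℝ)
    (f : Ω → β) (b : β) (e : B → Ω) (he : Function.Injective e)
    (h : ∀ ω, f ω = b → ∃ x, e x = ω) :
    marg p f b = ∑ x, if f (e x) = b then p (e x) else 0 := by
  classical
  unfold marg
  rw [← sum_image (s := univ) (f := fun ω => if f ω = b then p ω else 0) (g := e)
    (fun x _ y _ hxy => he hxy)]
  symm
  refine sum_subset (subset_univ _) fun ω _ hω => ?_
  rw [if_neg]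
  intro hb
  obtain ⟨x, rfl⟩ := h ω hb
  exact hω (mem_image_of_mem e (mem_univ x))

/-- A marginal as a sum over a parametrisation of the fibre. -/
lemma marg_fibre {Ω β B : Type*} [Fintype Ω] [Fintype B] [DecidableEq β] (p : Ω → ℝ)
    (f : Ω → β) (b : β) (e : B → Ω) (he : Function.Injective e)
    (h : ∀ ω, f ω = b → ∃ x, e x = ω) (h' : ∀ x, f (e x) = b) :
    ∑ x, p (e x) = marg p f b := by
  rw [marg_param p f b e he h]
  simp [h']

lemma sum_marg_mul {Ω β : Type*} [Fintype Ω] [Fintype β] [DecidableEq β] (p : Ω → ℝ)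
    (f : Ω → β) (h : β → ℝ) : ∑ b, marg p f b * h b = ∑ ω, p ω * h (f ω) := by
  simp only [marg, sum_mul]
  rw [sum_comm]
  refine sum_congr rfl fun ω _ => ?_
  simp

lemma ent_eq {Ω β : Type*} [Fintype Ω] [Fintype β] [DecidableEq β] (p : Ω → ℝ) (f : Ω → β) :
    ent p f = ∑ ω, p ω * -Real.logb 2 (marg p f (f ω)) := by
  unfold ent entPMF
  rw [sum_marg_mul p f (fun b => Real.logb 2 (marg p f b)), ← sum_neg_distrib]
  exact sum_congr rfl fun ω _ => by ring

lemma ent_congr {Ω β γ : Type*} [Fintype Ω] [Fintype β] [DecidableEq β] [Fintype γ]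
    [DecidableEq γ] (p : Ω → ℝ) (f : Ω → β) (g : Ω → γ) (h : ∀ ω ω', f ω' = f ω ↔ g ω' = g ω) :
    ent p f = ent p g := by
  rw [ent_eq, ent_eq]
  exact sum_congr rfl fun ω _ => by rw [marg_congr p f g ω (h ω)]

open Classical in
/-- The bad mass of a marginal is at most the bad mass upstairs. -/
lemma tail_marg {Ω β : Type*} [Fintype Ω] [Fintype β] [DecidableEq β] (p : Ω → ℝ)
    (hp : ∀ ω, 0 ≤ p ω) (f : Ω → β) (G : Ω → Prop) (good : β → Prop)
    (h : ∀ ω, p ω ≠ 0 → G ω → good (f ω)) :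
    ∑ b, (if good b then 0 else marg p f b) ≤ ∑ ω, if G ω then 0 else p ω := by
  have e : ∑ b, (if good b then 0 else marg p f b)
      = ∑ ω, p ω * (if good (f ω) then 0 else 1) := by
    rw [← sum_marg_mul p f (fun b => if good b then 0 else 1)]
    exact sum_congr rfl fun b _ => by split_ifs <;> simp
  rw [e]
  refine sum_le_sum fun ω _ => ?_
  by_cases h0 : p ω = 0
  · simp [h0]
  · by_cases hG : G ω
    · simp [hG, h ω h0 hG]
    · rw [if_neg hG]
      exact mul_le_of_le_one_right (hp ω) (by split_ifs <;> norm_num)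

/-! ### Sequences over the single-letter alphabet -/

section Joint

variable {X1 X2 Z T U0 U1 U2 Y : Type}

/-- The `i`-th letter of an octuple of sequences. -/
def letter {n : ℕ} (w : (Fin n → X1) × (Fin n → X2) × (Fin n → Z) × (Fin n → T) ×
    (Fin n → U0) × (Fin n → U1) × (Fin n → U2) × (Fin n → Y)) (i : Fin n) :
    X1 × X2 × Z × T × U0 × U1 × U2 × Y :=
  (w.1 i, w.2.1 i, w.2.2.1 i, w.2.2.2.1 i, w.2.2.2.2.1 i, w.2.2.2.2.2.1 i,
    w.2.2.2.2.2.2.1 i, w.2.2.2.2.2.2.2 i)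

/-- Octuples of sequences are sequences of octuples. -/
def letterEquiv (n : ℕ) : ((Fin n → X1) × (Fin n → X2) × (Fin n → Z) × (Fin n → T) ×
    (Fin n → U0) × (Fin n → U1) × (Fin n → U2) × (Fin n → Y)) ≃
    (Fin n → X1 × X2 × Z × T × U0 × U1 × U2 × Y) where
  toFun w i := letter w i
  invFun v := (fun i => (v i).1, fun i => (v i).2.1, fun i => (v i).2.2.1,
    fun i => (v i).2.2.2.1, fun i => (v i).2.2.2.2.1, fun i => (v i).2.2.2.2.2.1,
    fun i => (v i).2.2.2.2.2.2.1, fun i => (v i).2.2.2.2.2.2.2)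
  left_inv _ := rfl
  right_inv _ := rfl

/-- The `n`-fold i.i.d. extension of `p`, as a function of an octuple of sequences. -/
noncomputable def seqPMF (p : X1 × X2 × Z × T × U0 × U1 × U2 × Y → ℝ) (n : ℕ)
    (w : (Fin n → X1) × (Fin n → X2) × (Fin n → Z) × (Fin n → T) ×
    (Fin n → U0) × (Fin n → U1) × (Fin n → U2) × (Fin n → Y)) : ℝ :=
  ∏ i, p (letter w i)

variable [Fintype X1] [Fintype X2] [Fintype Z] [Fintype T] [Fintype U0] [Fintype U1]
  [Fintype U2] [Fintype Y]

/-- If the sequence-valued variable `F` determines and is determined by the letterwise values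
of `f`, its probability is the product of the single-letter ones. -/
lemma marg_seqPMF {β γ : Type*} [DecidableEq β] [DecidableEq γ]
    (p : X1 × X2 × Z × T × U0 × U1 × U2 × Y → ℝ) (n : ℕ)
    (F : (Fin n → X1) × (Fin n → X2) × (Fin n → Z) × (Fin n → T) ×
      (Fin n → U0) × (Fin n → U1) × (Fin n → U2) × (Fin n → Y) → γ)
    (f : X1 × X2 × Z × T × U0 × U1 × U2 × Y → β)
    (h : ∀ w w', F w' = F w ↔ ∀ i, f (letter w' i) = f (letter w i)) (w) :
    marg (seqPMF p n) F (F w) = ∏ i, marg p f (f (letter w i)) := by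
  classical
  unfold marg seqPMF
  simp only [h]
  rw [← sum_pi_prod (fun i a => if f a = f (letter w i) then p a else 0)]
  rw [← (letterEquiv n).sum_comp]
  refine sum_congr rfl fun w' _ => ?_
  change _ = ∏ i, if f (letter w' i) = f (letter w i) then p (letter w' i) else 0
  rw [prod_ite_zero]
  simp

open Classical in
/-- By Chebyshev's inequality, a block whose empirical log-loss of some `a j` is more than `δ` away
from its mean has probability `O(1 / n)`. -/
lemma seq_tail {ι : Type} [Fintype ι] (p : X1 × X2 × Z × T × U0 × U1 × U2 × Y → ℝ)
    (hp : IsPMF p) (a : ι → X1 × X2 × Z × T × U0 × U1 × U2 × Y → ℝ) (H : ι → ℝ)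
    (hH : ∀ j, H j = ∑ ω, p ω * -Real.logb 2 (a j ω)) :
    ∃ K : ℝ, 0 ≤ K ∧ ∀ (n : ℕ) (δ : ℝ), 0 < δ →
      ∑ w, (if ∀ j, |∑ i, -Real.logb 2 (a j (letter w i)) - n * H j| ≤ n * δ then 0
        else seqPMF p n w) ≤ K / (n * δ ^ 2) := by
  obtain ⟨K, hK, h⟩ := iid_tail p hp (fun j ω => -Real.logb 2 (a j ω)) H hH
  refine ⟨K, hK, fun n δ hδ => ?_⟩
  refine le_trans (le_of_eq ?_) (h n δ hδ)
  rw [← (letterEquiv n).sum_comp]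
  rfl

lemma seqPMF_pmf (p : X1 × X2 × Z × T × U0 × U1 × U2 × Y → ℝ) (hp : IsPMF p) (n : ℕ) :
    IsPMF (seqPMF p n) := by
  classical
  refine ⟨fun w => prod_nonneg fun i _ => hp.1 _, ?_⟩
  have := sum_pi_prod (n := n) (fun _ a => p a)
  rw [← (letterEquiv n).sum_comp] at this
  refine Eq.trans ?_ (this.trans ?_)
  · rfl
  · simp [hp.2]

end Joint

/-! ### Entropy inequalities -/

lemma sum_marg {Ω β : Type*} [Fintype Ω] [Fintype β] [DecidableEq β] (p : Ω → ℝ)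
    (f : Ω → β) : ∑ b, marg p f b = ∑ ω, p ω := by
  simpa using sum_marg_mul p f (fun _ => 1)

lemma sum_marg_fst {Ω β γ : Type*} [Fintype Ω] [Fintype β] [DecidableEq β]
    [DecidableEq γ] (p : Ω → ℝ) (f : Ω → β) (g : Ω → γ) (c : γ) :
    ∑ b, marg p (fun ω => (f ω, g ω)) (b, c) = marg p g c := by
  unfold marg
  rw [sum_comm]
  refine sum_congr rfl fun ω _ => ?_
  by_cases h : g ω = c <;> simp [h]

/-- Gibbs' inequality: the true law minimises the expected log-loss. -/
lemma gibbs {Ω β : Type*} [Fintype Ω] [Fintype β] [DecidableEq β] (p : Ω → ℝ) (hp : IsPMF p)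
    (f : Ω → β) (r : β → ℝ) (hr : ∀ b, 0 ≤ r b) (hr1 : ∑ b, r b ≤ 1)
    (hpos : ∀ ω, p ω ≠ 0 → 0 < r (f ω)) :
    ent p f ≤ ∑ ω, p ω * -Real.logb 2 (r (f ω)) := by
  rw [ent_eq]
  have l2 : 0 < Real.log 2 := Real.log_pos one_lt_two
  have pt : ∀ ω, p ω * -Real.logb 2 (marg p f (f ω)) - p ω * -Real.logb 2 (r (f ω))
      ≤ (p ω * (r (f ω) / marg p f (f ω)) - p ω) / Real.log 2 := by
    intro ω
    by_cases h0 : p ω = 0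
    · simp [h0]
    have pp : 0 < p ω := lt_of_le_of_ne (hp.1 ω) (Ne.symm h0)
    have mp : 0 < marg p f (f ω) := pp.trans_le (le_marg hp.1 f ω)
    have rp := hpos ω h0
    have := Real.log_le_sub_one_of_pos (div_pos rp mp)
    rw [Real.log_div rp.ne' mp.ne'] at this
    rw [le_div_iff₀ l2]
    unfold Real.logb
    have e : (p ω * -(Real.log (marg p f (f ω)) / Real.log 2)
        - p ω * -(Real.log (r (f ω)) / Real.log 2)) * Real.log 2
        = p ω * (Real.log (r (f ω)) - Real.log (marg p f (f ω))) := by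
      field_simp
      ring
    rw [e]
    nlinarith
  have hs := sum_le_sum fun ω (_ : ω ∈ univ) => pt ω
  rw [sum_sub_distrib, ← sum_div, sum_sub_distrib, hp.2,
    ← sum_marg_mul p f (fun b => r b / marg p f b)] at hs
  have h1 : ∑ b, marg p f b * (r b / marg p f b) ≤ 1 := by
    refine le_trans (sum_le_sum fun b _ => ?_) hr1
    by_cases h : marg p f b = 0
    · rw [h, zero_mul]; exact hr b
    · rw [mul_div_cancel₀ _ h]
  have h2 : (∑ b, marg p f b * (r b / marg p f b) - 1) / Real.log 2 ≤ 0 :=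
    div_nonpos_of_nonpos_of_nonneg (by linarith) l2.le
  linarith

/-- Conditional form of Gibbs' inequality. -/
lemma cond_gibbs {Ω β γ : Type*} [Fintype Ω] [Fintype β] [DecidableEq β] [Fintype γ]
    [DecidableEq γ] (p : Ω → ℝ) (hp : IsPMF p) (f : Ω → β) (g : Ω → γ) (κ : γ → β → ℝ)
    (hκ : ∀ c, IsPMF (κ c)) (hpos : ∀ ω, p ω ≠ 0 → 0 < κ (g ω) (f ω)) :
    ent p (fun ω => (f ω, g ω)) - ent p g ≤ ∑ ω, p ω * -Real.logb 2 (κ (g ω) (f ω)) := by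
  have mp : ∀ ω, p ω ≠ 0 → 0 < marg p g (g ω) := fun ω h0 =>
    (lt_of_le_of_ne (hp.1 ω) (Ne.symm h0)).trans_le (le_marg hp.1 g ω)
  have := gibbs p hp (fun ω => (f ω, g ω)) (fun x => marg p g x.2 * κ x.2 x.1)
    (fun x => mul_nonneg (marg_nonneg hp.1 _ _) ((hκ _).1 _))
    (by
      rw [Fintype.sum_prod_type, sum_comm]
      simp only [← mul_sum, (hκ _).2, mul_one, sum_marg, hp.2, le_refl])
    (fun ω h0 => mul_pos (mp ω h0) (hpos ω h0))
  have e : ∑ ω, p ω * -Real.logb 2 (marg p g (g ω) * κ (g ω) (f ω))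
      = ent p g + ∑ ω, p ω * -Real.logb 2 (κ (g ω) (f ω)) := by
    rw [ent_eq, ← sum_add_distrib]
    refine sum_congr rfl fun ω _ => ?_
    by_cases h0 : p ω = 0
    · simp [h0]
    · rw [Real.logb_mul (mp ω h0).ne' (hpos ω h0).ne']; ring
  rw [e] at this
  linarith

/-- Equality in the conditional Gibbs inequality for the true conditional law. -/
lemma cond_ent_eq {Ω β γ : Type*} [Fintype Ω] [Fintype β] [DecidableEq β] [Fintype γ]
    [DecidableEq γ] (p : Ω → ℝ) (hp : IsPMF p) (f : Ω → β) (g : Ω → γ) (κ : γ → β → ℝ)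
    (hpos : ∀ ω, p ω ≠ 0 → 0 < κ (g ω) (f ω))
    (h : ∀ ω, marg p (fun ω => (f ω, g ω)) (f ω, g ω) = marg p g (g ω) * κ (g ω) (f ω)) :
    condEnt p f g = ∑ ω, p ω * -Real.logb 2 (κ (g ω) (f ω)) := by
  unfold condEnt
  rw [ent_eq, ent_eq, ← sum_sub_distrib]
  refine sum_congr rfl fun ω _ => ?_
  by_cases h0 : p ω = 0
  · simp [h0]
  · have mp : 0 < marg p g (g ω) :=
      (lt_of_le_of_ne (hp.1 ω) (Ne.symm h0)).trans_le (le_marg hp.1 g ω)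
    rw [h, Real.logb_mul mp.ne' (hpos ω h0).ne']
    ring

lemma cmi_nonneg {Ω β γ δ : Type*} [Fintype Ω] [Fintype β] [DecidableEq β] [Fintype γ]
    [DecidableEq γ] [Fintype δ] [DecidableEq δ] (p : Ω → ℝ) (hp : IsPMF p) (f : Ω → β)
    (g : Ω → γ) (h : Ω → δ) : 0 ≤ cmi p f g h := by
  have mp1 := fun ω (h0 : p ω ≠ 0) => (lt_of_le_of_ne (hp.1 ω) (Ne.symm h0)).trans_le
    (le_marg hp.1 (fun ω => (f ω, h ω)) ω)
  have mp2 := fun ω (h0 : p ω ≠ 0) => (lt_of_le_of_ne (hp.1 ω) (Ne.symm h0)).trans_le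
    (le_marg hp.1 (fun ω => (g ω, h ω)) ω)
  have mp3 := fun ω (h0 : p ω ≠ 0) => (lt_of_le_of_ne (hp.1 ω) (Ne.symm h0)).trans_le (le_marg hp.1 h ω)
  have := gibbs p hp (fun ω => (f ω, g ω, h ω))
    (fun x => marg p (fun ω => (f ω, h ω)) (x.1, x.2.2) *
      (marg p (fun ω => (g ω, h ω)) (x.2.1, x.2.2) / marg p h x.2.2))
    (fun x => mul_nonneg (marg_nonneg hp.1 _ _)
      (div_nonneg (marg_nonneg hp.1 _ _) (marg_nonneg hp.1 _ _)))
    (by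
      rw [Fintype.sum_prod_type, sum_comm, Fintype.sum_prod_type, sum_comm]
      dsimp only
      simp only [← sum_mul, ← mul_sum, sum_marg_fst, ← sum_div]
      calc _ ≤ ∑ d, marg p h d := sum_le_sum fun d _ => by
            by_cases h0 : marg p h d = 0
            · simp [h0]
            · rw [div_self h0, mul_one]
        _ = 1 := by rw [sum_marg, hp.2]
        _ ≤ 1 := le_rfl)
    (fun ω h0 => mul_pos (mp1 ω h0) (div_pos (mp2 ω h0) (mp3 ω h0)))
  have e : ∑ ω, p ω * -Real.logb 2 (marg p (fun ω => (f ω, h ω)) (f ω, h ω) *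
      (marg p (fun ω => (g ω, h ω)) (g ω, h ω) / marg p h (h ω)))
      = ent p (fun ω => (f ω, h ω)) + ent p (fun ω => (g ω, h ω)) - ent p h := by
    rw [ent_eq, ent_eq, ent_eq, ← sum_add_distrib, ← sum_sub_distrib]
    refine sum_congr rfl fun ω _ => ?_
    by_cases h0 : p ω = 0
    · simp [h0]
    · rw [Real.logb_mul (mp1 ω h0).ne' (div_pos (mp2 ω h0) (mp3 ω h0)).ne',
        Real.logb_div (mp2 ω h0).ne' (mp3 ω h0).ne']
      ring
  rw [e] at this
  unfold cmi
  linarith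

/-! ### The single-letter law and its information quantities -/

section SingleLetter

set_option synthInstance.maxSize 1000

variable {X1 X2 Z Y X0 T U0 U1 U2 : Type}
    [Fintype X1] [Fintype X2] [Fintype Z] [Fintype Y]
    [Fintype T] [Fintype U0] [Fintype U1] [Fintype U2]

/-- The factorisation `q₃(x₁,x₂,z) p(t) p(u₀|x₀,t) p(u₁|x₁,u₀,t) p(u₂|x₂,u₀,t) p(y|u₁,u₂,z,t)`
of a joint law `p`, with every factor a (conditional) pmf. -/
structure FactorsAs (q3 : X1 × X2 × Z → ℝ) (f1 : X1 → X0) (pT : T → ℝ) (pU0c : X0 → T → U0 → ℝ)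
    (pU1c : X1 → U0 → T → U1 → ℝ) (pU2c : X2 → U0 → T → U2 → ℝ)
    (pYc : U1 → U2 → Z → T → Y → ℝ) (p : X1 × X2 × Z × T × U0 × U1 × U2 × Y → ℝ) : Prop where
  pq3 : IsPMF q3
  ppT : IsPMF pT
  pU0 : ∀ x0 t, IsPMF (pU0c x0 t)
  pU1 : ∀ x1 u0 t, IsPMF (pU1c x1 u0 t)
  pU2 : ∀ x2 u0 t, IsPMF (pU2c x2 u0 t)
  pY : ∀ u1 u2 z t, IsPMF (pYc u1 u2 z t)
  eq : ∀ x1 x2 z t u0 u1 u2 y,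
      p (x1, x2, z, t, u0, u1, u2, y) =
        q3 (x1, x2, z) * pT t * pU0c (f1 x1) t u0 *
          pU1c x1 u0 t u1 * pU2c x2 u0 t u2 * pYc u1 u2 z t y

/-- Everything except `U₁` and `U₂`. -/
def kW (ω : X1 × X2 × Z × T × U0 × U1 × U2 × Y) : (X1 × X2 × U0 × Y) × Z × T :=
  ((kX1 ω, kX2 ω, kU0 ω, kY ω), (kZ ω, kT ω))

variable {q3 : X1 × X2 × Z → ℝ} {f1 : X1 → X0} {pT : T → ℝ} {pU0c : X0 → T → U0 → ℝ}
    {pU1c : X1 → U0 → T → U1 → ℝ} {pU2c : X2 → U0 → T → U2 → ℝ}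
    {pYc : U1 → U2 → Z → T → Y → ℝ} {p : X1 × X2 × Z × T × U0 × U1 × U2 × Y → ℝ}

lemma FactorsAs.sum_source (hc : FactorsAs q3 f1 pT pU0c pU1c pU2c pYc p)
    (h : X1 → X2 → Z → T → U0 → ℝ) :
    ∑ ω, p ω * h (kX1 ω) (kX2 ω) (kZ ω) (kT ω) (kU0 ω)
      = ∑ x1, ∑ x2, ∑ z, ∑ t, ∑ u0, q3 (x1, x2, z) * pT t * pU0c (f1 x1) t u0
          * h x1 x2 z t u0 := by
  simp only [Fintype.sum_prod_type, kX1, kX2, kZ, kT, kU0, hc.eq]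
  refine sum_congr rfl fun x1 _ => sum_congr rfl fun x2 _ => sum_congr rfl fun z _ =>
    sum_congr rfl fun t _ => sum_congr rfl fun u0 _ => ?_
  have e : ∀ u1 u2 y, q3 (x1, x2, z) * pT t * pU0c (f1 x1) t u0 * pU1c x1 u0 t u1 *
      pU2c x2 u0 t u2 * pYc u1 u2 z t y * h x1 x2 z t u0
      = q3 (x1, x2, z) * pT t * pU0c (f1 x1) t u0 * h x1 x2 z t u0 *
        (pU1c x1 u0 t u1 * (pU2c x2 u0 t u2 * pYc u1 u2 z t y)) := fun _ _ _ => by ring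
  simp only [e, ← mul_sum, (hc.pY _ _ _ _).2, (hc.pU2 _ _ _).2, (hc.pU1 _ _ _).2, mul_one]

lemma FactorsAs.pmf (hc : FactorsAs q3 f1 pT pU0c pU1c pU2c pYc p) : IsPMF p := by
  constructor
  · rintro ⟨x1, x2, z, t, u0, u1, u2, y⟩
    rw [hc.eq]
    have := hc.pq3.1 (x1, x2, z)
    have := hc.ppT.1 t
    have := (hc.pU0 (f1 x1) t).1 u0
    have := (hc.pU1 x1 u0 t).1 u1
    have := (hc.pU2 x2 u0 t).1 u2
    have := (hc.pY u1 u2 z t).1 y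
    positivity
  · have := hc.sum_source (fun _ _ _ _ _ => 1)
    simp only [mul_one, ← mul_sum, (hc.pU0 _ _).2, hc.ppT.2] at this
    rw [this, ← hc.pq3.2]
    simp only [Fintype.sum_prod_type]

lemma FactorsAs.pos (hc : FactorsAs q3 f1 pT pU0c pU1c pU2c pYc p) (ω) (h : p ω ≠ 0) :
    0 < pU0c (f1 (kX1 ω)) (kT ω) (kU0 ω) ∧ 0 < pU1c (kX1 ω) (kU0 ω) (kT ω) (kU1 ω) ∧
      0 < pU2c (kX2 ω) (kU0 ω) (kT ω) (kU2 ω) := by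
  obtain ⟨x1, x2, z, t, u0, u1, u2, y⟩ := ω
  rw [hc.eq] at h
  simp only [mul_ne_zero_iff] at h
  obtain ⟨⟨⟨⟨_, h0⟩, h1⟩, h2⟩, _⟩ := h
  exact ⟨lt_of_le_of_ne ((hc.pU0 _ _).1 _) (Ne.symm h0),
    lt_of_le_of_ne ((hc.pU1 _ _ _).1 _) (Ne.symm h1),
    lt_of_le_of_ne ((hc.pU2 _ _ _).1 _) (Ne.symm h2)⟩

variable [Fintype X0] [DecidableEq X1] [DecidableEq X2] [DecidableEq Z] [DecidableEq Y] [DecidableEq X0]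
    [DecidableEq T] [DecidableEq U0] [DecidableEq U1] [DecidableEq U2]

lemma FactorsAs.condEnt_U0 (hc : FactorsAs q3 f1 pT pU0c pU1c pU2c pYc p) :
    condEnt p kU0 (fun ω => (f1 (kX1 ω), kT ω))
      = ∑ ω, p ω * -Real.logb 2 (pU0c (f1 (kX1 ω)) (kT ω) (kU0 ω)) := by
  refine cond_ent_eq p hc.pmf kU0 (fun ω => (f1 (kX1 ω), kT ω)) (fun c u => pU0c c.1 c.2 u)
    (fun ω h => (hc.pos ω h).1) ?_
  suffices H : ∀ u0 x0 t, marg p (fun ω => (kU0 ω, f1 (kX1 ω), kT ω)) (u0, x0, t)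
      = marg p (fun ω => (f1 (kX1 ω), kT ω)) (x0, t) * pU0c x0 t u0 from fun ω => H _ _ _
  intro u0 x0 t
  have m : ∀ (P : Prop) [Decidable P] (a : ℝ), (if P then a else 0) = a * if P then 1 else 0 := by
    intro P _ a; split_ifs <;> simp
  unfold marg
  rw [sum_congr rfl fun ω _ => m _ (p ω), sum_congr rfl fun ω _ => m _ (p ω)]
  rw [hc.sum_source (fun x1 _ _ t' u0' => if (u0', f1 x1, t') = (u0, x0, t) then 1 else 0),
    hc.sum_source (fun x1 _ _ t' _ => if (f1 x1, t') = (x0, t) then 1 else 0)]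
  simp only [sum_mul]
  refine sum_congr rfl fun x1 _ => sum_congr rfl fun x2 _ => sum_congr rfl fun z _ => ?_
  by_cases hx : f1 x1 = x0
  · subst hx
    rw [sum_eq_single t, sum_eq_single t]
    · simp [← mul_sum, ← sum_mul, (hc.pU0 _ _).2]
    · intro t' _ h; simp [h]
    · simp
    · intro t' _ h; simp [h]
    · simp
  · simp [hx]

/-- The rate conditions rewritten with log-losses of the encoding kernels in place of conditional
entropies, in the form used by the random-binning argument: `c`'s are conditional entropies given
`(Z,T)` (decodability), `b`'s conditional entropies given everything else (secrecy of the bin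
index), `a`'s the log-losses of the kernels (independence from the sources). -/
lemma FactorsAs.rates (hc : FactorsAs q3 f1 pT pU0c pU1c pU2c pYc p) (R1 R2 R01 R02 : ℝ)
    (h1 : cmi p kU1 (fun ω => (kX1 ω, kU0 ω)) (fun ω => (kU2 ω, kZ ω, kT ω)) ≤ R1)
    (h2 : cmi p kU2 (fun ω => (kX2 ω, kU0 ω)) (fun ω => (kU1 ω, kZ ω, kT ω)) ≤ R2)
    (h3 : cmi p (fun ω => (kU1 ω, kU2 ω)) (fun ω => (kX1 ω, kX2 ω, kU0 ω))
        (fun ω => (kZ ω, kT ω)) ≤ R1 + R2)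
    (h4 : cmi p kU1 (fun ω => (kX1 ω, kX2 ω, kU0 ω, kY ω)) (fun ω => (kZ ω, kT ω))
        - cmi p kU1 kU2 (fun ω => (kZ ω, kT ω)) ≤ R1 + R01)
    (h5 : cmi p kU2 (fun ω => (kX1 ω, kX2 ω, kU0 ω, kY ω)) (fun ω => (kZ ω, kT ω))
        - cmi p kU1 kU2 (fun ω => (kZ ω, kT ω)) ≤ R2 + R02)
    (h6 : cmi p kU1 (fun ω => (kX1 ω, kX2 ω, kU0 ω, kY ω)) (fun ω => (kZ ω, kT ω))
        + cmi p kU2 (fun ω => (kX2 ω, kU0 ω)) (fun ω => (kU1 ω, kZ ω, kT ω))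
        ≤ R1 + R2 + R01)
    (h7 : cmi p kU2 (fun ω => (kX1 ω, kX2 ω, kU0 ω, kY ω)) (fun ω => (kZ ω, kT ω))
        + cmi p kU1 (fun ω => (kX1 ω, kU0 ω)) (fun ω => (kU2 ω, kZ ω, kT ω))
        ≤ R1 + R2 + R02)
    (h8 : cmi p (fun ω => (kU1 ω, kU2 ω)) (fun ω => (kX1 ω, kX2 ω, kU0 ω, kY ω))
        (fun ω => (kZ ω, kT ω)) ≤ R1 + R2 + R01 + R02)
    {a1 a2 b1 b2 b12 c1 c2 c12 : ℝ}
    (ha1 : a1 = ∑ ω, p ω * -Real.logb 2 (pU1c (kX1 ω) (kU0 ω) (kT ω) (kU1 ω)))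
    (ha2 : a2 = ∑ ω, p ω * -Real.logb 2 (pU2c (kX2 ω) (kU0 ω) (kT ω) (kU2 ω)))
    (hb1 : b1 = ent p (fun ω => (kU1 ω, kW ω)) - ent p kW)
    (hb2 : b2 = ent p (fun ω => (kU2 ω, kW ω)) - ent p kW)
    (hb12 : b12 = ent p (fun ω => ((kU1 ω, kU2 ω), kW ω)) - ent p kW)
    (hc1 : c1 = ent p (fun ω => (kU1 ω, kU2 ω, kZ ω, kT ω)) - ent p (fun ω => (kU2 ω, kZ ω, kT ω)))
    (hc2 : c2 = ent p (fun ω => (kU1 ω, kU2 ω, kZ ω, kT ω)) - ent p (fun ω => (kU1 ω, kZ ω, kT ω)))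
    (hc12 : c12 = ent p (fun ω => (kU1 ω, kU2 ω, kZ ω, kT ω)) - ent p (fun ω => (kZ ω, kT ω))) :
    c1 - a1 ≤ R1 ∧ c2 - a2 ≤ R2 ∧ c12 - a1 - a2 ≤ R1 + R2 ∧ c1 - b1 ≤ R1 + R01 ∧
      c2 - b2 ≤ R2 + R02 ∧ c12 - b1 - a2 ≤ R1 + R2 + R01 ∧ c12 - b2 - a1 ≤ R1 + R2 + R02 ∧
      c12 - b12 ≤ R1 + R2 + R01 + R02 ∧ c1 + c2 ≤ c12 ∧ b12 ≤ b1 + b2 := by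
  have hp := hc.pmf
  have g1 := cond_gibbs p hp kU1 (fun ω => ((kX1 ω, kU0 ω), (kU2 ω, kZ ω, kT ω)))
    (fun c u => pU1c c.1.1 c.1.2 c.2.2.2 u) (fun c => hc.pU1 _ _ _) (fun ω h => (hc.pos ω h).2.1)
  have g2 := cond_gibbs p hp kU2 (fun ω => ((kX2 ω, kU0 ω), (kU1 ω, kZ ω, kT ω)))
    (fun c u => pU2c c.1.1 c.1.2 c.2.2.2 u) (fun c => hc.pU2 _ _ _) (fun ω h => (hc.pos ω h).2.2)
  have g3 := cond_gibbs p hp (fun ω => (kU1 ω, kU2 ω))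
    (fun ω => ((kX1 ω, kX2 ω, kU0 ω), (kZ ω, kT ω)))
    (fun c u => pU1c c.1.1 c.1.2.2 c.2.2 u.1 * pU2c c.1.2.1 c.1.2.2 c.2.2 u.2)
    (fun c => (hc.pU1 c.1.1 c.1.2.2 c.2.2).prod (hc.pU2 c.1.2.1 c.1.2.2 c.2.2))
    (fun ω h => mul_pos (hc.pos ω h).2.1 (hc.pos ω h).2.2)
  have e3 : ∑ ω, p ω * -Real.logb 2 (pU1c (kX1 ω) (kU0 ω) (kT ω) (kU1 ω) *
      pU2c (kX2 ω) (kU0 ω) (kT ω) (kU2 ω)) = a1 + a2 := by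
    rw [ha1, ha2, ← sum_add_distrib]
    refine sum_congr rfl fun ω _ => ?_
    by_cases h : p ω = 0
    · simp [h]
    · rw [Real.logb_mul (hc.pos ω h).2.1.ne' (hc.pos ω h).2.2.ne']; ring
  rw [e3] at g3
  rw [← ha1] at g1
  rw [← ha2] at g2
  have s1 : ent p (fun ω => (kU2 ω, kU1 ω, kZ ω, kT ω))
      = ent p (fun ω => (kU1 ω, kU2 ω, kZ ω, kT ω)) :=
    ent_congr _ _ _ fun ω ω' => by simp only [Prod.mk.injEq]; tauto
  have s2 : ent p (fun ω => ((kU1 ω, kU2 ω), kZ ω, kT ω))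
      = ent p (fun ω => (kU1 ω, kU2 ω, kZ ω, kT ω)) :=
    ent_congr _ _ _ fun ω ω' => by simp only [Prod.mk.injEq]; tauto
  have n := cmi_nonneg p hp kU1 kU2 (fun ω => (kZ ω, kT ω))
  have n' := cmi_nonneg p hp kU1 kU2 kW
  have s3 : ent p (fun ω => (kU1 ω, kU2 ω, kW ω)) = ent p (fun ω => ((kU1 ω, kU2 ω), kW ω)) :=
    ent_congr _ _ _ fun ω ω' => by simp only [Prod.mk.injEq]; tauto
  unfold cmi at *
  unfold kW at *
  refine ⟨?_, ?_, ?_, ?_, ?_, ?_, ?_, ?_, ?_, ?_⟩ <;> linarith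

end SingleLetter

/-! ### Blocks and typical sets -/

lemma IsPMF.pi {A : Type*} [Fintype A] {n : ℕ} {k : Fin n → A → ℝ} (h : ∀ i, IsPMF (k i)) :
    IsPMF (fun v : Fin n → A => ∏ i, k i (v i)) := by
  classical
  refine ⟨fun v => prod_nonneg fun i _ => (h i).1 _, ?_⟩
  rw [sum_pi_prod]
  exact prod_eq_one fun i _ => (h i).2

section Block

set_option synthInstance.maxSize 1000

variable {X1 X2 Z Y X0 T U0 U1 U2 : Type}

/-- Quintuples of sequences `(x₁, x₂, z, t, u₀)`: the variables generated before binning. -/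
abbrev Src (X1 X2 Z T U0 : Type) (n : ℕ) : Type :=
  (Fin n → X1) × (Fin n → X2) × (Fin n → Z) × (Fin n → T) × (Fin n → U0)

/-- Octuples of sequences. -/
abbrev Oct (X1 X2 Z T U0 U1 U2 Y : Type) (n : ℕ) : Type :=
  (Fin n → X1) × (Fin n → X2) × (Fin n → Z) × (Fin n → T) × (Fin n → U0) ×
    (Fin n → U1) × (Fin n → U2) × (Fin n → Y)

/-- Assemble an octuple of sequences. -/
def oct {n : ℕ} (ω : Src X1 X2 Z T U0 n) (y : Fin n → Y) (v1 : Fin n → U1) (v2 : Fin n → U2) :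
    Oct X1 X2 Z T U0 U1 U2 Y n :=
  (ω.1, ω.2.1, ω.2.2.1, ω.2.2.2.1, ω.2.2.2.2, v1, v2, y)

/-- `oct` as an equivalence. -/
def octEquiv (n : ℕ) : (Src X1 X2 Z T U0 n × (Fin n → Y) × (Fin n → U1) × (Fin n → U2)) ≃
    Oct X1 X2 Z T U0 U1 U2 Y n where
  toFun a := oct a.1 a.2.1 a.2.2.1 a.2.2.2
  invFun w := ((w.1, w.2.1, w.2.2.1, w.2.2.2.1, w.2.2.2.2.1), w.2.2.2.2.2.2.2,
    w.2.2.2.2.2.1, w.2.2.2.2.2.2.1)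
  left_inv _ := rfl
  right_inv _ := rfl

variable [Fintype X1] [Fintype X2] [Fintype Z] [Fintype Y]
    [Fintype T] [Fintype U0] [Fintype U1] [Fintype U2]

lemma sum_oct {n : ℕ} (f : Oct X1 X2 Z T U0 U1 U2 Y n → ℝ) :
    ∑ ω, ∑ y, ∑ v1, ∑ v2, f (oct ω y v1 v2) = ∑ w, f w := by
  rw [← (octEquiv n).sum_comp f]
  conv_rhs => rw [Fintype.sum_prod_type]
  refine sum_congr rfl fun ω _ => ?_
  conv_rhs => rw [Fintype.sum_prod_type]
  refine sum_congr rfl fun y _ => ?_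
  conv_rhs => rw [Fintype.sum_prod_type]
  rfl

lemma sum_oct_last {n : ℕ} (f : Oct X1 X2 Z T U0 U1 U2 Y n → ℝ) :
    ∑ ω, ∑ v1, ∑ v2, ∑ y, f (oct ω y v1 v2) = ∑ w, f w := by
  rw [← sum_oct]
  refine sum_congr rfl fun ω _ => ?_
  rw [sum_comm (s := (univ : Finset (Fin n → Y)))]
  refine sum_congr rfl fun v1 _ => ?_
  rw [sum_comm]

/-- The marginal of the i.i.d. law under a letterwise map is the product of the marginals. -/
lemma marg_letterwise {β : Type*} [DecidableEq β]
    (p : X1 × X2 × Z × T × U0 × U1 × U2 × Y → ℝ) (n : ℕ)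
    (f : X1 × X2 × Z × T × U0 × U1 × U2 × Y → β) (b : Fin n → β) :
    marg (seqPMF p n) (fun w i => f (letter w i)) b = ∏ i, marg p f (b i) := by
  classical
  unfold marg seqPMF
  simp only [funext_iff]
  rw [← sum_pi_prod (fun i a => if f a = b i then p a else 0)]
  rw [← (letterEquiv n).sum_comp]
  refine sum_congr rfl fun w' _ => ?_
  change _ = ∏ i, if f (letter w' i) = b i then p (letter w' i) else 0
  rw [prod_ite_zero]
  simp

/-- Summing the i.i.d. law over a parametrised fibre of a letterwise map. -/
lemma sum_fibre {β B : Type*} [DecidableEq β] [Fintype B]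
    (p : X1 × X2 × Z × T × U0 × U1 × U2 × Y → ℝ) (n : ℕ)
    (f : X1 × X2 × Z × T × U0 × U1 × U2 × Y → β) (w : Oct X1 X2 Z T U0 U1 U2 Y n)
    (e : B → Oct X1 X2 Z T U0 U1 U2 Y n) (he : Function.Injective e)
    (h : ∀ w', (fun i => f (letter w' i)) = (fun i => f (letter w i)) → ∃ x, e x = w')
    (h' : ∀ x, (fun i => f (letter (e x) i)) = (fun i => f (letter w i))) :
    ∑ x, seqPMF p n (e x) = ∏ i, marg p f (f (letter w i)) := by
  rw [← marg_letterwise p n f]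
  exact marg_fibre _ _ _ e he h h'

variable [DecidableEq X1] [DecidableEq X2] [DecidableEq Z] [DecidableEq Y]
    [DecidableEq T] [DecidableEq U0] [DecidableEq U1] [DecidableEq U2]

/-- The eleven single-letter probabilities whose empirical log-averages define the typical set:
the three kernels, and the marginals of `W`, `(U₁,W)`, `(U₂,W)`, `(U₁,U₂,W)` and of `(Z,T)`,
`(U₁,Z,T)`, `(U₂,Z,T)`, `(U₁,U₂,Z,T)`. -/
noncomputable def lossFam (f1 : X1 → X0) (pU0c : X0 → T → U0 → ℝ)
    (pU1c : X1 → U0 → T → U1 → ℝ) (pU2c : X2 → U0 → T → U2 → ℝ)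
    (p : X1 × X2 × Z × T × U0 × U1 × U2 × Y → ℝ) :
    Fin 11 → X1 × X2 × Z × T × U0 × U1 × U2 × Y → ℝ :=
  ![fun ω => pU0c (f1 (kX1 ω)) (kT ω) (kU0 ω),
    fun ω => pU1c (kX1 ω) (kU0 ω) (kT ω) (kU1 ω),
    fun ω => pU2c (kX2 ω) (kU0 ω) (kT ω) (kU2 ω),
    fun ω => marg p kW (kW ω),
    fun ω => marg p (fun ω => (kU1 ω, kW ω)) (kU1 ω, kW ω),
    fun ω => marg p (fun ω => (kU2 ω, kW ω)) (kU2 ω, kW ω),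
    fun ω => marg p (fun ω => ((kU1 ω, kU2 ω), kW ω)) ((kU1 ω, kU2 ω), kW ω),
    fun ω => marg p (fun ω => (kZ ω, kT ω)) (kZ ω, kT ω),
    fun ω => marg p (fun ω => (kU1 ω, kZ ω, kT ω)) (kU1 ω, kZ ω, kT ω),
    fun ω => marg p (fun ω => (kU2 ω, kZ ω, kT ω)) (kU2 ω, kZ ω, kT ω),
    fun ω => marg p (fun ω => (kU1 ω, kU2 ω, kZ ω, kT ω)) (kU1 ω, kU2 ω, kZ ω, kT ω)]

/-- The block `w` is `δ`-typical: all eleven empirical log-averages are within `δ` of their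
means `H`. -/
def Typical (f1 : X1 → X0) (pU0c : X0 → T → U0 → ℝ)
    (pU1c : X1 → U0 → T → U1 → ℝ) (pU2c : X2 → U0 → T → U2 → ℝ)
    (p : X1 × X2 × Z × T × U0 × U1 × U2 × Y → ℝ) (H : Fin 11 → ℝ) (n : ℕ) (δ : ℝ)
    (w : Oct X1 X2 Z T U0 U1 U2 Y n) : Prop :=
  ∀ j, |∑ i, -Real.logb 2 (lossFam f1 pU0c pU1c pU2c p j (letter w i)) - n * H j| ≤ n * δ

variable {q3 : X1 × X2 × Z → ℝ} {f1 : X1 → X0} {pT : T → ℝ} {pU0c : X0 → T → U0 → ℝ}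
    {pU1c : X1 → U0 → T → U1 → ℝ} {pU2c : X2 → U0 → T → U2 → ℝ}
    {pYc : U1 → U2 → Z → T → Y → ℝ} {p : X1 × X2 × Z × T × U0 × U1 × U2 × Y → ℝ}

lemma FactorsAs.lossFam_pos (hc : FactorsAs q3 f1 pT pU0c pU1c pU2c pYc p) (ω) (h : p ω ≠ 0)
    (j : Fin 11) : 0 < lossFam f1 pU0c pU1c pU2c p j ω := by
  have pp : 0 < p ω := lt_of_le_of_ne (hc.pmf.1 ω) (Ne.symm h)
  obtain ⟨h0, h1, h2⟩ := hc.pos ω h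
  have m := fun {β : Type} [DecidableEq β] (f : _ → β) => pp.trans_le (le_marg hc.pmf.1 f ω)
  fin_cases j
  exacts [h0, h1, h2, m kW, m (fun ω => (kU1 ω, kW ω)), m (fun ω => (kU2 ω, kW ω)),
    m (fun ω => ((kU1 ω, kU2 ω), kW ω)), m (fun ω => (kZ ω, kT ω)),
    m (fun ω => (kU1 ω, kZ ω, kT ω)), m (fun ω => (kU2 ω, kZ ω, kT ω)),
    m (fun ω => (kU1 ω, kU2 ω, kZ ω, kT ω))]

lemma FactorsAs.typical_bounds (hc : FactorsAs q3 f1 pT pU0c pU1c pU2c pYc p)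
    {H : Fin 11 → ℝ} {n : ℕ} {δ : ℝ} {w : Oct X1 X2 Z T U0 U1 U2 Y n}
    (hw : seqPMF p n w ≠ 0) (ht : Typical f1 pU0c pU1c pU2c p H n δ w) (j : Fin 11) :
    (2:ℝ) ^ (-(n * (H j + δ))) ≤ ∏ i, lossFam f1 pU0c pU1c pU2c p j (letter w i) ∧
      ∏ i, lossFam f1 pU0c pU1c pU2c p j (letter w i) ≤ (2:ℝ) ^ (-(n * (H j - δ))) := by
  refine prod_bounds _ (fun i => hc.lossFam_pos _ ?_ j) (ht j)
  exact (prod_ne_zero_iff.1 hw) i (mem_univ i)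

end Block

/-! ### Binning over blocks -/

section Block

set_option synthInstance.maxSize 1000

variable {X1 X2 Z Y X0 T U0 U1 U2 : Type}
    [Fintype X1] [Fintype X2] [Fintype Z] [Fintype Y]
    [Fintype T] [Fintype U0] [Fintype U1] [Fintype U2]
    [DecidableEq X1] [DecidableEq X2] [DecidableEq Z] [DecidableEq Y]
    [DecidableEq T] [DecidableEq U0] [DecidableEq U1] [DecidableEq U2]
    {q3 : X1 × X2 × Z → ℝ} {f1 : X1 → X0} {pT : T → ℝ} {pU0c : X0 → T → U0 → ℝ}
    {pU1c : X1 → U0 → T → U1 → ℝ} {pU2c : X2 → U0 → T → U2 → ℝ}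
    {pYc : U1 → U2 → Z → T → Y → ℝ} {p : X1 × X2 × Z × T × U0 × U1 × U2 × Y → ℝ}

/-- Summing out a component `h` of a random variable. -/
lemma sum_marg_param {Ω β γ B : Type*} [Fintype Ω] [Fintype B] [DecidableEq β] [DecidableEq γ]
    (p : Ω → ℝ) (F : Ω → β) (G : Ω → γ) (h : Ω → B) (k : B → β) (c : γ)
    (hF : ∀ ω b, F ω = k b ↔ (G ω = c ∧ h ω = b)) :
    ∑ b, marg p F (k b) = marg p G c := by
  classical
  unfold marg
  rw [sum_comm]
  refine sum_congr rfl fun ω _ => ?_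
  simp only [hF]
  by_cases hG : G ω = c <;> simp [hG]

/-- The i.i.d. law of `(X₁ⁿ, X₂ⁿ, Zⁿ, Tⁿ, U₀ⁿ)`. -/
noncomputable def srcPMF (q3 : X1 × X2 × Z → ℝ) (f1 : X1 → X0) (pT : T → ℝ)
    (pU0c : X0 → T → U0 → ℝ) (n : ℕ) (ω : Src X1 X2 Z T U0 n) : ℝ :=
  ∏ i, q3 (ω.1 i, ω.2.1 i, ω.2.2.1 i) * pT (ω.2.2.2.1 i) *
    pU0c (f1 (ω.1 i)) (ω.2.2.2.1 i) (ω.2.2.2.2 i)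

lemma FactorsAs.seqPMF_oct (hc : FactorsAs q3 f1 pT pU0c pU1c pU2c pYc p) {n : ℕ}
    (ω : Src X1 X2 Z T U0 n) (y : Fin n → Y) (v1 : Fin n → U1) (v2 : Fin n → U2) :
    seqPMF p n (oct ω y v1 v2) = srcPMF q3 f1 pT pU0c n ω *
      (∏ i, pU1c (ω.1 i) (ω.2.2.2.2 i) (ω.2.2.2.1 i) (v1 i)) *
      (∏ i, pU2c (ω.2.1 i) (ω.2.2.2.2 i) (ω.2.2.2.1 i) (v2 i)) *
      ∏ i, pYc (v1 i) (v2 i) (ω.2.2.1 i) (ω.2.2.2.1 i) (y i) := by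
  unfold seqPMF srcPMF
  rw [← prod_mul_distrib, ← prod_mul_distrib, ← prod_mul_distrib]
  exact prod_congr rfl fun i _ => hc.eq _ _ _ _ _ _ _ _

lemma FactorsAs.srcPMF_pmf (hc : FactorsAs q3 f1 pT pU0c pU1c pU2c pYc p) (n : ℕ) :
    IsPMF (srcPMF q3 f1 pT pU0c n) := by
  refine ⟨fun ω => prod_nonneg fun i _ => mul_nonneg (mul_nonneg (hc.pq3.1 _) (hc.ppT.1 _))
    ((hc.pU0 _ _).1 _), ?_⟩
  rw [← (seqPMF_pmf p hc.pmf n).2, ← sum_oct_last]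
  refine sum_congr rfl fun ω _ => ?_
  have h1 := (IsPMF.pi fun i => hc.pU1 (ω.1 i) (ω.2.2.2.2 i) (ω.2.2.2.1 i)).2
  have h2 := (IsPMF.pi fun i => hc.pU2 (ω.2.1 i) (ω.2.2.2.2 i) (ω.2.2.2.1 i)).2
  have hY := fun v1 v2 : Fin n → _ =>
    (IsPMF.pi fun i => hc.pY (v1 i) (v2 i) (ω.2.2.1 i) (ω.2.2.2.1 i)).2
  simp only [hc.seqPMF_oct, ← mul_sum, hY, h2, mul_one, h1]

lemma oct_of_kW {n : ℕ} (w w' : Oct X1 X2 Z T U0 U1 U2 Y n)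
    (h : ∀ i, kW (letter w' i) = kW (letter w i)) :
    w' = oct (w.1, w.2.1, w.2.2.1, w.2.2.2.1, w.2.2.2.2.1) w.2.2.2.2.2.2.2
      w'.2.2.2.2.2.1 w'.2.2.2.2.2.2.1 := by
  obtain ⟨x1, x2, z, t, u0, u1, u2, y⟩ := w
  obtain ⟨x1', x2', z', t', u0', u1', u2', y'⟩ := w'
  simp only [kW, kX1, kX2, kU0, kY, kZ, kT, letter, Prod.mk.injEq, forall_and] at h
  obtain ⟨⟨h1, h2, h3, h4⟩, h5, h6⟩ := h
  obtain rfl := funext h1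
  obtain rfl := funext h2
  obtain rfl := funext h3
  obtain rfl := funext h4
  obtain rfl := funext h5
  obtain rfl := funext h6
  rfl

open Classical in
/-- Random binning of `U₁ⁿ` and `U₂ⁿ`, with errors measured against the i.i.d. law `p`. -/
lemma FactorsAs.block_binning (hc : FactorsAs q3 f1 pT pU0c pU1c pU2c pYc p)
    (H : Fin 11 → ℝ) (n : ℕ) (δ η : ℝ)
    (hη : ∑ w, (if Typical f1 pU0c pU1c pU2c p H n δ w then 0 else seqPMF p n w) ≤ η)
    (F1 F2 L1 L2 S1 S2 M1 M2 : ℕ) (hF1 : 0 < F1) (hF2 : 0 < F2) (hL1 : 0 < L1) (hL2 : 0 < L2)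
    (hS1 : 0 < S1) (hS2 : 0 < S2) (hM1 : 0 < M1) (hM2 : 0 < M2)
    {x1 x2 φ1 φ2 θ1 θ2 θ12 ψ1 ψ2 ψ12 : ℝ} (hx1 : x1 = F1 / L1) (hx2 : x2 = F2 / L2)
    (hφ1 : φ1 = 2 ^ (-(n * (H 1 - δ)))) (hφ2 : φ2 = 2 ^ (-(n * (H 2 - δ))))
    (hθ1 : θ1 = 2 ^ (-(n * (H 4 - H 3 - 2 * δ)))) (hθ2 : θ2 = 2 ^ (-(n * (H 5 - H 3 - 2 * δ))))
    (hθ12 : θ12 = 2 ^ (-(n * (H 6 - H 3 - 2 * δ))))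
    (hψ1 : ψ1 = 2 ^ (-(n * (H 10 - H 9 + 2 * δ)))) (hψ2 : ψ2 = 2 ^ (-(n * (H 10 - H 8 + 2 * δ))))
    (hψ12 : ψ12 = 2 ^ (-(n * (H 10 - H 7 + 2 * δ)))) :
    ∃ (e1 : Fin S1 → ((Fin n → X1) × (Fin n → U0) × (Fin n → T)) → Fin M1 → ℝ)
      (e2 : Fin S2 → ((Fin n → X2) × (Fin n → U0) × (Fin n → T)) → Fin M2 → ℝ)
      (D : Fin S1 → Fin S2 → Fin M1 → Fin M2 → ((Fin n → Z) × (Fin n → T)) → (Fin n → Y) → ℝ),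
      (∀ s a, IsPMF (e1 s a)) ∧ (∀ s a, IsPMF (e2 s a)) ∧
      (∀ s1 s2 m1 m2 c, IsPMF (D s1 s2 m1 m2 c)) ∧
      ∑ ω : Src X1 X2 Z T U0 n, ∑ y,
        |∑ s1, ∑ s2, ∑ m1, ∑ m2, (S1 : ℝ)⁻¹ * (S2 : ℝ)⁻¹ * srcPMF q3 f1 pT pU0c n ω *
            e1 s1 (ω.1, ω.2.2.2.2, ω.2.2.2.1) m1 * e2 s2 (ω.2.1, ω.2.2.2.2, ω.2.2.2.1) m2 *
            D s1 s2 m1 m2 (ω.2.2.1, ω.2.2.2.1) y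
          - ∑ v1, ∑ v2, seqPMF p n (oct ω y v1 v2)|
      ≤ (2 * η + √(x1 * S1 * φ1 + x2 * S2 * φ2 + (x1 * S1 * φ1) * (x2 * S2 * φ2)))
        + 2 * (η + ((x1 * S1 * M1 * ψ1)⁻¹ + (x2 * S2 * M2 * ψ2)⁻¹ +
            (x1 * S1 * M1 * (x2 * S2 * M2) * ψ12)⁻¹))
        + (2 * η + √(x1 * θ1 + x2 * θ2 + x1 * x2 * θ12)) := by
  have hp := hc.pmf
  have : NeZero S1 := ⟨hS1.ne'⟩
  have : NeZero S2 := ⟨hS2.ne'⟩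
  have : NeZero M1 := ⟨hM1.ne'⟩
  have : NeZero M2 := ⟨hM2.ne'⟩
  have hne : Nonempty (X1 × X2 × Z × T × U0 × U1 × U2 × Y) := by
    by_contra h
    rw [not_nonempty_iff] at h
    have := hp.2
    simp at this
  have : Nonempty U1 := hne.map kU1
  have : Nonempty U2 := hne.map kU2
  have two : ∀ x : ℝ, (0:ℝ) < 2 ^ x := fun x => Real.rpow_pos_of_pos two_pos x
  have add2 : ∀ x y : ℝ, (2:ℝ) ^ x * 2 ^ y = 2 ^ (x + y) := fun x y =>
    (Real.rpow_add two_pos x y).symm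
  have s0 : ∀ w, 0 ≤ seqPMF p n w := (seqPMF_pmf p hp n).1
  -- the block quantities, as products of single-letter ones
  have eW1 : ∀ ω y v1 (v2 : Fin n → U2), ∑ v2', seqPMF p n (oct ω y v1 v2')
      = ∏ i, lossFam f1 pU0c pU1c pU2c p 4 (letter (oct ω y v1 v2) i) := by
    intro ω y v1 v2
    refine sum_fibre p n (fun ω => (kU1 ω, kW ω)) (oct ω y v1 v2) (fun v2' => oct ω y v1 v2')
      ?_ ?_ ?_
    · intro a b h; simpa [oct] using h
    · rintro ⟨x1, x2, z, t, u0, u1, u2, y'⟩ h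
      refine ⟨u2, ?_⟩
      have hW := oct_of_kW (oct ω y v1 v2) _ fun i => congrArg (fun a => a.2) (congrFun h i)
      have h1 : u1 = v1 := funext fun i => congrArg (fun a => a.1) (congrFun h i)
      subst h1
      exact hW.symm
    · intro v
      rfl
  have eW2 : ∀ ω y (v1 : Fin n → U1) v2, ∑ v1', seqPMF p n (oct ω y v1' v2)
      = ∏ i, lossFam f1 pU0c pU1c pU2c p 5 (letter (oct ω y v1 v2) i) := by
    intro ω y v1 v2
    refine sum_fibre p n (fun ω => (kU2 ω, kW ω)) (oct ω y v1 v2) (fun v1' => oct ω y v1' v2)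
      ?_ ?_ ?_
    · intro a b h; simpa [oct] using h
    · rintro ⟨x1, x2, z, t, u0, u1, u2, y'⟩ h
      refine ⟨u1, ?_⟩
      have hW := oct_of_kW (oct ω y v1 v2) _ fun i => congrArg (fun a => a.2) (congrFun h i)
      have h2 : u2 = v2 := funext fun i => congrArg (fun a => a.1) (congrFun h i)
      subst h2
      exact hW.symm
    · intro v
      rfl
  have eW12 : ∀ ω y (v1 : Fin n → U1) (v2 : Fin n → U2), seqPMF p n (oct ω y v1 v2)
      = ∏ i, lossFam f1 pU0c pU1c pU2c p 6 (letter (oct ω y v1 v2) i) := by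
    intro ω y v1 v2
    have := sum_fibre p n (fun ω => ((kU1 ω, kU2 ω), kW ω)) (oct ω y v1 v2)
      (fun _ : Unit => oct ω y v1 v2) ?_ ?_ ?_
    · rw [Fintype.sum_unique] at this
      exact this
    · intro a b _; rfl
    · rintro ⟨x1, x2, z, t, u0, u1, u2, y'⟩ h
      refine ⟨(), ?_⟩
      have hW := oct_of_kW (oct ω y v1 v2) _ fun i => congrArg (fun a => a.2) (congrFun h i)
      have h1 : u1 = v1 := funext fun i => congrArg (fun a => a.1.1) (congrFun h i)
      have h2 : u2 = v2 := funext fun i => congrArg (fun a => a.1.2) (congrFun h i)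
      subst h1 h2
      exact hW.symm
    · intro v
      rfl
  have eW : ∀ ω y (v1 : Fin n → U1) (v2 : Fin n → U2),
      ∑ v1', ∑ v2', seqPMF p n (oct ω y v1' v2')
      = ∏ i, lossFam f1 pU0c pU1c pU2c p 3 (letter (oct ω y v1 v2) i) := by
    intro ω y v1 v2
    have := sum_fibre p n kW (oct ω y v1 v2)
      (fun v : (Fin n → U1) × (Fin n → U2) => oct ω y v.1 v.2) ?_ ?_ ?_
    · rw [← Fintype.sum_prod_type' (f := fun v1' v2' => seqPMF p n (oct ω y v1' v2'))]
      exact this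
    · intro a b h; simpa [oct, Prod.ext_iff] using h
    · rintro ⟨x1, x2, z, t, u0, u1, u2, y'⟩ h
      refine ⟨(u1, u2), ?_⟩
      have hW := oct_of_kW (oct ω y v1 v2) _ fun i => congrFun h i
      exact hW.symm
    · intro v
      rfl
  let F3 : Oct X1 X2 Z T U0 U1 U2 Y n → (((Fin n → Z) × (Fin n → T)) × (Fin n → U1) × (Fin n → U2)) :=
    fun w => ((w.2.2.1, w.2.2.2.1), w.2.2.2.2.2.1, w.2.2.2.2.2.2.1)
  let P3 : ((Fin n → Z) × (Fin n → T)) → (Fin n → U1) → (Fin n → U2) → ℝ :=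
    fun x v1 v2 => marg (seqPMF p n) F3 (x, v1, v2)
  let P : Src X1 X2 Z T U0 n → (Fin n → U1) → (Fin n → U2) → ℝ := fun ω v1 v2 =>
    srcPMF q3 f1 pT pU0c n ω *
      (∏ i, pU1c (ω.1 i) (ω.2.2.2.2 i) (ω.2.2.2.1 i) (v1 i)) *
      (∏ i, pU2c (ω.2.1 i) (ω.2.2.2.2 i) (ω.2.2.2.1 i) (v2 i))
  have hPy : ∀ ω v1 v2, P ω v1 v2 = ∑ y, seqPMF p n (oct ω y v1 v2) := by
    intro ω v1 v2
    have hY := (IsPMF.pi fun i => hc.pY (v1 i) (v2 i) (ω.2.2.1 i) (ω.2.2.2.1 i)).2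
    simp only [hc.seqPMF_oct, ← mul_sum, hY, mul_one]
    rfl
  have eC12 : ∀ w, P3 (F3 w).1 (F3 w).2.1 (F3 w).2.2
      = ∏ i, lossFam f1 pU0c pU1c pU2c p 10 (letter w i) := by
    intro w
    refine marg_seqPMF p n F3 (fun ω => (kU1 ω, kU2 ω, kZ ω, kT ω)) ?_ w
    intro w w'
    simp only [F3, kU1, kU2, kZ, kT, letter, Prod.mk.injEq, funext_iff, forall_and]
    tauto
  have eC1 : ∀ w, ∑ v1', P3 (F3 w).1 v1' (F3 w).2.2
      = ∏ i, lossFam f1 pU0c pU1c pU2c p 9 (letter w i) := by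
    intro w
    have e := sum_marg_param (seqPMF p n) F3 (fun w => (w.2.2.2.2.2.2.1, w.2.2.1, w.2.2.2.1)) (fun w => w.2.2.2.2.2.1)
      (fun b : Fin n → U1 => ((F3 w).1, b, (F3 w).2.2)) ((fun w => (w.2.2.2.2.2.2.1, w.2.2.1, w.2.2.2.1)) w) (fun w' b => by
        simp only [F3, Prod.mk.injEq, Prod.ext_iff]; tauto)
    refine e.trans (marg_seqPMF p n (fun w => (w.2.2.2.2.2.2.1, w.2.2.1, w.2.2.2.1)) (fun ω => (kU2 ω, kZ ω, kT ω)) ?_ w)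
    intro w w'
    simp only [kU1, kU2, kZ, kT, letter, Prod.mk.injEq, funext_iff, forall_and]
  have eC2 : ∀ w, ∑ v2', P3 (F3 w).1 (F3 w).2.1 v2'
      = ∏ i, lossFam f1 pU0c pU1c pU2c p 8 (letter w i) := by
    intro w
    have e := sum_marg_param (seqPMF p n) F3 (fun w => (w.2.2.2.2.2.1, w.2.2.1, w.2.2.2.1)) (fun w => w.2.2.2.2.2.2.1)
      (fun b : Fin n → U2 => ((F3 w).1, (F3 w).2.1, b)) ((fun w => (w.2.2.2.2.2.1, w.2.2.1, w.2.2.2.1)) w) (fun w' b => by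
        simp only [F3, Prod.mk.injEq, Prod.ext_iff]; tauto)
    refine e.trans (marg_seqPMF p n (fun w => (w.2.2.2.2.2.1, w.2.2.1, w.2.2.2.1)) (fun ω => (kU1 ω, kZ ω, kT ω)) ?_ w)
    intro w w'
    simp only [kU1, kU2, kZ, kT, letter, Prod.mk.injEq, funext_iff, forall_and]
  have eC : ∀ w, ∑ v1', ∑ v2', P3 (F3 w).1 v1' v2'
      = ∏ i, lossFam f1 pU0c pU1c pU2c p 7 (letter w i) := by
    intro w
    rw [← Fintype.sum_prod_type' (f := fun v1' v2' => P3 (F3 w).1 v1' v2')]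
    have e := sum_marg_param (seqPMF p n) F3 (fun w => (w.2.2.1, w.2.2.2.1)) (fun w => (w.2.2.2.2.2.1, w.2.2.2.2.2.2.1))
      (fun b : (Fin n → U1) × (Fin n → U2) => ((F3 w).1, b.1, b.2)) ((fun w => (w.2.2.1, w.2.2.2.1)) w) (fun w' b => by
        simp only [F3, Prod.mk.injEq, Prod.ext_iff])
    refine e.trans (marg_seqPMF p n (fun w => (w.2.2.1, w.2.2.2.1)) (fun ω => (kZ ω, kT ω)) ?_ w)
    intro w w'
    simp only [kU1, kU2, kZ, kT, letter, Prod.mk.injEq, funext_iff, forall_and]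
  have := one_shot_padded (S1 := Fin S1) (S2 := Fin S2) (M1 := Fin M1) (M2 := Fin M2)
    (x1 := x1) (x2 := x2) (φ1 := φ1) (φ2 := φ2) (θ1 := θ1) (θ2 := θ2) (θ12 := θ12)
    (ψ1 := ψ1) (ψ2 := ψ2) (ψ12 := ψ12) (η1 := η) (η2 := η) (η3 := η)
    (s1 := S1) (s2 := S2) (m1 := M1) (m2 := M2)
    F1 F2 L1 L2 hF1 hF2 hL1 hL2
    (srcPMF q3 f1 pT pU0c n) (hc.srcPMF_pmf n)
    (fun ω => (ω.1, ω.2.2.2.2, ω.2.2.2.1)) (fun ω => (ω.2.1, ω.2.2.2.2, ω.2.2.2.1))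
    (fun ω => (ω.2.2.1, ω.2.2.2.1))
    (fun a v => ∏ i, pU1c (a.1 i) (a.2.1 i) (a.2.2 i) (v i))
    (fun a v => ∏ i, pU2c (a.1 i) (a.2.1 i) (a.2.2 i) (v i))
    (fun c v1 v2 y => ∏ i, pYc (v1 i) (v2 i) (c.1 i) (c.2 i) (y i))
    (fun a => IsPMF.pi fun i => hc.pU1 _ _ _) (fun a => IsPMF.pi fun i => hc.pU2 _ _ _)
    (fun a v1 v2 => IsPMF.pi fun i => hc.pY _ _ _ _)
    P (fun ω v1 v2 => rfl)
    (fun ω y v1 v2 => seqPMF p n (oct ω y v1 v2)) (fun ω y v1 v2 => hc.seqPMF_oct ω y v1 v2)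
    P3 ?_
    (hφ1 ▸ (two _).le) (hφ2 ▸ (two _).le) (hθ1 ▸ (two _).le) (hθ2 ▸ (two _).le)
    (hθ12 ▸ (two _).le) (hψ1 ▸ two _) (hψ2 ▸ two _) (hψ12 ▸ two _)
    (fun ω v1 v2 => (∏ i, pU1c (ω.1 i) (ω.2.2.2.2 i) (ω.2.2.2.1 i) (v1 i)) ≤ φ1 ∧
      (∏ i, pU2c (ω.2.1 i) (ω.2.2.2.2 i) (ω.2.2.2.1 i) (v2 i)) ≤ φ2)
    (fun ω y v1 v2 =>
      ∑ v2', seqPMF p n (oct ω y v1 v2') ≤ θ1 * ∑ v1', ∑ v2', seqPMF p n (oct ω y v1' v2') ∧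
      ∑ v1', seqPMF p n (oct ω y v1' v2) ≤ θ2 * ∑ v1', ∑ v2', seqPMF p n (oct ω y v1' v2') ∧
      seqPMF p n (oct ω y v1 v2) ≤ θ12 * ∑ v1', ∑ v2', seqPMF p n (oct ω y v1' v2'))
    (fun x v1 v2 => ψ1 * ∑ v1', P3 x v1' v2 ≤ P3 x v1 v2 ∧
      ψ2 * ∑ v2', P3 x v1 v2' ≤ P3 x v1 v2 ∧ ψ12 * ∑ v1', ∑ v2', P3 x v1' v2' ≤ P3 x v1 v2)
    (fun ω v1 v2 h => h.1) (fun ω v1 v2 h => h.2)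
    (fun ω y v1 v2 h => h.1) (fun ω y v1 v2 h => h.2.1) (fun ω y v1 v2 h => h.2.2)
    (fun x v1 v2 h => h.1) (fun x v1 v2 h => h.2.1) (fun x v1 v2 h => h.2.2)
    ?_ ?_ ?_ hx1 hx2 (by simp) (by simp) (by simp) (by simp)
  · simpa only [Fintype.card_fin] using this
  · intro x v1 v2
    change marg (seqPMF p n) F3 (x, v1, v2) = _
    rw [marg_param (seqPMF p n) F3 (x, v1, v2)
      (fun a : Src X1 X2 Z T U0 n × (Fin n → Y) => oct a.1 a.2 v1 v2)
      (by intro a b h; simpa [oct, Prod.ext_iff, and_assoc] using h)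
      (by
        rintro w h
        refine ⟨((w.1, w.2.1, w.2.2.1, w.2.2.2.1, w.2.2.2.2.1), w.2.2.2.2.2.2.2), ?_⟩
        simp only [F3, Prod.mk.injEq] at h
        rw [← h.2.1, ← h.2.2]
        rfl)]
    conv_lhs => rw [Fintype.sum_prod_type]
    refine sum_congr rfl fun ω _ => ?_
    have e : ∀ y, F3 (oct ω y v1 v2) = (x, v1, v2) ↔ (ω.2.2.1, ω.2.2.2.1) = x := by
      intro y; simp [F3, oct]
    simp only [e, hPy]
    split_ifs <;> simp
  · refine le_trans ?_ hη
    rw [← sum_oct_last (fun w => if Typical f1 pU0c pU1c pU2c p H n δ w then 0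
      else seqPMF p n w)]
    refine sum_le_sum fun ω _ => sum_le_sum fun v1 _ => sum_le_sum fun v2 _ => ?_
    split_ifs with hg
    · exact sum_nonneg fun y _ => by split_ifs; exacts [le_rfl, s0 _]
    · rw [hPy]
      refine sum_le_sum fun y _ => ?_
      split_ifs with ht
      · by_contra hn
        have hw : seqPMF p n (oct ω y v1 v2) ≠ 0 := fun h0 => hn h0.le
        exact hg ⟨hφ1 ▸ (hc.typical_bounds hw ht 1).2, hφ2 ▸ (hc.typical_bounds hw ht 2).2⟩
      · exact le_rfl
  · refine le_trans ?_ hη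
    rw [← sum_oct (fun w => if Typical f1 pU0c pU1c pU2c p H n δ w then 0
      else seqPMF p n w)]
    refine sum_le_sum fun ω _ => sum_le_sum fun y _ => sum_le_sum fun v1 _ =>
      sum_le_sum fun v2 _ => ?_
    split_ifs with hg ht ht
    · exact le_rfl
    · exact s0 _
    · by_contra hn
      have hw : seqPMF p n (oct ω y v1 v2) ≠ 0 := fun h0 => hn h0.le
      have b := fun j => hc.typical_bounds hw ht j
      have key : ∀ j, ∏ i, lossFam f1 pU0c pU1c pU2c p j (letter (oct ω y v1 v2) i)
          ≤ 2 ^ (-(n * (H j - H 3 - 2 * δ))) *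
            ∏ i, lossFam f1 pU0c pU1c pU2c p 3 (letter (oct ω y v1 v2) i) := by
        intro j
        refine (b j).2.trans (le_trans (le_of_eq ?_)
          (mul_le_mul_of_nonneg_left (b 3).1 (two _).le))
        rw [add2]
        congr 1
        ring
      refine hg ⟨?_, ?_, ?_⟩
      · rw [eW ω y v1 v2, eW1 ω y v1 v2, hθ1]; exact key 4
      · rw [eW ω y v1 v2, eW2 ω y v1 v2, hθ2]; exact key 5
      · rw [eW ω y v1 v2, eW12 ω y v1 v2, hθ12]; exact key 6
    · exact le_rfl
  · refine le_trans (le_of_eq ?_) ((tail_marg (seqPMF p n) s0 F3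
      (fun w => Typical f1 pU0c pU1c pU2c p H n δ w)
      (fun b => ψ1 * ∑ v1', P3 b.1 v1' b.2.2 ≤ P3 b.1 b.2.1 b.2.2 ∧
        ψ2 * ∑ v2', P3 b.1 b.2.1 v2' ≤ P3 b.1 b.2.1 b.2.2 ∧
        ψ12 * ∑ v1', ∑ v2', P3 b.1 v1' v2' ≤ P3 b.1 b.2.1 b.2.2) ?_).trans hη)
    · conv_rhs => rw [Fintype.sum_prod_type]
      refine sum_congr rfl fun x _ => ?_
      conv_rhs => rw [Fintype.sum_prod_type]
    · intro w hw ht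
      have b := fun j => hc.typical_bounds hw ht j
      have key : ∀ j, 2 ^ (-(n * (H 10 - H j + 2 * δ))) *
            ∏ i, lossFam f1 pU0c pU1c pU2c p j (letter w i)
          ≤ ∏ i, lossFam f1 pU0c pU1c pU2c p 10 (letter w i) := by
        intro j
        refine le_trans (mul_le_mul_of_nonneg_left (b j).2 (two _).le)
          (le_trans (le_of_eq ?_) (b 10).1)
        rw [add2]
        congr 1
        ring
      refine ⟨?_, ?_, ?_⟩
      · rw [eC12, eC1, hψ1]; exact key 9
      · rw [eC12, eC2, hψ2]; exact key 8
      · rw [eC12, eC, hψ12]; exact key 7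

end Block

/-! ### Removing the time-sharing variable and simulating `U₀` -/

/-- Fix the time-sharing variable, and replace the exact law `K` of `U₀` by one simulated from a
uniform variable on `Fin N` through `g`. -/
lemma derandomize {X Tn U Y : Type*} [Fintype X] [Fintype Tn] [Fintype U] [Fintype Y]
    [DecidableEq U] (N : ℕ)
    (pTn : Tn → ℝ) (hT : IsPMF pTn) (Q3 : X → ℝ) (hQ : IsPMF Q3) (K : X → Tn → U → ℝ)
    (A V : X → Tn → U → Y → ℝ) (hA : ∀ x t u, IsPMF (A x t u)) (g : X → Tn → Fin N → U)
    (ε : X → Tn → ℝ) {B η c : ℝ}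
    (bin : ∑ t, ∑ x, ∑ u, ∑ y, |pTn t * (Q3 x * K x t u * A x t u y) - pTn t * V x t u y| ≤ B)
    (res : ∀ x t, ∑ u, |∑ s, (N : ℝ)⁻¹ * (if g x t s = u then 1 else 0) - K x t u|
      ≤ 2 * (ε x t + c))
    (tail : ∑ t, ∑ x, pTn t * (Q3 x * ε x t) ≤ η) :
    ∃ t, ∑ x, ∑ y, |∑ s, (N : ℝ)⁻¹ * Q3 x * A x t (g x t s) y - ∑ u, V x t u y|
      ≤ B + 2 * (η + c) := by
  apply hT.exists_le
  have pt : ∀ t x y, |∑ s, (N : ℝ)⁻¹ * Q3 x * A x t (g x t s) y - ∑ u, V x t u y|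
      ≤ ∑ u, |Q3 x * K x t u * A x t u y - V x t u y|
        + Q3 x * ∑ u, |∑ s, (N : ℝ)⁻¹ * (if g x t s = u then 1 else 0) - K x t u| * A x t u y := by
    intro t x y
    have e : ∑ s, (N : ℝ)⁻¹ * Q3 x * A x t (g x t s) y
        = Q3 x * ∑ u, (∑ s, (N : ℝ)⁻¹ * (if g x t s = u then 1 else 0)) * A x t u y := by
      simp only [sum_mul, mul_sum]
      rw [sum_comm]
      refine sum_congr rfl fun s _ => ?_
      rw [sum_eq_single (g x t s)]
      · simp only [if_true]; ring
      · intro u _ hu; simp [Ne.symm hu]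
      · simp
    have e2 : ∑ s, (N : ℝ)⁻¹ * Q3 x * A x t (g x t s) y - ∑ u, V x t u y
        = ∑ u, (Q3 x * K x t u * A x t u y - V x t u y) + Q3 x * ∑ u,
          (∑ s, (N : ℝ)⁻¹ * (if g x t s = u then 1 else 0) - K x t u) * A x t u y := by
      rw [e, sum_sub_distrib, mul_sum, mul_sum]
      have : ∑ u, Q3 x * K x t u * A x t u y + ∑ u, Q3 x * ((∑ s, (N : ℝ)⁻¹ *
          (if g x t s = u then 1 else 0) - K x t u) * A x t u y) = ∑ u, Q3 x * ((∑ s, (N : ℝ)⁻¹ *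
          (if g x t s = u then 1 else 0)) * A x t u y) := by
        rw [← sum_add_distrib]
        exact sum_congr rfl fun u _ => by ring
      linarith
    rw [e2]
    refine (abs_add_le _ _).trans (add_le_add (abs_sum_le_sum_abs _ _) ?_)
    rw [abs_mul, abs_of_nonneg (hQ.1 x)]
    refine mul_le_mul_of_nonneg_left ((abs_sum_le_sum_abs _ _).trans (le_of_eq ?_)) (hQ.1 x)
    refine sum_congr rfl fun u _ => ?_
    rw [abs_mul, abs_of_nonneg ((hA x t u).1 y)]
  have hx : ∀ t x, ∑ y, |∑ s, (N : ℝ)⁻¹ * Q3 x * A x t (g x t s) y - ∑ u, V x t u y|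
      ≤ ∑ u, ∑ y, |Q3 x * K x t u * A x t u y - V x t u y| + Q3 x * (2 * (ε x t + c)) := by
    intro t x
    refine (sum_le_sum fun y _ => pt t x y).trans ?_
    rw [sum_add_distrib, sum_comm, ← mul_sum]
    refine add_le_add le_rfl (mul_le_mul_of_nonneg_left ?_ (hQ.1 x))
    rw [sum_comm]
    refine le_trans (le_of_eq (sum_congr rfl fun u _ => ?_)) (res x t)
    rw [← mul_sum, (hA x t u).2, mul_one]
  calc ∑ t, pTn t * ∑ x, ∑ y, |∑ s, (N : ℝ)⁻¹ * Q3 x * A x t (g x t s) y - ∑ u, V x t u y|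
      ≤ ∑ t, pTn t * ∑ x, (∑ u, ∑ y, |Q3 x * K x t u * A x t u y - V x t u y|
          + Q3 x * (2 * (ε x t + c))) :=
        sum_le_sum fun t _ => mul_le_mul_of_nonneg_left (sum_le_sum fun x _ => hx t x) (hT.1 t)
    _ = ∑ t, ∑ x, ∑ u, ∑ y, |pTn t * (Q3 x * K x t u * A x t u y) - pTn t * V x t u y|
        + 2 * (∑ t, ∑ x, pTn t * (Q3 x * ε x t) + c) := by
        have e1 : ∑ t, ∑ x, ∑ u, ∑ y, |pTn t * (Q3 x * K x t u * A x t u y) - pTn t * V x t u y|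
            = ∑ t, pTn t * ∑ x, ∑ u, ∑ y, |Q3 x * K x t u * A x t u y - V x t u y| := by
          simp only [mul_sum]
          refine sum_congr rfl fun t _ => sum_congr rfl fun x _ => sum_congr rfl fun u _ =>
            sum_congr rfl fun y _ => ?_
          rw [← mul_sub, abs_mul, abs_of_nonneg (hT.1 t)]
        have e2 : ∑ t, pTn t * ∑ x, Q3 x * (2 * (ε x t + c))
            = 2 * (∑ t, ∑ x, pTn t * (Q3 x * ε x t) + c) := by
          have : ∀ t, pTn t * ∑ x, Q3 x * (2 * (ε x t + c))
              = 2 * ∑ x, pTn t * (Q3 x * ε x t) + pTn t * (2 * c) := by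
            intro t
            have : ∀ x, Q3 x * (2 * (ε x t + c)) = 2 * (Q3 x * ε x t) + Q3 x * (2 * c) :=
              fun x => by ring
            simp only [this, sum_add_distrib, ← sum_mul, hQ.2, ← mul_sum]
            ring
          simp only [this, sum_add_distrib, ← sum_mul, hT.2, ← mul_sum]
          ring
        rw [e1, ← e2, ← sum_add_distrib]
        exact sum_congr rfl fun t _ => by rw [sum_add_distrib, mul_add]
    _ ≤ B + 2 * (η + c) := by linarith

lemma sum_pi_prod3 {A B C : Type*} [Fintype A] [Fintype B] [Fintype C] {n : ℕ}
    (h : Fin n → A → B → C → ℝ) :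
    ∑ u : Fin n → A, ∑ v : Fin n → B, ∑ w : Fin n → C, ∏ i, h i (u i) (v i) (w i)
      = ∏ i, ∑ a, ∑ b, ∑ c, h i a b c := by
  classical
  rw [← sum_pi_prod (fun i a => ∑ b, ∑ c, h i a b c)]
  refine sum_congr rfl fun u _ => ?_
  rw [← sum_pi_prod (fun i b => ∑ c, h i (u i) b c)]
  refine sum_congr rfl fun v _ => ?_
  rw [← sum_pi_prod (fun i c => h i (u i) (v i) c)]

/-! ### Block codes -/

section BlockCode

set_option synthInstance.maxSize 1000

variable {X1 X2 Z Y X0 T U0 U1 U2 : Type}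
    [Fintype X1] [Fintype X2] [Fintype Z] [Fintype Y]
    [Fintype T] [Fintype U0] [Fintype U1] [Fintype U2]
    [DecidableEq X1] [DecidableEq X2] [DecidableEq Z] [DecidableEq Y]
    [DecidableEq T] [DecidableEq U0] [DecidableEq U1] [DecidableEq U2]
    {q3 : X1 × X2 × Z → ℝ} {f1 : X1 → X0} {pT : T → ℝ} {pU0c : X0 → T → U0 → ℝ}
    {pU1c : X1 → U0 → T → U1 → ℝ} {pU2c : X2 → U0 → T → U2 → ℝ}
    {pYc : U1 → U2 → Z → T → Y → ℝ} {p : X1 × X2 × Z × T × U0 × U1 × U2 × Y → ℝ}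

lemma sum_src {n : ℕ} (f : Src X1 X2 Z T U0 n → ℝ) :
    ∑ t : Fin n → T, ∑ x : (Fin n → X1) × (Fin n → X2) × (Fin n → Z), ∑ u : Fin n → U0,
      f (x.1, x.2.1, x.2.2, t, u) = ∑ ω, f ω := by
  simp only [Fintype.sum_prod_type]
  rw [sum_comm]
  refine sum_congr rfl fun x1 _ => ?_
  rw [sum_comm]
  refine sum_congr rfl fun x2 _ => ?_
  rw [sum_comm]

lemma srcPMF_eq {n : ℕ} (x : (Fin n → X1) × (Fin n → X2) × (Fin n → Z)) (t : Fin n → T)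
    (u : Fin n → U0) : srcPMF q3 f1 pT pU0c n (x.1, x.2.1, x.2.2, t, u)
      = (∏ i, pT (t i)) * ((∏ i, q3 (x.1 i, x.2.1 i, x.2.2 i)) *
        ∏ i, pU0c (f1 (x.1 i)) (t i) (u i)) := by
  unfold srcPMF
  rw [← prod_mul_distrib, ← prod_mul_distrib]
  exact prod_congr rfl fun i _ => by ring

open Classical in
/-- The blocks on which `U₀ⁿ` is too unlikely given `X₀ⁿ` and `Tⁿ` are atypical. -/
lemma FactorsAs.tail_U0 (hc : FactorsAs q3 f1 pT pU0c pU1c pU2c pYc p)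
    (H : Fin 11 → ℝ) (n : ℕ) (δ η : ℝ)
    (hη : ∑ w, (if Typical f1 pU0c pU1c pU2c p H n δ w then 0 else seqPMF p n w) ≤ η) :
    ∑ ω : Src X1 X2 Z T U0 n, (if ∏ i, pU0c (f1 (ω.1 i)) (ω.2.2.2.1 i) (ω.2.2.2.2 i)
      < (2:ℝ) ^ (-(n * (H 0 + δ))) then srcPMF q3 f1 pT pU0c n ω else 0) ≤ η := by
  refine le_trans ?_ hη
  rw [← sum_oct_last]
  refine sum_le_sum fun ω _ => ?_
  have h1 := (IsPMF.pi fun i => hc.pU1 (ω.1 i) (ω.2.2.2.2 i) (ω.2.2.2.1 i)).2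
  have h2 := (IsPMF.pi fun i => hc.pU2 (ω.2.1 i) (ω.2.2.2.2 i) (ω.2.2.2.1 i)).2
  have hY := fun v1 v2 : Fin n → _ =>
    (IsPMF.pi fun i => hc.pY (v1 i) (v2 i) (ω.2.2.1 i) (ω.2.2.2.1 i)).2
  have e : srcPMF q3 f1 pT pU0c n ω = ∑ v1, ∑ v2, ∑ y, seqPMF p n (oct ω y v1 v2) := by
    simp only [hc.seqPMF_oct, ← mul_sum, hY, h2, mul_one, h1]
  have s0 : ∀ w, 0 ≤ seqPMF p n w := (seqPMF_pmf p hc.pmf n).1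
  split_ifs with hlt
  · rw [e]
    refine sum_le_sum fun v1 _ => sum_le_sum fun v2 _ => sum_le_sum fun y _ => ?_
    by_cases hz : seqPMF p n (oct ω y v1 v2) = 0
    · rw [hz]; split_ifs <;> exact le_rfl
    · rw [if_neg]
      intro ht
      exact absurd (hc.typical_bounds hz ht 0).1 (not_le.2 hlt)
  · refine sum_nonneg fun v1 _ => sum_nonneg fun v2 _ => sum_nonneg fun y _ => ?_
    split_ifs
    · exact le_rfl
    · exact s0 _

open Classical in
/-- A binning scheme for `U₁ⁿ` and `U₂ⁿ` becomes a code: `Tⁿ` is fixed to a good value, and both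
encoders compute the same `U₀ⁿ` from the common component and the shared randomness. -/
lemma FactorsAs.block_code (hc : FactorsAs q3 f1 pT pU0c pU1c pU2c pYc p)
    (f2 : X2 → X0) (hcommon : ∀ x1 x2 z, q3 (x1, x2, z) ≠ 0 → f1 x1 = f2 x2)
    (q : X1 × X2 × Z × Y → ℝ)
    (hcons : ∀ t x1 x2 z y,
      (∑ u0 : U0, ∑ u1 : U1, ∑ u2 : U2,
        q3 (x1, x2, z) * pU0c (f1 x1) t u0 * pU1c x1 u0 t u1 *
          pU2c x2 u0 t u2 * pYc u1 u2 z t y) = q (x1, x2, z, y))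
    (H : Fin 11 → ℝ) (n : ℕ) (δ η B : ℝ)
    (hη : ∑ w, (if Typical f1 pU0c pU1c pU2c p H n δ w then 0 else seqPMF p n w) ≤ η)
    (N S1 S2 M1 M2 : ℕ) (hN : 0 < N) (hS1 : 0 < S1) (hS2 : 0 < S2)
    (e1 : Fin S1 → ((Fin n → X1) × (Fin n → U0) × (Fin n → T)) → Fin M1 → ℝ)
    (e2 : Fin S2 → ((Fin n → X2) × (Fin n → U0) × (Fin n → T)) → Fin M2 → ℝ)
    (D : Fin S1 → Fin S2 → Fin M1 → Fin M2 → ((Fin n → Z) × (Fin n → T)) → (Fin n → Y) → ℝ)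
    (he1 : ∀ s a, IsPMF (e1 s a)) (he2 : ∀ s a, IsPMF (e2 s a))
    (hD : ∀ s1 s2 m1 m2 c, IsPMF (D s1 s2 m1 m2 c))
    (bin : ∑ ω : Src X1 X2 Z T U0 n, ∑ y,
        |∑ s1, ∑ s2, ∑ m1, ∑ m2, (S1 : ℝ)⁻¹ * (S2 : ℝ)⁻¹ * srcPMF q3 f1 pT pU0c n ω *
            e1 s1 (ω.1, ω.2.2.2.2, ω.2.2.2.1) m1 * e2 s2 (ω.2.1, ω.2.2.2.2, ω.2.2.2.1) m2 *
            D s1 s2 m1 m2 (ω.2.2.1, ω.2.2.2.1) y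
          - ∑ v1, ∑ v2, seqPMF p n (oct ω y v1 v2)| ≤ B) :
    ∃ (enc1 : Fin N → Fin S1 → (Fin n → X1) → Fin M1 → ℝ)
      (enc2 : Fin N → Fin S2 → (Fin n → X2) → Fin M2 → ℝ)
      (dec : Fin S1 → Fin S2 → Fin M1 → Fin M2 → (Fin n → Z) → (Fin n → Y) → ℝ),
      (∀ s0 s1 x, IsPMF (enc1 s0 s1 x)) ∧ (∀ s0 s2 x, IsPMF (enc2 s0 s2 x)) ∧
      (∀ s1 s2 m1 m2 z, IsPMF (dec s1 s2 m1 m2 z)) ∧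
      ∑ x : (Fin n → X1) × (Fin n → X2) × (Fin n → Z), ∑ y : Fin n → Y,
        |∑ s0, ∑ s1, ∑ s2, ∑ m1, ∑ m2, ((N : ℝ) * (S1 : ℝ) * (S2 : ℝ))⁻¹ *
            (∏ i, q3 (x.1 i, x.2.1 i, x.2.2 i)) *
            enc1 s0 s1 x.1 m1 * enc2 s0 s2 x.2.1 m2 * dec s1 s2 m1 m2 x.2.2 y
          - ∏ i, q (x.1 i, x.2.1 i, x.2.2 i, y i)|
        ≤ B + 2 * (η + (N * (2:ℝ) ^ (-(n * (H 0 + δ))))⁻¹) := by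
  set τ : ℝ := (2:ℝ) ^ (-(n * (H 0 + δ))) with hτd
  have hτ : 0 < τ := Real.rpow_pos_of_pos two_pos _
  choose G hG using fun (a : Fin n → X0) (t : Fin n → T) =>
    exists_resolve (fun u : Fin n → U0 => ∏ i, pU0c (a i) (t i) (u i))
      (IsPMF.pi fun i => hc.pU0 (a i) (t i)) N hN τ hτ
  have hQ : IsPMF (fun x : (Fin n → X1) × (Fin n → X2) × (Fin n → Z) =>
      ∏ i, q3 (x.1 i, x.2.1 i, x.2.2 i)) := by
    refine ⟨fun x => prod_nonneg fun i _ => hc.pq3.1 _, ?_⟩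
    simp only [Fintype.sum_prod_type]
    rw [sum_pi_prod3 (fun _ a b c => q3 (a, b, c))]
    have := hc.pq3.2
    simp only [Fintype.sum_prod_type] at this
    simp [this]
  have hS1' : (S1 : ℝ) ≠ 0 := by exact_mod_cast hS1.ne'
  have hS2' : (S2 : ℝ) ≠ 0 := by exact_mod_cast hS2.ne'
  refine Exists.elim (derandomize N (fun t : Fin n → T => ∏ i, pT (t i))
    (IsPMF.pi fun _ => hc.ppT) _ hQ
    (fun x t (u : Fin n → U0) => ∏ i, pU0c (f1 (x.1 i)) (t i) (u i))
    (fun x t u y => ∑ s1, ∑ s2, ∑ m1, ∑ m2, (S1 : ℝ)⁻¹ * (S2 : ℝ)⁻¹ *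
      e1 s1 (x.1, u, t) m1 * e2 s2 (x.2.1, u, t) m2 * D s1 s2 m1 m2 (x.2.2, t) y)
    (fun x t u y => ∑ v1 : Fin n → U1, ∑ v2 : Fin n → U2, ∏ i, q3 (x.1 i, x.2.1 i, x.2.2 i) *
      pU0c (f1 (x.1 i)) (t i) (u i) * pU1c (x.1 i) (u i) (t i) (v1 i) *
      pU2c (x.2.1 i) (u i) (t i) (v2 i) * pYc (v1 i) (v2 i) (x.2.2 i) (t i) (y i))
    ?_ (fun x t => G (fun i => f1 (x.1 i)) t)
    (fun x t => ∑ u : Fin n → U0, if ∏ i, pU0c (f1 (x.1 i)) (t i) (u i) < τ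
      then ∏ i, pU0c (f1 (x.1 i)) (t i) (u i) else 0)
    (B := B) (η := η) (c := (N * τ)⁻¹) ?_ (fun x t => hG _ t) ?_)
    fun t ht => ?_
  rotate_left 3
  · refine ⟨fun s0 s1 x => e1 s1 (x, G (fun i => f1 (x i)) t s0, t),
      fun s0 s2 x => e2 s2 (x, G (fun i => f2 (x i)) t s0, t),
      fun s1 s2 m1 m2 z => D s1 s2 m1 m2 (z, t), fun _ _ _ => he1 _ _, fun _ _ _ => he2 _ _,
      fun _ _ _ _ _ => hD _ _ _ _ _, le_trans (le_of_eq ?_) ht⟩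
    refine sum_congr rfl fun x _ => sum_congr rfl fun y _ => ?_
    congr 2
    · refine sum_congr rfl fun s0 _ => ?_
      simp only [mul_sum]
      refine sum_congr rfl fun s1 _ => sum_congr rfl fun s2 _ => sum_congr rfl fun m1 _ =>
        sum_congr rfl fun m2 _ => ?_
      by_cases hz : ∏ i, q3 (x.1 i, x.2.1 i, x.2.2 i) = 0
      · simp [hz]
      · have hx : (fun i => f2 (x.2.1 i)) = fun i => f1 (x.1 i) :=
          funext fun i => (hcommon _ _ _ (prod_ne_zero_iff.1 hz i (mem_univ i))).symm
        rw [hx, mul_inv, mul_inv]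
        ring
    · rw [sum_pi_prod3 (fun i a b c => q3 (x.1 i, x.2.1 i, x.2.2 i) *
        pU0c (f1 (x.1 i)) (t i) a * pU1c (x.1 i) a (t i) b *
        pU2c (x.2.1 i) a (t i) c * pYc b c (x.2.2 i) (t i) (y i))]
      exact prod_congr rfl fun i _ => (hcons _ _ _ _ _).symm
  · intro x t u
    refine ⟨fun y => sum_nonneg fun s1 _ => sum_nonneg fun s2 _ => sum_nonneg fun m1 _ =>
      sum_nonneg fun m2 _ => mul_nonneg (mul_nonneg (mul_nonneg (by positivity)
        ((he1 _ _).1 _)) ((he2 _ _).1 _)) ((hD _ _ _ _ _).1 _), ?_⟩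
    rw [sum_comm]
    have : ∀ s1, ∑ y, ∑ s2, ∑ m1, ∑ m2, (S1 : ℝ)⁻¹ * (S2 : ℝ)⁻¹ *
        e1 s1 (x.1, u, t) m1 * e2 s2 (x.2.1, u, t) m2 * D s1 s2 m1 m2 (x.2.2, t) y
        = (S1 : ℝ)⁻¹ := by
      intro s1
      rw [sum_comm]
      have : ∀ s2, ∑ y, ∑ m1, ∑ m2, (S1 : ℝ)⁻¹ * (S2 : ℝ)⁻¹ *
          e1 s1 (x.1, u, t) m1 * e2 s2 (x.2.1, u, t) m2 * D s1 s2 m1 m2 (x.2.2, t) y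
          = (S1 : ℝ)⁻¹ * (S2 : ℝ)⁻¹ := by
        intro s2
        rw [sum_comm, sum_congr rfl fun m1 _ => sum_comm]
        simp only [← mul_sum, (hD _ _ _ _ _).2, (he2 _ _).2, (he1 _ _).2, mul_one]
      simp only [this, sum_const, card_univ, Fintype.card_fin, nsmul_eq_mul]
      field_simp
    simp only [this, sum_const, card_univ, Fintype.card_fin, nsmul_eq_mul]
    field_simp
  · refine le_trans (le_of_eq ?_) bin
    rw [← sum_src]
    refine sum_congr rfl fun t _ => sum_congr rfl fun x _ => sum_congr rfl fun u _ =>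
      sum_congr rfl fun y _ => ?_
    congr 2
    · simp only [srcPMF_eq, mul_sum]
      refine sum_congr rfl fun s1 _ => sum_congr rfl fun s2 _ => sum_congr rfl fun m1 _ =>
        sum_congr rfl fun m2 _ => ?_
      ring
    · simp only [hc.seqPMF_oct, srcPMF_eq, mul_sum]
      refine sum_congr rfl fun v1 _ => sum_congr rfl fun v2 _ => ?_
      simp only [prod_mul_distrib]
      ring
  · refine le_trans (le_of_eq ?_) (hc.tail_U0 H n δ η hη)
    rw [← sum_src]
    refine sum_congr rfl fun t _ => sum_congr rfl fun x _ => ?_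
    rw [mul_sum, mul_sum]
    refine sum_congr rfl fun u _ => ?_
    rw [srcPMF_eq]
    simp only [mul_ite, mul_zero]
    rfl

end BlockCode

/-! ### Choice of the binning rates -/

/-- Fourier–Motzkin elimination: under strict rate inequalities there are binning rates
`r₁, r₂` satisfying all constraints of the binning argument with a margin `3δ`, which absorbs
the typicality error of at most `2δ` in each exponent. The rates may be negative. -/
lemma exists_rates {a1 a2 b1 b2 b12 c1 c2 c12 R1 R2 R01 R02 : ℝ}
    (hR01 : 0 ≤ R01) (hR02 : 0 ≤ R02)
    (h1 : c1 - a1 < R1) (h2 : c2 - a2 < R2) (h3 : c12 - a1 - a2 < R1 + R2)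
    (h4 : c1 - b1 < R1 + R01) (h5 : c2 - b2 < R2 + R02) (h6 : c12 - b1 - a2 < R1 + R2 + R01)
    (h7 : c12 - b2 - a1 < R1 + R2 + R02) (h8 : c12 - b12 < R1 + R2 + R01 + R02)
    (hcc : c1 + c2 ≤ c12) (hb1 : b12 ≤ b1 + b2) :
    ∃ r1 r2 δ : ℝ, 0 < δ ∧ r1 + 3 * δ ≤ b1 ∧ r2 + 3 * δ ≤ b2 ∧ r1 + r2 + 3 * δ ≤ b12 ∧
      r1 + R01 + 3 * δ ≤ a1 ∧ r2 + R02 + 3 * δ ≤ a2 ∧ c1 + 3 * δ ≤ R1 + R01 + r1 ∧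
      c2 + 3 * δ ≤ R2 + R02 + r2 ∧ c12 + 3 * δ ≤ R1 + R2 + R01 + R02 + r1 + r2 := by
  obtain ⟨u1, hu1⟩ : ∃ u, u = min b1 (a1 - R01) := ⟨_, rfl⟩
  obtain ⟨u2, hu2⟩ : ∃ u, u = min b2 (a2 - R02) := ⟨_, rfl⟩
  obtain ⟨l1, hl1⟩ : ∃ l, l = c1 - R1 - R01 := ⟨_, rfl⟩
  obtain ⟨l2, hl2⟩ : ∃ l, l = c2 - R2 - R02 := ⟨_, rfl⟩
  obtain ⟨ls, hls⟩ : ∃ l, l = c12 - R1 - R2 - R01 - R02 := ⟨_, rfl⟩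
  have k1 : l1 < u1 := by rw [hu1]; exact lt_min (by linarith) (by linarith)
  have k2 : l2 < u2 := by rw [hu2]; exact lt_min (by linarith) (by linarith)
  have ks : ls < u1 + u2 := by
    rw [hu1, hu2]
    rcases min_cases b1 (a1 - R01) with h | h <;> rcases min_cases b2 (a2 - R02) with h' | h' <;>
      rw [h.1, h'.1] <;> linarith
  have hll : l1 + l2 ≤ ls := by linarith
  obtain ⟨s, hs1, hs2⟩ := exists_between (show ls < min b12 (u1 + u2) from
    lt_min (by linarith) ks)
  have hsb := hs2.trans_le (min_le_left _ _)
  have hsu := hs2.trans_le (min_le_right _ _)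
  obtain ⟨r1, hr1, hr1'⟩ := exists_between (show max l1 (s - u2) < min u1 (s - l2) from
    max_lt (lt_min k1 (by linarith)) (lt_min (by linarith) (by linarith)))
  have g1 := (le_max_left _ _).trans_lt hr1
  have g2 := (le_max_right _ _).trans_lt hr1
  have g3 := hr1'.trans_le (min_le_left _ _)
  have g4 := hr1'.trans_le (min_le_right _ _)
  have m1 : u1 ≤ b1 := hu1 ▸ min_le_left _ _
  have m2 : u1 ≤ a1 - R01 := hu1 ▸ min_le_right _ _
  have m3 : u2 ≤ b2 := hu2 ▸ min_le_left _ _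
  have m4 : u2 ≤ a2 - R02 := hu2 ▸ min_le_right _ _
  obtain ⟨d, hd⟩ : ∃ d, d = min (min (u1 - r1) (u2 - (s - r1)))
    (min (min (b12 - s) (s - ls)) (min (r1 - l1) (s - r1 - l2))) := ⟨_, rfl⟩
  have hd0 : 0 < d := by
    rw [hd]
    refine lt_min (lt_min ?_ ?_) (lt_min (lt_min ?_ ?_) (lt_min ?_ ?_)) <;> linarith
  have d1 : d ≤ u1 - r1 := hd ▸ (min_le_left _ _).trans (min_le_left _ _)
  have d2 : d ≤ u2 - (s - r1) := hd ▸ (min_le_left _ _).trans (min_le_right _ _)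
  have d3 : d ≤ b12 - s := hd ▸ (min_le_right _ _).trans ((min_le_left _ _).trans (min_le_left _ _))
  have d4 : d ≤ s - ls := hd ▸ (min_le_right _ _).trans ((min_le_left _ _).trans (min_le_right _ _))
  have d5 : d ≤ r1 - l1 :=
    hd ▸ (min_le_right _ _).trans ((min_le_right _ _).trans (min_le_left _ _))
  have d6 : d ≤ s - r1 - l2 :=
    hd ▸ (min_le_right _ _).trans ((min_le_right _ _).trans (min_le_right _ _))
  refine ⟨r1, s - r1, d / 3, by linarith, ?_, ?_, ?_, ?_, ?_, ?_, ?_, ?_⟩ <;> linarith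

/-! ### Sizes of the index sets -/

lemma two_rpow_le_cnum (n : ℕ) (R : ℝ) : (2:ℝ) ^ ((n:ℝ) * R) ≤ cnum n R := Nat.le_ceil _

lemma cnum_pos (n : ℕ) (R : ℝ) : 0 < cnum n R :=
  Nat.ceil_pos.2 (Real.rpow_pos_of_pos two_pos _)

/-- At a negative rate the index set is still nonempty. -/
lemma cnum_max (n : ℕ) (R : ℝ) : cnum n R = cnum n (max R 0) := by
  rcases le_total 0 R with h | h
  · rw [max_eq_left h]
  · rw [max_eq_right h]
    have h1 : (2:ℝ) ^ ((n:ℝ) * R) ≤ 1 := Real.rpow_le_one_of_one_le_of_nonpos one_le_two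
      (mul_nonpos_of_nonneg_of_nonpos (Nat.cast_nonneg _) h)
    have h2 : cnum n R ≤ 1 := Nat.ceil_le.2 (by simpa using h1)
    have h3 : cnum n (0:ℝ) = 1 := by simp [cnum]
    have := cnum_pos n R
    omega

lemma cnum_le (n : ℕ) {R : ℝ} (hR : 0 ≤ R) : (cnum n R : ℝ) ≤ 2 * (2:ℝ) ^ ((n:ℝ) * R) := by
  have h1 : 1 ≤ (2:ℝ) ^ ((n:ℝ) * R) :=
    Real.one_le_rpow one_le_two (mul_nonneg (Nat.cast_nonneg _) hR)
  have := (Nat.ceil_lt_add_one (show 0 ≤ (2:ℝ) ^ ((n:ℝ) * R) by positivity)).le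
  unfold cnum
  linarith

/-- Two index sets of rates `r + ℓ` and `ℓ` have size ratio about `2 ^ (n r)`. -/
lemma cnum_ratio (n : ℕ) {r l : ℝ} (hl : 0 ≤ l) (hr : 0 ≤ r + l) :
    (2:ℝ) ^ ((n:ℝ) * r) / 2 ≤ (cnum n (r + l) : ℝ) / cnum n l ∧
      (cnum n (r + l) : ℝ) / cnum n l ≤ 2 * (2:ℝ) ^ ((n:ℝ) * r) := by
  have p1 : (0:ℝ) < cnum n l := by exact_mod_cast cnum_pos n l
  have e : (2:ℝ) ^ ((n:ℝ) * (r + l)) = (2:ℝ) ^ ((n:ℝ) * r) * (2:ℝ) ^ ((n:ℝ) * l) := by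
    rw [← Real.rpow_add two_pos]; ring_nf
  have q1 : (0:ℝ) < (2:ℝ) ^ ((n:ℝ) * r) := Real.rpow_pos_of_pos two_pos _
  constructor
  · rw [le_div_iff₀ p1]
    have h1 := two_rpow_le_cnum n (r + l)
    have h2 := mul_le_mul_of_nonneg_left (cnum_le n hl) q1.le
    rw [e] at h1
    linarith
  · rw [div_le_iff₀ p1]
    have h1 := cnum_le n hr
    have h2 := mul_le_mul_of_nonneg_left (two_rpow_le_cnum n l) q1.le
    rw [e] at h1
    linarith

set_option maxHeartbeats 1000000 in
/-- With index sets of the prescribed rates, the error terms of the binning argument are at most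
constant multiples of `2 ^ (-n δ)`. -/
lemma error_terms {n : ℕ} {δ r1 r2 R1 R2 R00 S1' S2' a0 a1 a2 b1 b2 b12 c1 c2 c12 : ℝ}
    {x1 x2 S1 S2 M1 M2 N : ℝ} (hδ : 0 < δ)
    (hr1 : r1 + 3 * δ ≤ b1) (hr2 : r2 + 3 * δ ≤ b2) (hr12 : r1 + r2 + 3 * δ ≤ b12)
    (hs1 : r1 + S1' + 3 * δ ≤ a1) (hs2 : r2 + S2' + 3 * δ ≤ a2)
    (hm1 : c1 + 3 * δ ≤ R1 + S1' + r1) (hm2 : c2 + 3 * δ ≤ R2 + S2' + r2)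
    (hm12 : c12 + 3 * δ ≤ R1 + R2 + S1' + S2' + r1 + r2) (h0 : a0 + 3 * δ ≤ R00)
    (hx1 : (2:ℝ) ^ ((n:ℝ) * r1) / 2 ≤ x1) (hx1' : x1 ≤ 2 * (2:ℝ) ^ ((n:ℝ) * r1))
    (hx2 : (2:ℝ) ^ ((n:ℝ) * r2) / 2 ≤ x2) (hx2' : x2 ≤ 2 * (2:ℝ) ^ ((n:ℝ) * r2))
    (hS1 : (2:ℝ) ^ ((n:ℝ) * S1') ≤ S1) (hS1' : S1 ≤ 2 * (2:ℝ) ^ ((n:ℝ) * S1'))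
    (hS2 : (2:ℝ) ^ ((n:ℝ) * S2') ≤ S2) (hS2' : S2 ≤ 2 * (2:ℝ) ^ ((n:ℝ) * S2'))
    (hM1 : (2:ℝ) ^ ((n:ℝ) * R1) ≤ M1) (hM2 : (2:ℝ) ^ ((n:ℝ) * R2) ≤ M2)
    (hN : (2:ℝ) ^ ((n:ℝ) * R00) ≤ N)
    {φ1 φ2 θ1 θ2 θ12 ψ1 ψ2 ψ12 τ E : ℝ}
    (hφ1 : φ1 = 2 ^ (-(n * (a1 - δ)))) (hφ2 : φ2 = 2 ^ (-(n * (a2 - δ))))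
    (hθ1 : θ1 = 2 ^ (-(n * (b1 - 2 * δ)))) (hθ2 : θ2 = 2 ^ (-(n * (b2 - 2 * δ))))
    (hθ12 : θ12 = 2 ^ (-(n * (b12 - 2 * δ))))
    (hψ1 : ψ1 = 2 ^ (-(n * (c1 + 2 * δ)))) (hψ2 : ψ2 = 2 ^ (-(n * (c2 + 2 * δ))))
    (hψ12 : ψ12 = 2 ^ (-(n * (c12 + 2 * δ)))) (hτ : τ = 2 ^ (-(n * (a0 + δ))))
    (hE : E = 2 ^ (-(n * δ))) :
    x1 * S1 * φ1 + x2 * S2 * φ2 + (x1 * S1 * φ1) * (x2 * S2 * φ2) ≤ 24 * E ∧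
      (x1 * S1 * M1 * ψ1)⁻¹ + (x2 * S2 * M2 * ψ2)⁻¹ +
        (x1 * S1 * M1 * (x2 * S2 * M2) * ψ12)⁻¹ ≤ 8 * E ∧
      x1 * θ1 + x2 * θ2 + x1 * x2 * θ12 ≤ 8 * E ∧ (N * τ)⁻¹ ≤ E := by
  have two : ∀ x : ℝ, (0:ℝ) < 2 ^ x := fun x => Real.rpow_pos_of_pos two_pos x
  have add2 : ∀ x y : ℝ, (2:ℝ) ^ x * 2 ^ y = 2 ^ (x + y) := fun x y =>
    (Real.rpow_add two_pos x y).symm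
  have mono : ∀ {x y : ℝ}, x ≤ y → (2:ℝ) ^ ((n:ℝ) * x) ≤ 2 ^ ((n:ℝ) * y) := fun h =>
    Real.rpow_le_rpow_of_exponent_le one_le_two (mul_le_mul_of_nonneg_left h (Nat.cast_nonneg _))
  have nneg : ∀ x : ℝ, -((n:ℝ) * x) = n * (-x) := fun x => by ring
  rw [nneg] at hφ1 hφ2 hθ1 hθ2 hθ12 hψ1 hψ2 hψ12 hτ hE
  have E0 : 0 < E := hE ▸ two _
  have E1 : E ≤ 1 := by
    rw [hE]
    have := mono (show -δ ≤ 0 by linarith)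
    simpa using this
  have px1 : 0 < x1 := lt_of_lt_of_le (half_pos (two _)) hx1
  have px2 : 0 < x2 := lt_of_lt_of_le (half_pos (two _)) hx2
  have pS1 : 0 < S1 := lt_of_lt_of_le (two _) hS1
  have pS2 : 0 < S2 := lt_of_lt_of_le (two _) hS2
  have pM1 : 0 < M1 := lt_of_lt_of_le (two _) hM1
  have pM2 : 0 < M2 := lt_of_lt_of_le (two _) hM2
  have pN : 0 < N := lt_of_lt_of_le (two _) hN
  -- an upper bound on a product of two factors
  have up : ∀ {x y s a b : ℝ}, 0 ≤ y → 0 ≤ s → x ≤ s * 2 ^ ((n:ℝ) * a) → y = 2 ^ ((n:ℝ) * b) →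
      a + b ≤ -δ → x * y ≤ s * E := by
    intro x y s a b hy hs hx he hab
    calc x * y ≤ s * 2 ^ ((n:ℝ) * a) * y := mul_le_mul_of_nonneg_right hx hy
      _ = s * 2 ^ ((n:ℝ) * (a + b)) := by rw [he, mul_assoc, add2]; ring_nf
      _ ≤ s * E := by rw [hE]; exact mul_le_mul_of_nonneg_left (mono hab) hs
  have low : ∀ {x y s a b : ℝ}, 0 ≤ y → 0 < s → s * 2 ^ ((n:ℝ) * a) ≤ x → y = 2 ^ ((n:ℝ) * b) →
      δ ≤ a + b → (x * y)⁻¹ ≤ s⁻¹ * E := by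
    intro x y s a b hy hs hx he hab
    have h1 : s * 2 ^ ((n:ℝ) * δ) ≤ x * y := by
      calc s * 2 ^ ((n:ℝ) * δ) ≤ s * 2 ^ ((n:ℝ) * (a + b)) :=
            mul_le_mul_of_nonneg_left (mono hab) hs.le
        _ = s * 2 ^ ((n:ℝ) * a) * y := by rw [he, mul_assoc, add2]; ring_nf
        _ ≤ x * y := mul_le_mul_of_nonneg_right hx hy
    refine (inv_anti₀ (mul_pos hs (two _)) h1).trans (le_of_eq ?_)
    rw [mul_inv, hE, ← nneg, Real.rpow_neg two_pos.le]
  have pr : ∀ {x y s t a b : ℝ}, 0 ≤ y → 0 ≤ s → x ≤ s * 2 ^ ((n:ℝ) * a) →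
      y ≤ t * 2 ^ ((n:ℝ) * b) → x * y ≤ (s * t) * 2 ^ ((n:ℝ) * (a + b)) := by
    intro x y s t a b hy hs hx hy'
    refine (mul_le_mul hx hy' hy (mul_nonneg hs (two _).le)).trans (le_of_eq ?_)
    rw [mul_add, ← add2]; ring
  have prl : ∀ {x y s t a b : ℝ}, 0 ≤ s → 0 ≤ t → s * 2 ^ ((n:ℝ) * a) ≤ x →
      t * 2 ^ ((n:ℝ) * b) ≤ y → (s * t) * 2 ^ ((n:ℝ) * (a + b)) ≤ x * y := by
    intro x y s t a b hs ht hx hy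
    refine le_trans (le_of_eq ?_)
      (mul_le_mul hx hy (mul_nonneg ht (two _).le) ((mul_nonneg hs (two _).le).trans hx))
    rw [mul_add, ← add2]; ring
  have one : ∀ {x a : ℝ}, (2:ℝ) ^ ((n:ℝ) * a) ≤ x → 1 * (2:ℝ) ^ ((n:ℝ) * a) ≤ x :=
    fun h => by rwa [one_mul]
  have half : ∀ {x a : ℝ}, (2:ℝ) ^ ((n:ℝ) * a) / 2 ≤ x → (1/2) * (2:ℝ) ^ ((n:ℝ) * a) ≤ x :=
    fun h => by linarith
  have q1 := prl (by norm_num) zero_le_one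
    (prl (by norm_num) zero_le_one (half hx1) (one hS1)) (one hM1)
  have q2 := prl (by norm_num) zero_le_one
    (prl (by norm_num) zero_le_one (half hx2) (one hS2)) (one hM2)
  have q12 := prl (by norm_num) (by norm_num) q1 q2
  have A1 := up (hφ1 ▸ (two _).le) (by norm_num) (pr pS1.le (by norm_num) hx1' hS1') hφ1
    (by linarith)
  have A2 := up (hφ2 ▸ (two _).le) (by norm_num) (pr pS2.le (by norm_num) hx2' hS2') hφ2
    (by linarith)
  have B1 := up (hθ1 ▸ (two _).le) (by norm_num) hx1' hθ1 (by linarith)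
  have B2 := up (hθ2 ▸ (two _).le) (by norm_num) hx2' hθ2 (by linarith)
  have B12 := up (hθ12 ▸ (two _).le) (by norm_num) (pr px2.le (by norm_num) hx1' hx2') hθ12
    (by linarith)
  have C1 := low (hψ1 ▸ (two _).le) (by norm_num) q1 hψ1 (by linarith)
  have C2 := low (hψ2 ▸ (two _).le) (by norm_num) q2 hψ2 (by linarith)
  have C12 := low (hψ12 ▸ (two _).le) (by norm_num) q12 hψ12 (by linarith)
  have D0 := low (hτ ▸ (two _).le) one_pos (one hN) hτ (by linarith)
  norm_num at A1 A2 B1 B2 B12 C1 C2 C12 D0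
  have pφ2 : 0 < φ2 := hφ2 ▸ two _
  have A12 : (x1 * S1 * φ1) * (x2 * S2 * φ2) ≤ 16 * E := by
    calc (x1 * S1 * φ1) * (x2 * S2 * φ2) ≤ (4 * E) * (4 * E) :=
          mul_le_mul A1 A2 (by positivity) (by positivity)
      _ ≤ 16 * E := by nlinarith
  refine ⟨by linarith only [A1, A2, A12], ?_, by linarith only [B1, B2, B12], ?_⟩
  · simp only [mul_inv] at C1 C2 C12 ⊢
    linarith only [C1, C2, C12]
  · simpa [mul_inv, mul_comm] using D0

section Final

set_option synthInstance.maxSize 1000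

variable {X1 X2 Z Y X0 T U0 U1 U2 : Type}
    [Fintype X1] [Fintype X2] [Fintype Z] [Fintype Y] [Fintype X0]
    [Fintype T] [Fintype U0] [Fintype U1] [Fintype U2]
    [DecidableEq X1] [DecidableEq X2] [DecidableEq Z] [DecidableEq Y] [DecidableEq X0]
    [DecidableEq T] [DecidableEq U0] [DecidableEq U1] [DecidableEq U2]
    {q3 : X1 × X2 × Z → ℝ} {f1 : X1 → X0} {pT : T → ℝ} {pU0c : X0 → T → U0 → ℝ}
    {pU1c : X1 → U0 → T → U1 → ℝ} {pU2c : X2 → U0 → T → U2 → ℝ}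
    {pYc : U1 → U2 → Z → T → Y → ℝ} {p : X1 × X2 × Z × T × U0 × U1 × U2 × Y → ℝ}

/-! ### Asymptotics -/

/-- The error of the block codes tends to zero. -/
lemma error_tendsto (K δ : ℝ) (hδ : 0 < δ) :
    Filter.Tendsto (fun n : ℕ => 8 * (K / (n * δ ^ 2)) + 18 * (2:ℝ) ^ (-(n * δ)) +
      √(24 * (2:ℝ) ^ (-(n * δ))) + √(8 * (2:ℝ) ^ (-(n * δ)))) Filter.atTop (nhds 0) := by
  have hE : Filter.Tendsto (fun n : ℕ => (2:ℝ) ^ (-(n * δ))) Filter.atTop (nhds 0) := by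
    have : (fun n : ℕ => (2:ℝ) ^ (-(n * δ))) = fun n : ℕ => ((2:ℝ) ^ (-δ)) ^ n := by
      funext n
      rw [← Real.rpow_natCast, ← Real.rpow_mul two_pos.le]
      ring_nf
    rw [this]
    exact tendsto_pow_atTop_nhds_zero_of_lt_one (Real.rpow_pos_of_pos two_pos _).le
      (Real.rpow_lt_one_of_one_lt_of_neg one_lt_two (by linarith))
  have hK : Filter.Tendsto (fun n : ℕ => K / (n * δ ^ 2)) Filter.atTop (nhds 0) := by
    refine Filter.Tendsto.div_atTop tendsto_const_nhds ?_
    exact (tendsto_natCast_atTop_atTop).atTop_mul_const (by positivity)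
  have := (((hK.const_mul 8).add (hE.const_mul 18)).add ((hE.const_mul 24).sqrt)).add
    ((hE.const_mul 8).sqrt)
  simpa using this

/-- Achievability when all rate inequalities are strict. -/
lemma FactorsAs.achievable {q : X1 × X2 × Z × Y → ℝ}
    (hc : FactorsAs (margXXZ q) f1 pT pU0c pU1c pU2c pYc p)
    (f2 : X2 → X0) (hcommon : ∀ x1 x2 z, margXXZ q (x1, x2, z) ≠ 0 → f1 x1 = f2 x2)
    (hcons : ∀ t x1 x2 z y,
      (∑ u0 : U0, ∑ u1 : U1, ∑ u2 : U2,
        margXXZ q (x1, x2, z) * pU0c (f1 x1) t u0 * pU1c x1 u0 t u1 *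
          pU2c x2 u0 t u2 * pYc u1 u2 z t y) = q (x1, x2, z, y))
    {R1 R2 R00 R01 R02 a0 a1 a2 b1 b2 b12 c1 c2 c12 : ℝ} (H : Fin 11 → ℝ)
    (hH : ∀ j, H j = ∑ ω, p ω * -Real.logb 2 (lossFam f1 pU0c pU1c pU2c p j ω))
    (ha0 : a0 = H 0) (ha1 : a1 = H 1) (ha2 : a2 = H 2) (hb1 : b1 = H 4 - H 3)
    (hb2 : b2 = H 5 - H 3) (hb12 : b12 = H 6 - H 3) (hc1 : c1 = H 10 - H 9)
    (hc2 : c2 = H 10 - H 8) (hc12 : c12 = H 10 - H 7)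
    (h0 : a0 < R00)
    (h1 : c1 - a1 < R1) (h2 : c2 - a2 < R2) (h3 : c12 - a1 - a2 < R1 + R2)
    (h4 : c1 - b1 < R1 + R01) (h5 : c2 - b2 < R2 + R02) (h6 : c12 - b1 - a2 < R1 + R2 + R01)
    (h7 : c12 - b2 - a1 < R1 + R2 + R02) (h8 : c12 - b12 < R1 + R2 + R01 + R02)
    (hcc : c1 + c2 ≤ c12) (hbb : b12 ≤ b1 + b2) : AchievableSR q R1 R2 R00 R01 R02 := by
  classical
  have l1 := le_max_left R01 0
  have l2 := le_max_left R02 0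
  obtain ⟨r1, r2, δ', hδ', k1, k2, k3, k4, k5, k6, k7, k8⟩ :=
    exists_rates (le_max_right R01 0) (le_max_right R02 0) h1 h2 h3 (by linarith) (by linarith)
      (by linarith) (by linarith) (by linarith) hcc hbb
  obtain ⟨δ, hδ, hδ1, hδ0⟩ : ∃ δ, 0 < δ ∧ δ ≤ δ' ∧ a0 + 3 * δ ≤ R00 := by
    refine ⟨min δ' ((R00 - a0) / 3), lt_min hδ' (by linarith), min_le_left _ _, ?_⟩
    have := min_le_right δ' ((R00 - a0) / 3)
    linarith
  obtain ⟨K, hK, htail⟩ := seq_tail p hc.pmf (lossFam f1 pU0c pU1c pU2c p) H hH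
  -- an offset that makes the auxiliary index rates nonnegative
  obtain ⟨l, hl, hl1, hl2⟩ : ∃ l : ℝ, 0 ≤ l ∧ 0 ≤ r1 + l ∧ 0 ≤ r2 + l :=
    ⟨|r1| + |r2|, by positivity, by linarith [neg_abs_le r1, abs_nonneg r2],
      by linarith [neg_abs_le r2, abs_nonneg r1]⟩
  have key : ∀ n : ℕ, ∃ C : MACCodeSR X1 X2 Z Y n R1 R2 R00 R01 R02,
      tvDist (inducedPMFSR (margXXZ q) C) (iidPMF q n) ≤
        1 / 2 * (8 * (K / (n * δ ^ 2)) + 18 * (2:ℝ) ^ (-(n * δ)) +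
      √(24 * (2:ℝ) ^ (-(n * δ))) + √(8 * (2:ℝ) ^ (-(n * δ)))) := by
    intro n
    obtain ⟨η, hηd⟩ : ∃ η, η = K / (n * δ ^ 2) := ⟨_, rfl⟩
    have hη : ∑ w, (if Typical f1 pU0c pU1c pU2c p H n δ w then 0 else seqPMF p n w) ≤ η := by
      rw [hηd]
      refine le_trans (le_of_eq (sum_congr rfl fun w _ => ?_)) (htail n δ hδ)
      unfold Typical
      by_cases hw : ∀ j, |∑ i, -Real.logb 2 (lossFam f1 pU0c pU1c pU2c p j (letter w i)) - n * H j|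
          ≤ n * δ
      · rw [if_pos hw, if_pos hw]
      · rw [if_neg hw, if_neg hw]
    obtain ⟨e1, e2, D, he1, he2, hD, bin⟩ := hc.block_binning H n δ η hη (cnum n (r1 + l))
      (cnum n (r2 + l)) (cnum n l) (cnum n l) (cnum n R01) (cnum n R02) (cnum n R1) (cnum n R2)
      (cnum_pos _ _) (cnum_pos _ _) (cnum_pos _ _) (cnum_pos _ _) (cnum_pos _ _) (cnum_pos _ _)
      (cnum_pos _ _) (cnum_pos _ _) rfl rfl rfl rfl rfl rfl rfl rfl rfl rfl
    obtain ⟨enc1, enc2, dec, hE1, hE2, hDec, err⟩ := hc.block_code f2 hcommon q hcons H n δ η _ hη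
      (cnum n R00) _ _ _ _ (cnum_pos _ _) (cnum_pos _ _) (cnum_pos _ _) e1 e2 D he1 he2 hD bin
    refine ⟨⟨enc1, enc2, dec, hE1, hE2, hDec⟩, ?_⟩
    obtain ⟨t1, t2, t3, t4⟩ := error_terms (n := n) hδ (b1 := H 4 - H 3) (b2 := H 5 - H 3)
      (b12 := H 6 - H 3) (a1 := H 1) (a2 := H 2) (a0 := H 0) (c1 := H 10 - H 9)
      (c2 := H 10 - H 8) (c12 := H 10 - H 7) (R1 := R1) (R2 := R2) (R00 := R00)
      (by linarith) (by linarith) (by linarith) (by linarith) (by linarith) (by linarith)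
      (by linarith) (by linarith) (by linarith) (cnum_ratio n hl hl1).1 (cnum_ratio n hl hl1).2
      (cnum_ratio n hl hl2).1 (cnum_ratio n hl hl2).2
      (cnum_max n R01 ▸ two_rpow_le_cnum n (max R01 0))
      (cnum_max n R01 ▸ cnum_le n (le_max_right R01 0))
      (cnum_max n R02 ▸ two_rpow_le_cnum n (max R02 0))
      (cnum_max n R02 ▸ cnum_le n (le_max_right R02 0))
      (two_rpow_le_cnum n R1) (two_rpow_le_cnum n R2) (two_rpow_le_cnum n R00)
      rfl rfl rfl rfl rfl rfl rfl rfl rfl rfl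
    have u1 := Real.sqrt_le_sqrt t1
    have u3 := Real.sqrt_le_sqrt t3
    unfold tvDist
    refine mul_le_mul_of_nonneg_left ?_ (by norm_num)
    refine le_trans (le_of_eq ?_) (err.trans ?_)
    · simp only [Fintype.sum_prod_type]
      rfl
    · rw [← hηd]
      linarith
  choose C hC using key
  refine ⟨C, ?_⟩
  have lim := (error_tendsto K δ hδ).const_mul (1 / 2)
  rw [mul_zero] at lim
  refine squeeze_zero (fun n => ?_) hC lim
  unfold tvDist
  exact mul_nonneg (by norm_num) (sum_nonneg fun _ _ => abs_nonneg _)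

end Final

/-- **Theorem 4 (Inner bound with encoder shared randomness).**  Let `X₀ = f₁(X₁) = f₂(X₂)`
(a.s. under `q`) be a common component of the sources.  If there are finite auxiliary
alphabets `T, U₀, U₁, U₂` and a pmf of the form
`p(x₁,x₂,z,t,u₀,u₁,u₂,y) = q(x₁,x₂,z) p(t) p(u₀|x₀,t) p(u₁|x₁,u₀,t) p(u₂|x₂,u₀,t)
p(y|u₁,u₂,z,t)` satisfying `∑_{u₀,u₁,u₂} p(x₁,x₂,u₀,u₁,u₂,y,z|t) = q(x₁,x₂,z,y)` for every
`t` and the listed rate inequalities, then `(R₁,R₂,R₀₀,R₀₁,R₀₂) ∈ R^enc-SR_MAC-coord`. -/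
theorem mac_inner_bound_encSR
    {X1 X2 Z Y X0 T U0 U1 U2 : Type}
    [Fintype X1] [Fintype X2] [Fintype Z] [Fintype Y] [Fintype X0]
    [Fintype T] [Fintype U0] [Fintype U1] [Fintype U2]
    [DecidableEq X1] [DecidableEq X2] [DecidableEq Z] [DecidableEq Y] [DecidableEq X0]
    [DecidableEq T] [DecidableEq U0] [DecidableEq U1] [DecidableEq U2]
    (q : X1 × X2 × Z × Y → ℝ) (hq : IsPMF q)
    (f1 : X1 → X0) (f2 : X2 → X0)
    (hcommon : ∀ x1 x2, (∑ z : Z, ∑ y : Y, q (x1, x2, z, y)) ≠ 0 → f1 x1 = f2 x2)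
    (pT : T → ℝ) (pU0c : X0 → T → U0 → ℝ)
    (pU1c : X1 → U0 → T → U1 → ℝ) (pU2c : X2 → U0 → T → U2 → ℝ)
    (pYc : U1 → U2 → Z → T → Y → ℝ)
    (hpT : IsPMF pT)
    (hpU0 : ∀ x0 t, IsPMF (pU0c x0 t))
    (hpU1 : ∀ x1 u0 t, IsPMF (pU1c x1 u0 t))
    (hpU2 : ∀ x2 u0 t, IsPMF (pU2c x2 u0 t))
    (hpY : ∀ u1 u2 z t, IsPMF (pYc u1 u2 z t))
    (p : X1 × X2 × Z × T × U0 × U1 × U2 × Y → ℝ)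
    (hpdef : ∀ x1 x2 z t u0 u1 u2 y,
      p (x1, x2, z, t, u0, u1, u2, y) =
        margXXZ q (x1, x2, z) * pT t * pU0c (f1 x1) t u0 *
          pU1c x1 u0 t u1 * pU2c x2 u0 t u2 * pYc u1 u2 z t y)
    (hcons : ∀ t x1 x2 z y,
      (∑ u0 : U0, ∑ u1 : U1, ∑ u2 : U2,
        margXXZ q (x1, x2, z) * pU0c (f1 x1) t u0 * pU1c x1 u0 t u1 *
          pU2c x2 u0 t u2 * pYc u1 u2 z t y) = q (x1, x2, z, y))
    (R1 R2 R00 R01 R02 : ℝ)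
    (h0 : condEnt p kU0 (fun ω => (f1 (kX1 ω), kT ω)) ≤ R00)
    (h1 : cmi p kU1 (fun ω => (kX1 ω, kU0 ω)) (fun ω => (kU2 ω, kZ ω, kT ω)) ≤ R1)
    (h2 : cmi p kU2 (fun ω => (kX2 ω, kU0 ω)) (fun ω => (kU1 ω, kZ ω, kT ω)) ≤ R2)
    (h3 : cmi p (fun ω => (kU1 ω, kU2 ω)) (fun ω => (kX1 ω, kX2 ω, kU0 ω))
        (fun ω => (kZ ω, kT ω)) ≤ R1 + R2)
    (h4 : cmi p kU1 (fun ω => (kX1 ω, kX2 ω, kU0 ω, kY ω)) (fun ω => (kZ ω, kT ω))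
        - cmi p kU1 kU2 (fun ω => (kZ ω, kT ω)) ≤ R1 + R01)
    (h5 : cmi p kU2 (fun ω => (kX1 ω, kX2 ω, kU0 ω, kY ω)) (fun ω => (kZ ω, kT ω))
        - cmi p kU1 kU2 (fun ω => (kZ ω, kT ω)) ≤ R2 + R02)
    (h6 : cmi p kU1 (fun ω => (kX1 ω, kX2 ω, kU0 ω, kY ω)) (fun ω => (kZ ω, kT ω))
        + cmi p kU2 (fun ω => (kX2 ω, kU0 ω)) (fun ω => (kU1 ω, kZ ω, kT ω))
        ≤ R1 + R2 + R01)
    (h7 : cmi p kU2 (fun ω => (kX1 ω, kX2 ω, kU0 ω, kY ω)) (fun ω => (kZ ω, kT ω))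
        + cmi p kU1 (fun ω => (kX1 ω, kU0 ω)) (fun ω => (kU2 ω, kZ ω, kT ω))
        ≤ R1 + R2 + R02)
    (h8 : cmi p (fun ω => (kU1 ω, kU2 ω)) (fun ω => (kX1 ω, kX2 ω, kU0 ω, kY ω))
        (fun ω => (kZ ω, kT ω)) ≤ R1 + R2 + R01 + R02) :
    (R1, R2, R00, R01, R02) ∈ RMACcoordSR q := by
  have hq3 : IsPMF (margXXZ q) := by
    refine ⟨fun a => sum_nonneg fun y _ => hq.1 _, ?_⟩
    rw [← hq.2]
    simp only [margXXZ, Fintype.sum_prod_type]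
  have hc : FactorsAs (margXXZ q) f1 pT pU0c pU1c pU2c pYc p :=
    ⟨hq3, hpT, hpU0, hpU1, hpU2, hpY, hpdef⟩
  have hcommon' : ∀ x1 x2 z, margXXZ q (x1, x2, z) ≠ 0 → f1 x1 = f2 x2 := by
    intro x1 x2 z hz
    refine hcommon x1 x2 fun h => hz ?_
    exact (sum_eq_zero_iff_of_nonneg fun z _ => sum_nonneg fun y _ => hq.1 _).1 h z (mem_univ z)
  obtain ⟨H, hH⟩ : ∃ H : Fin 11 → ℝ, ∀ j, H j =
      ∑ ω, p ω * -Real.logb 2 (lossFam f1 pU0c pU1c pU2c p j ω) := ⟨_, fun _ => rfl⟩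
  set_option synthInstance.maxSize 1000 in
  obtain ⟨g1, g2, g3, g4, g5, g6, g7, g8, hcc, hbb⟩ :=
    hc.rates R1 R2 R01 R02 h1 h2 h3 h4 h5 h6 h7 h8 (a1 := H 1) (a2 := H 2) (b1 := H 4 - H 3)
    (b2 := H 5 - H 3) (b12 := H 6 - H 3) (c1 := H 10 - H 9) (c2 := H 10 - H 8)
    (c12 := H 10 - H 7) (hH 1) (hH 2) (by rw [ent_eq, ent_eq, hH 4, hH 3]; rfl)
    (by rw [ent_eq, ent_eq, hH 5, hH 3]; rfl) (by rw [ent_eq, ent_eq, hH 6, hH 3]; rfl)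
    (by rw [ent_eq, ent_eq, hH 10, hH 9]; rfl) (by rw [ent_eq, ent_eq, hH 10, hH 8]; rfl)
    (by rw [ent_eq, ent_eq, hH 10, hH 7]; rfl)
  rw [hc.condEnt_U0] at h0
  replace h0 : H 0 ≤ R00 := (hH 0).trans_le h0
  -- every tuple obtained by increasing all rates is achievable
  have ach : ∀ ε > 0, AchievableSR q (R1 + ε) (R2 + ε) (R00 + ε) (R01 + ε) (R02 + ε) := by
    intro ε hε
    refine hc.achievable f2 hcommon' hcons H hH rfl rfl rfl rfl rfl rfl rfl rfl rfl
      ?_ ?_ ?_ ?_ ?_ ?_ ?_ ?_ ?_ hcc hbb <;> linarith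
  have lim := tendsto_one_div_add_atTop_nhds_zero_nat (𝕜 := ℝ)
  have lim' : ∀ R : ℝ, Filter.Tendsto (fun k : ℕ => R + 1 / ((k : ℝ) + 1)) Filter.atTop (nhds R) :=
    fun R => by simpa using lim.const_add R
  refine mem_closure_of_tendsto ((lim' R1).prodMk_nhds ((lim' R2).prodMk_nhds
    ((lim' R00).prodMk_nhds ((lim' R01).prodMk_nhds (lim' R02)))))
    (Filter.Eventually.of_forall fun k => ach _ (by positivity))
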